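/- Let p ∈ (7/3, 8/3), σ ≥ 0 and ε > 0, and let γ ∈ W^{(3p−4)/2+σ,2}(ℝ/ℤ,ℝⁿ) be injective and parametrized by arc-length. Then the remainder functional R^p(γ;h) := (1/12) δE_{p,2}(γ;h) − Q^{(p)}(γ,h), defined for h ∈ W^{3p/2−2,2}(ℝ/ℤ,ℝⁿ), satisfies |R^p(γ;h)| ≤ C ‖h‖_{W^{3/2−σ+ε,2}} for a constant C independent of h; in particular R^p(γ;·) extends to a bounded linear functional on W^{3/2−σ+ε,2}(ℝ/ℤ,ℝⁿ). -/

import Mathlib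

open MeasureTheory Set Filter Topology
open scoped ENNReal

noncomputable section

/-- The area `|a ∧ b|` of the parallelogram spanned by `a, b ∈ ℝⁿ`. -/
def wedgeNorm {n : ℕ} (a b : EuclideanSpace ℝ (Fin n)) : ℝ :=
  Real.sqrt (‖a‖ ^ 2 * ‖b‖ ^ 2 - (inner ℝ a b : ℝ) ^ 2)

/-- `1 / R^{p,q}(x,y,z) = |(y-x) ∧ (z-x)|^q / (|y-z| |y-x| |z-x|)^p`. -/
def invR {n : ℕ} (p q : ℝ) (x y z : EuclideanSpace ℝ (Fin n)) : ℝ :=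
  wedgeNorm (y - x) (z - x) ^ q / (‖y - z‖ * ‖y - x‖ * ‖z - x‖) ^ p

/-- The generalized integral Menger curvature `E_{p,q}` of a closed curve,
modelled by a `1`-periodic function together with its derivative,
the parameter domain `ℝ/ℤ` being represented by `[0,1)`; values in `[0,∞]`. -/
def menger {n : ℕ} (p q : ℝ) (γ γ' : ℝ → EuclideanSpace ℝ (Fin n)) : ℝ≥0∞ :=
  ∫⁻ u₁ in Ico (0:ℝ) 1, ∫⁻ u₂ in Ico (0:ℝ) 1, ∫⁻ u₃ in Ico (0:ℝ) 1,
    ENNReal.ofReal (‖γ' u₁‖ * ‖γ' u₂‖ * ‖γ' u₃‖ * invR p q (γ u₁) (γ u₂) (γ u₃))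

/-- Injectivity of a `1`-periodic curve as a map on `ℝ/ℤ`. -/
def InjCircle {n : ℕ} (γ : ℝ → EuclideanSpace ℝ (Fin n)) : Prop :=
  ∀ u v : ℝ, γ u = γ v → ∃ k : ℤ, v = u + k

/-- Distance on `ℝ/ℤ`. -/
def circleDist (u v : ℝ) : ℝ := ⨅ k : ℤ, |u - v - (k : ℝ)|

/-- The `ρ`-th power of the Sobolev–Slobodeckiĭ seminorm `[f]_{W^{1+s,ρ}}`
of a periodic function with derivative `f'`; values in `[0,∞]`. -/
def sobSemiPow {n : ℕ} (s ρ : ℝ) (f' : ℝ → EuclideanSpace ℝ (Fin n)) : ℝ≥0∞ :=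
  ∫⁻ u in Ico (0:ℝ) 1, ∫⁻ w in Icc (-(1/2) : ℝ) (1/2),
    ENNReal.ofReal (‖f' (u + w) - f' u‖ ^ ρ / |w| ^ (1 + ρ * s))

/-- The norm `‖f‖_{W^{1+s,ρ}} = ‖f‖_{W^{1,ρ}} + [f]_{W^{1+s,ρ}}`. -/
def sobNorm {n : ℕ} (s ρ : ℝ) (f f' : ℝ → EuclideanSpace ℝ (Fin n)) : ℝ :=
  (∫ u in Ico (0:ℝ) 1, ‖f u‖ ^ ρ) ^ (1/ρ) + (∫ u in Ico (0:ℝ) 1, ‖f' u‖ ^ ρ) ^ (1/ρ)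
    + (sobSemiPow s ρ f').toReal ^ (1/ρ)

/-- `γ` is a closed `W^{1,1}` curve with weak derivative `γ'`:
both are `1`-periodic, `γ'` is measurable and `γ` is the primitive of `γ'`. -/
structure CurvePair {n : ℕ} (γ γ' : ℝ → EuclideanSpace ℝ (Fin n)) : Prop where
  periodic : Function.Periodic γ 1
  periodic' : Function.Periodic γ' 1
  meas' : Measurable γ'
  primitive : ∀ u, γ u = γ 0 + ∫ t in (0:ℝ)..u, γ' t

/-- The range of integration `D ⊆ (-1/2,0) × (0,1/2)`. -/
def domainD : Set (ℝ × ℝ) :=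
  {x | x.1 ∈ Set.Ioo (-(1/2) : ℝ) 0 ∧ x.2 ∈ Set.Ioo (0 : ℝ) (1/2) ∧
    x.2 ≤ 1 + 2 * x.1 ∧ -1 + 2 * x.2 ≤ x.1}

/-- The `k`-th Fourier coefficient `f̂_k ∈ ℂⁿ` of a `1`-periodic function. -/
def fourierCoef {n : ℕ} (f : ℝ → EuclideanSpace ℝ (Fin n)) (k : ℤ) :
    EuclideanSpace ℂ (Fin n) :=
  (WithLp.equiv 2 (Fin n → ℂ)).symm fun j =>
    ∫ x in Ico (0:ℝ) 1, (f x j : ℂ) *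
      Complex.exp (-(((2 * Real.pi * (k : ℝ) * x : ℝ) : ℂ) * Complex.I))

/-- The Bessel-potential Sobolev norm `‖f‖_{W^{t,2}}` defined via Fourier
coefficients. -/
def fourierSobNorm {n : ℕ} (t : ℝ) (f : ℝ → EuclideanSpace ℝ (Fin n)) : ℝ :=
  Real.sqrt (∑' k : ℤ, (1 + (k:ℝ)^2) ^ t * ‖fourierCoef f k‖^2)

/-- The bilinear form `Q^{(p)}`. -/
def Qform {n : ℕ} (p : ℝ) (f g : ℝ → EuclideanSpace ℝ (Fin n)) : ℝ :=
  ∫ u in Ico (0:ℝ) 1, ∫ x in domainD,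
    (inner ℝ (x.2⁻¹ • (f (u + x.2) - f u) - x.1⁻¹ • (f (u + x.1) - f u))
           (x.2⁻¹ • (g (u + x.2) - g u) - x.1⁻¹ • (g (u + x.1) - g u)) : ℝ) /
      (|x.1 - x.2| ^ p * |x.1| ^ (p - 2) * |x.2| ^ (p - 2))

/-!
Let `f = γ'` be the unit tangent. In terms of the averages of `f` over segments, the energy is the
integral of `mengerKernel · density` over base points and offsets in `domainD`, the factor `6`
counting the orderings of the three points. Because `|f| = 1`, half of the derivative of the
density in the direction `g = h'` differs from the integrand of `Qform` by a sum of terms that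
contain a factor quadratically small in the differences of these averages. The functions with
weighted absolutely summable Fourier coefficients form an algebra, so such a term is paired with
`g` by duality, which costs `∑ |ĝ_k| (1 + |k|)^(-σ)`, while integrating the squared oscillation of
the `k`-th mode against the kernel costs `|k|^(3p - 6)`, which the regularity of `γ` affords.

If `h'` is not integrable, then `h` is constant by the conventions for the integral, and the energy
of the perturbed curve is infinite with `toReal` equal to `0`, so the limit `L` can only be `0`.
-/

/-! ### Trigonometric series -/

section

/-- The character `u ↦ e^{2πiku}` of `ℝ/ℤ`, lifted to `ℝ`. -/
def expMode (k : ℤ) (u : ℝ) : ℂ := fourier k (u : UnitAddCircle)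

lemma expMode_eq_exp (k : ℤ) (u : ℝ) :
    expMode k u = Complex.exp (((2 * Real.pi * (k : ℝ) * u : ℝ) : ℂ) * Complex.I) := by
  rw [expMode, fourier_coe_apply]
  congr 1
  push_cast
  ring

lemma norm_expMode (k : ℤ) (u : ℝ) : ‖expMode k u‖ = 1 := Circle.norm_coe _

lemma expMode_add_freq (j k : ℤ) (u : ℝ) : expMode (j + k) u = expMode j u * expMode k u :=
  fourier_add

lemma expMode_add (k : ℤ) (u v : ℝ) : expMode k (u + v) = expMode k u * expMode k v := by
  simp only [expMode_eq_exp, ← Complex.exp_add]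
  congr 1
  push_cast
  ring

lemma expMode_zero (u : ℝ) : expMode 0 u = 1 := fourier_zero

@[fun_prop]
lemma continuous_expMode (k : ℤ) : Continuous (expMode k) :=
  (fourier k).continuous.comp (AddCircle.continuous_mk' 1)

lemma expMode_apply_zero (k : ℤ) : expMode k 0 = 1 := fourier_eval_zero k

lemma expMode_apply_one (k : ℤ) : expMode k 1 = 1 := by
  rw [expMode, AddCircle.coe_period, fourier_eval_zero]

lemma hasDerivAt_expMode (k : ℤ) (u : ℝ) :
    HasDerivAt (expMode k) (2 * Real.pi * k * Complex.I * expMode k u) u := by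
  have h := hasDerivAt_fourier 1 k u
  have he : (2 * Real.pi * Complex.I * k / (1 : ℝ) : ℂ) = 2 * Real.pi * k * Complex.I := by
    push_cast
    ring
  rwa [he] at h

lemma integral_expMode (k : ℤ) :
    ∫ u in (0 : ℝ)..1, expMode k u = if k = 0 then 1 else 0 := by
  split_ifs with h
  · simp [h, expMode_zero]
  · have hc : (2 * Real.pi * k * Complex.I : ℂ) ≠ 0 := by simp [Real.pi_ne_zero, h]
    have hprim : ∀ u, HasDerivAt (fun u => (2 * Real.pi * k * Complex.I : ℂ)⁻¹ * expMode k u)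
        (expMode k u) u := fun u => by
      simpa only [inv_mul_cancel_left₀ hc] using (hasDerivAt_expMode k u).const_mul
        (2 * Real.pi * k * Complex.I : ℂ)⁻¹
    rw [intervalIntegral.integral_eq_sub_of_hasDerivAt (fun u _ => hprim u)
      ((continuous_expMode k).intervalIntegrable _ _), expMode_apply_one, expMode_apply_zero,
      sub_self]

/-- The bound `min (2, 2π|k|r)` for the oscillation of `expMode k` on an interval of length
`r`. -/
def oscBound (k : ℤ) (r : ℝ) : ℝ := min 2 (2 * Real.pi * |(k : ℝ)| * r)

lemma oscBound_nonneg (k : ℤ) {r : ℝ} (hr : 0 ≤ r) : 0 ≤ oscBound k r := by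
  have := Real.pi_pos
  unfold oscBound
  positivity

lemma oscBound_mono (k : ℤ) {r r' : ℝ} (h : r ≤ r') : oscBound k r ≤ oscBound k r' := by
  have := Real.pi_pos
  exact min_le_min le_rfl (by gcongr)

lemma oscBound_le_two (k : ℤ) (r : ℝ) : oscBound k r ≤ 2 := min_le_left _ _

lemma norm_expMode_sub_le (k : ℤ) (u v : ℝ) :
    ‖expMode k u - expMode k v‖ ≤ oscBound k |u - v| := by
  refine le_min ?_ ?_
  · calc ‖expMode k u - expMode k v‖ ≤ ‖expMode k u‖ + ‖expMode k v‖ := norm_sub_le _ _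
      _ = 2 := by rw [norm_expMode, norm_expMode]; norm_num
  · simpa using Convex.norm_image_sub_le_of_norm_hasDerivWithin_le
      (f := expMode k) (C := 2 * Real.pi * |(k : ℝ)|)
      (fun x _ => (hasDerivAt_expMode k x).hasDerivWithinAt)
      (fun x _ => by simp [norm_expMode, abs_of_pos Real.pi_pos])
      convex_univ (mem_univ v) (mem_univ u)

/-- The weight `(1+|k|)^σ`, submultiplicative for `σ ≥ 0`. -/
def weight (σ : ℝ) (k : ℤ) : ℝ := (1 + |(k : ℝ)|) ^ σ

lemma weight_pos (σ : ℝ) (k : ℤ) : 0 < weight σ k := by unfold weight; positivity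

lemma weight_zero (σ : ℝ) : weight σ 0 = 1 := by simp [weight]

lemma weight_exp_zero (k : ℤ) : weight 0 k = 1 := by simp [weight]

lemma weight_neg (σ : ℝ) (k : ℤ) : weight σ (-k) = weight σ k := by simp [weight]

lemma one_le_weight {σ : ℝ} (hσ : 0 ≤ σ) (k : ℤ) : 1 ≤ weight σ k :=
  Real.one_le_rpow (by simp) hσ

lemma weight_add_exp (s t : ℝ) (k : ℤ) : weight (s + t) k = weight s k * weight t k :=
  Real.rpow_add (by positivity) _ _

lemma weight_add_le {σ : ℝ} (hσ : 0 ≤ σ) (j k : ℤ) :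
    weight σ (j + k) ≤ weight σ j * weight σ k := by
  unfold weight
  rw [← Real.mul_rpow (by positivity) (by positivity)]
  refine Real.rpow_le_rpow (by positivity) ?_ hσ
  push_cast
  nlinarith [abs_add_le (j : ℝ) k, mul_nonneg (abs_nonneg (j : ℝ)) (abs_nonneg (k : ℝ))]

lemma weight_le_mul_sub {σ : ℝ} (hσ : 0 ≤ σ) (j k : ℤ) :
    weight σ k ≤ weight σ j * weight σ (k - j) := by
  simpa using weight_add_le hσ j (k - j)

/-- The Fourier coefficient of `φ`, viewed as a function on `[0,1]`. -/
def modeCoeff (φ : ℝ → ℂ) (k : ℤ) : ℂ := ∫ u in (0 : ℝ)..1, φ u * expMode (-k) u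

lemma modeCoeff_mul_expMode (φ : ℝ → ℂ) (k l : ℤ) :
    modeCoeff (fun u => φ u * expMode (-k) u) l = modeCoeff φ (k + l) := by
  simp only [modeCoeff, mul_assoc, ← expMode_add_freq, neg_add]

lemma modeCoeff_expMode (m k : ℤ) : modeCoeff (expMode m) k = if m = k then 1 else 0 := by
  simp only [modeCoeff, ← expMode_add_freq, integral_expMode, ← sub_eq_add_neg, sub_eq_zero]

lemma modeCoeff_add {φ ψ : ℝ → ℂ} (hφ : Continuous φ) (hψ : Continuous ψ) (k : ℤ) :
    modeCoeff (fun u => φ u + ψ u) k = modeCoeff φ k + modeCoeff ψ k := by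
  simp only [modeCoeff, add_mul]
  exact intervalIntegral.integral_add (Continuous.intervalIntegrable (by fun_prop) _ _)
    (Continuous.intervalIntegrable (by fun_prop) _ _)

lemma modeCoeff_const_mul (z : ℂ) (φ : ℝ → ℂ) (k : ℤ) :
    modeCoeff (fun u => z * φ u) k = z * modeCoeff φ k := by
  simp only [modeCoeff, mul_assoc]
  exact intervalIntegral.integral_const_mul _ _

lemma modeCoeff_integral {φ : ℝ → ℝ → ℂ} (hφ : Continuous fun x : ℝ × ℝ => φ x.1 x.2) (k : ℤ) :
    modeCoeff (fun u => ∫ θ in (0 : ℝ)..1, φ θ u) k = ∫ θ in (0 : ℝ)..1, modeCoeff (φ θ) k := by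
  simp only [modeCoeff, ← intervalIntegral.integral_mul_const]
  simp only [intervalIntegral.integral_of_le zero_le_one]
  refine integral_integral_swap (f := fun u θ => φ θ u * expMode (-k) u) ?_
  have hc : Continuous fun x : ℝ × ℝ => φ x.2 x.1 * expMode (-k) x.1 :=
    (hφ.comp continuous_swap).mul ((continuous_expMode _).comp continuous_fst)
  rw [Measure.prod_restrict]
  exact (hc.continuousOn.integrableOn_compact (isCompact_Icc.prod isCompact_Icc)).mono_set
    (prod_mono Ioc_subset_Icc_self Ioc_subset_Icc_self)

/-- `φ` is the sum of the trigonometric series with coefficients `c` and frequencies `m`.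
Frequencies may repeat, so that sums and products of series need no regrouping. -/
def HasTrigSeries {ι : Type*} (c : ι → ℂ) (m : ι → ℤ) (φ : ℝ → ℂ) : Prop :=
  ∀ u, HasSum (fun i => c i * expMode (m i) u) (φ u)

/-- `φ` is the sum of a trigonometric series with frequencies `m` and coefficients dominated by
`C`. -/
def HasMajorant {ι : Type*} (C : ι → ℝ) (m : ι → ℤ) (φ : ℝ → ℂ) : Prop :=
  ∃ c : ι → ℂ, (∀ i, ‖c i‖ ≤ C i) ∧ HasTrigSeries c m φ

section Series

variable {ι κ : Type*} {c : ι → ℂ} {m : ι → ℤ} {φ : ℝ → ℂ}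

lemma HasTrigSeries.continuous (h : HasTrigSeries c m φ) (hc : Summable fun i => ‖c i‖) :
    Continuous φ := by
  rw [show φ = fun u => ∑' i, c i * expMode (m i) u from funext fun u => (h u).tsum_eq.symm]
  exact continuous_tsum (fun i => by fun_prop) hc fun i u => by simp [norm_expMode]

lemma HasMajorant.continuous {C : ι → ℝ} (h : HasMajorant C m φ) (hC : Summable C) :
    Continuous φ := by
  obtain ⟨c, hcC, hc⟩ := h
  exact hc.continuous (hC.of_nonneg_of_le (fun _ => norm_nonneg _) hcC)

lemma HasTrigSeries.mul {d : κ → ℂ} {l : κ → ℤ} {ψ : ℝ → ℂ} (h : HasTrigSeries c m φ)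
    (h' : HasTrigSeries d l ψ) (hc : Summable fun i => ‖c i‖) (hd : Summable fun i => ‖d i‖) :
    HasTrigSeries (fun x : ι × κ => c x.1 * d x.2) (fun x => m x.1 + l x.2)
      (fun u => φ u * ψ u) := fun u => by
  have hsum := summable_mul_of_summable_norm (f := fun i => c i * expMode (m i) u)
    (g := fun i => d i * expMode (l i) u) (by simpa [norm_expMode] using hc)
    (by simpa [norm_expMode] using hd)
  refine ((h u).mul (h' u) hsum).congr_fun fun x => ?_
  rw [expMode_add_freq]
  ring

lemma HasTrigSeries.hasSum_integral_mul [Countable ι] (h : HasTrigSeries c m φ)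
    (hc : Summable fun i => ‖c i‖) {ψ : ℝ → ℂ} (hψ : Continuous ψ) :
    HasSum (fun i => c i * modeCoeff ψ (-m i)) (∫ u in (0 : ℝ)..1, φ u * ψ u) := by
  obtain ⟨B, hB⟩ := (isCompact_Icc (a := (0 : ℝ)) (b := 1)).exists_bound_of_continuousOn
    hψ.continuousOn
  have hsum := intervalIntegral.hasSum_integral_of_dominated_convergence (a := 0) (b := 1)
    (μ := volume) (F := fun i u => c i * expMode (m i) u * ψ u) (f := fun u => φ u * ψ u)
    (fun i _ => ‖c i‖ * B)
    (fun i => (by fun_prop : Continuous fun u =>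
      c i * expMode (m i) u * ψ u).aestronglyMeasurable)
    (fun i => Eventually.of_forall fun u hu => by
      rw [uIoc_of_le zero_le_one] at hu
      rw [norm_mul, norm_mul, norm_expMode, mul_one]
      gcongr
      exact hB u ⟨hu.1.le, hu.2⟩)
    (Eventually.of_forall fun u _ => hc.mul_right B)
    (by simp)
    (Eventually.of_forall fun u _ => (h u).mul_right _)
  refine hsum.congr_fun fun i => ?_
  rw [modeCoeff, neg_neg, ← intervalIntegral.integral_const_mul]
  congr 1
  ext u
  ring

lemma HasTrigSeries.hasSum_modeCoeff_mul [Countable ι] (h : HasTrigSeries c m φ)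
    (hc : Summable fun i => ‖c i‖) {ψ : ℝ → ℂ} (hψ : Continuous ψ) (k : ℤ) :
    HasSum (fun i => c i * modeCoeff ψ (k - m i)) (modeCoeff (fun u => φ u * ψ u) k) := by
  have hsum := h.hasSum_integral_mul hc (ψ := fun u => ψ u * expMode (-k) u) (by fun_prop)
  simp only [modeCoeff_mul_expMode, ← sub_eq_add_neg, ← mul_assoc] at hsum
  exact hsum

lemma HasTrigSeries.modeCoeff_eq {c : ℤ → ℂ} (h : HasTrigSeries c id φ)
    (hc : Summable fun i => ‖c i‖) (k : ℤ) : modeCoeff φ k = c k := by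
  have hsum := h.hasSum_integral_mul hc (continuous_expMode (-k))
  rw [modeCoeff, ← hsum.tsum_eq, tsum_eq_single k fun j hj => ?_]
  · simp [modeCoeff_expMode]
  · rw [modeCoeff_expMode, if_neg (by simpa using hj.symm), mul_zero]

end Series

/-! ### The weighted Wiener algebra and its module of decaying Fourier coefficients -/

/-- `φ` lies in the weighted Wiener algebra with norm at most `M`. -/
def WienerNormLE (σ M : ℝ) (φ : ℝ → ℂ) : Prop :=
  ∃ (ι : Type) (_ : Countable ι) (c : ι → ℂ) (m : ι → ℤ),
    Summable (fun i => ‖c i‖ * weight σ (m i)) ∧ ∑' i, ‖c i‖ * weight σ (m i) ≤ M ∧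
      HasTrigSeries c m φ

/-- `φ` is continuous with Fourier coefficients bounded by `M (1+|k|)^{-σ}`. -/
def CoeffDecay (σ M : ℝ) (φ : ℝ → ℂ) : Prop :=
  Continuous φ ∧ ∀ k, weight σ k * ‖modeCoeff φ k‖ ≤ M

lemma norm_mul_weight_nonneg (σ : ℝ) (z : ℂ) (k : ℤ) : 0 ≤ ‖z‖ * weight σ k :=
  mul_nonneg (norm_nonneg _) (weight_pos _ _).le

lemma summable_norm_of_summable_mul_weight {σ : ℝ} (hσ : 0 ≤ σ) {ι : Type*} {c : ι → ℂ}
    {m : ι → ℤ} (h : Summable fun i => ‖c i‖ * weight σ (m i)) : Summable fun i => ‖c i‖ :=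
  h.of_nonneg_of_le (fun _ => norm_nonneg _)
    fun _ => le_mul_of_one_le_right (norm_nonneg _) (one_le_weight hσ _)

section Wiener

variable {σ M N : ℝ} {φ ψ : ℝ → ℂ}

lemma WienerNormLE.mono {M' : ℝ} (h : WienerNormLE σ M φ) (hM : M ≤ M') :
    WienerNormLE σ M' φ := by
  obtain ⟨ι, _, c, m, hs, hle, hφ⟩ := h
  exact ⟨ι, ‹_›, c, m, hs, hle.trans hM, hφ⟩

lemma WienerNormLE.nonneg (h : WienerNormLE σ M φ) : 0 ≤ M := by
  obtain ⟨_, _, _, _, _, hle, _⟩ := h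
  exact (tsum_nonneg fun _ => norm_mul_weight_nonneg _ _ _).trans hle

lemma WienerNormLE.continuous (hσ : 0 ≤ σ) (h : WienerNormLE σ M φ) : Continuous φ := by
  obtain ⟨_, _, _, _, hs, _, hφ⟩ := h
  exact hφ.continuous (summable_norm_of_summable_mul_weight hσ hs)

lemma WienerNormLE.norm_le (hσ : 0 ≤ σ) (h : WienerNormLE σ M φ) (u : ℝ) : ‖φ u‖ ≤ M := by
  obtain ⟨ι, _, c, m, hs, hle, hφ⟩ := h
  refine le_trans ?_ hle
  rw [← (hφ u).tsum_eq]
  refine tsum_of_norm_bounded hs.hasSum fun i => ?_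
  rw [norm_mul, norm_expMode]
  gcongr
  exact one_le_weight hσ _

lemma WienerNormLE.const (σ : ℝ) (z : ℂ) : WienerNormLE σ ‖z‖ (fun _ => z) :=
  ⟨Unit, inferInstance, fun _ => z, fun _ => 0, by simp [weight_zero, Summable.of_finite],
    by simp [weight_zero], fun u => by simp [expMode_zero]⟩

lemma WienerNormLE.add (h : WienerNormLE σ M φ) (h' : WienerNormLE σ N ψ) :
    WienerNormLE σ (M + N) (fun u => φ u + ψ u) := by
  obtain ⟨ι, _, c, m, hs, hle, hφ⟩ := h
  obtain ⟨κ, _, d, l, hs', hle', hψ⟩ := h'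
  have hsum : HasSum (fun i : ι ⊕ κ => ‖Sum.elim c d i‖ * weight σ (Sum.elim m l i)) _ :=
    HasSum.sum (by exact hs.hasSum) (by exact hs'.hasSum)
  exact ⟨ι ⊕ κ, inferInstance, Sum.elim c d, Sum.elim m l, hsum.summable,
    hsum.tsum_eq.trans_le (add_le_add hle hle'),
    fun u => HasSum.sum (by exact hφ u) (by exact hψ u)⟩

lemma WienerNormLE.mul (hσ : 0 ≤ σ) (h : WienerNormLE σ M φ) (h' : WienerNormLE σ N ψ) :
    WienerNormLE σ (M * N) (fun u => φ u * ψ u) := by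
  have hM := h.nonneg
  obtain ⟨ι, _, c, m, hs, hle, hφ⟩ := h
  obtain ⟨κ, _, d, l, hs', hle', hψ⟩ := h'
  have hprod := hs.mul_of_nonneg hs' (fun _ => norm_mul_weight_nonneg _ _ _)
    (fun _ => norm_mul_weight_nonneg _ _ _)
  have hterm : ∀ x : ι × κ, ‖c x.1 * d x.2‖ * weight σ (m x.1 + l x.2) ≤
      ‖c x.1‖ * weight σ (m x.1) * (‖d x.2‖ * weight σ (l x.2)) := fun x => by
    rw [norm_mul, mul_mul_mul_comm]
    gcongr
    exact weight_add_le hσ _ _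
  have hsum : Summable fun x : ι × κ => ‖c x.1 * d x.2‖ * weight σ (m x.1 + l x.2) :=
    hprod.of_nonneg_of_le (fun _ => norm_mul_weight_nonneg _ _ _) hterm
  refine ⟨ι × κ, inferInstance, _, _, hsum, ?_, hφ.mul hψ
    (summable_norm_of_summable_mul_weight hσ hs) (summable_norm_of_summable_mul_weight hσ hs')⟩
  calc ∑' x : ι × κ, ‖c x.1 * d x.2‖ * weight σ (m x.1 + l x.2)
      ≤ ∑' x : ι × κ, ‖c x.1‖ * weight σ (m x.1) * (‖d x.2‖ * weight σ (l x.2)) :=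
        hsum.tsum_le_tsum hterm hprod
    _ = (∑' i, ‖c i‖ * weight σ (m i)) * ∑' j, ‖d j‖ * weight σ (l j) :=
        (hs.tsum_mul_tsum hs' hprod).symm
    _ ≤ M * N := mul_le_mul hle hle' (tsum_nonneg fun _ => norm_mul_weight_nonneg _ _ _) hM

lemma WienerNormLE.const_mul (hσ : 0 ≤ σ) (z : ℂ) (h : WienerNormLE σ M φ) :
    WienerNormLE σ (‖z‖ * M) (fun u => z * φ u) := (WienerNormLE.const σ z).mul hσ h

lemma WienerNormLE.finset_sum {κ : Type*} (s : Finset κ) {M : κ → ℝ} {φ : κ → ℝ → ℂ}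
    (h : ∀ i ∈ s, WienerNormLE σ (M i) (φ i)) :
    WienerNormLE σ (∑ i ∈ s, M i) (fun u => ∑ i ∈ s, φ i u) := by
  classical
  induction s using Finset.induction_on with
  | empty => simpa using WienerNormLE.const σ 0
  | insert i s hi ih =>
    simp only [Finset.sum_insert hi]
    exact (h i (by simp)).add (ih fun j hj => h j (by simp [hj]))

lemma WienerNormLE.pow (hσ : 0 ≤ σ) (h : WienerNormLE σ M φ) (k : ℕ) :
    WienerNormLE σ (M ^ k) (fun u => φ u ^ k) := by
  induction k with
  | zero => simpa using WienerNormLE.const σ 1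
  | succ k ih => simpa only [pow_succ] using ih.mul hσ h

lemma WienerNormLE.tsum (hσ : 0 ≤ σ) {N : ℕ → ℝ} {φ : ℕ → ℝ → ℂ}
    (h : ∀ i, WienerNormLE σ (N i) (φ i)) (hN : Summable N)
    (hψ : ∀ u, HasSum (fun i => φ i u) (ψ u)) : WienerNormLE σ (∑' i, N i) ψ := by
  choose ι hι c m hs hle hφ using h
  have hnorms : Summable fun i => ∑' j : ι i, ‖c i j‖ * weight σ (m i j) :=
    hN.of_nonneg_of_le (fun _ => tsum_nonneg fun _ => norm_mul_weight_nonneg _ _ _) hle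
  have hsum : Summable fun x : Σ i, ι i => ‖c x.1 x.2‖ * weight σ (m x.1 x.2) :=
    (summable_sigma_of_nonneg fun _ => norm_mul_weight_nonneg _ _ _).2 ⟨hs, hnorms⟩
  refine ⟨Σ i, ι i, inferInstance, fun x => c x.1 x.2, fun x => m x.1 x.2, hsum, ?_, fun u => ?_⟩
  · rw [hsum.tsum_sigma' hs]
    exact hnorms.tsum_le_tsum hle hN
  · have hu : Summable fun x : Σ i, ι i => c x.1 x.2 * expMode (m x.1 x.2) u :=
      .of_norm (by simpa [norm_expMode] using summable_norm_of_summable_mul_weight hσ hsum)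
    rw [← (hu.hasSum.sigma fun i => hφ i u).unique (hψ u)]
    exact hu.hasSum

lemma WienerNormLE.mul_coeffDecay (hσ : 0 ≤ σ) (h : WienerNormLE σ M φ)
    (h' : CoeffDecay σ N ψ) : CoeffDecay σ (M * N) (fun u => φ u * ψ u) := by
  obtain ⟨hψ, hN⟩ := h'
  have hN0 : 0 ≤ N := (mul_nonneg (weight_pos σ 0).le (norm_nonneg _)).trans (hN 0)
  refine ⟨(h.continuous hσ).mul hψ, fun k => ?_⟩
  obtain ⟨ι, _, c, m, hs, hle, hφ⟩ := h
  have hcoeff := hφ.hasSum_modeCoeff_mul (summable_norm_of_summable_mul_weight hσ hs) hψ k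
  rw [← hcoeff.tsum_eq, ← Real.norm_of_nonneg (weight_pos σ k).le, ← Complex.norm_real,
    ← norm_mul, ← tsum_mul_left]
  refine (tsum_of_norm_bounded (hs.hasSum.mul_right N) fun i => ?_).trans (by gcongr)
  rw [norm_mul, norm_mul, Complex.norm_real, Real.norm_of_nonneg (weight_pos σ k).le]
  calc weight σ k * (‖c i‖ * ‖modeCoeff ψ (k - m i)‖)
      ≤ weight σ (m i) * weight σ (k - m i) * (‖c i‖ * ‖modeCoeff ψ (k - m i)‖) := by
        gcongr
        exact weight_le_mul_sub hσ _ _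
    _ = ‖c i‖ * weight σ (m i) * (weight σ (k - m i) * ‖modeCoeff ψ (k - m i)‖) := by ring
    _ ≤ ‖c i‖ * weight σ (m i) * N :=
        mul_le_mul_of_nonneg_left (hN _) (norm_mul_weight_nonneg _ _ _)

lemma CoeffDecay.add (h : CoeffDecay σ M φ) (h' : CoeffDecay σ N ψ) :
    CoeffDecay σ (M + N) (fun u => φ u + ψ u) := by
  refine ⟨h.1.add h'.1, fun k => ?_⟩
  rw [modeCoeff_add h.1 h'.1]
  calc weight σ k * ‖modeCoeff φ k + modeCoeff ψ k‖
      ≤ weight σ k * (‖modeCoeff φ k‖ + ‖modeCoeff ψ k‖) :=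
        mul_le_mul_of_nonneg_left (norm_add_le _ _) (weight_pos σ k).le
    _ ≤ M + N := by rw [mul_add]; exact add_le_add (h.2 k) (h'.2 k)

lemma CoeffDecay.const_mul (z : ℂ) (h : CoeffDecay σ M φ) :
    CoeffDecay σ (‖z‖ * M) (fun u => z * φ u) := by
  refine ⟨h.1.const_mul z, fun k => ?_⟩
  rw [modeCoeff_const_mul, norm_mul, mul_left_comm]
  gcongr
  exact h.2 k

lemma CoeffDecay.sub (h : CoeffDecay σ M φ) (h' : CoeffDecay σ N ψ) :
    CoeffDecay σ (M + N) (fun u => φ u - ψ u) := by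
  simpa [sub_eq_add_neg] using h.add (h'.const_mul (-1))

lemma CoeffDecay.finset_sum {κ : Type*} (s : Finset κ) {M : κ → ℝ} {φ : κ → ℝ → ℂ}
    (h : ∀ i ∈ s, CoeffDecay σ (M i) (φ i)) :
    CoeffDecay σ (∑ i ∈ s, M i) (fun u => ∑ i ∈ s, φ i u) := by
  classical
  induction s using Finset.induction_on with
  | empty => exact ⟨by simp [continuous_const], fun k => by simp [modeCoeff]⟩
  | insert i s hi ih =>
    simp only [Finset.sum_insert hi]
    exact (h i (by simp)).add (ih fun j hj => h j (by simp [hj]))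

lemma CoeffDecay.integral {φ : ℝ → ℝ → ℂ} (hφ : Continuous fun x : ℝ × ℝ => φ x.1 x.2)
    (h : ∀ θ ∈ Icc (0 : ℝ) 1, CoeffDecay σ M (φ θ)) :
    CoeffDecay σ M (fun u => ∫ θ in (0 : ℝ)..1, φ θ u) := by
  refine ⟨intervalIntegral.continuous_parametric_intervalIntegral_of_continuous'
    (f := fun u θ => φ θ u) (hφ.comp continuous_swap) 0 1, fun k => ?_⟩
  have hle : ‖∫ θ in (0 : ℝ)..1, modeCoeff (φ θ) k‖ ≤ M / weight σ k * |1 - 0| :=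
    intervalIntegral.norm_integral_le_of_norm_le_const fun θ hθ => by
      rw [uIoc_of_le zero_le_one] at hθ
      rw [le_div_iff₀' (weight_pos σ k)]
      exact (h θ ⟨hθ.1.le, hθ.2⟩).2 k
  rwa [sub_zero, abs_one, mul_one, le_div_iff₀' (weight_pos σ k), ← modeCoeff_integral hφ] at hle

lemma CoeffDecay.norm_integral_mul_le (h : CoeffDecay σ M φ) {H : ℤ → ℝ}
    (hψ : HasMajorant H id ψ) (hH : Summable H)
    (hs : Summable fun k => H k * weight (-σ) k) :
    ‖∫ u in (0 : ℝ)..1, φ u * ψ u‖ ≤ M * ∑' k, H k * weight (-σ) k := by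
  obtain ⟨c, hcH, hc⟩ := hψ
  have hsum := hc.hasSum_integral_mul (hH.of_nonneg_of_le (fun _ => norm_nonneg _) hcH) h.1
  simp only [mul_comm (φ _), id_eq] at hsum ⊢
  rw [← hsum.tsum_eq, ← tsum_mul_left]
  refine tsum_of_norm_bounded (hs.mul_left M).hasSum fun k => ?_
  have hinv : weight (-σ) k * weight σ k = 1 := by
    rw [← weight_add_exp, neg_add_cancel, weight_exp_zero]
  calc ‖c k * modeCoeff φ (-k)‖
      = ‖c k‖ * weight (-σ) k * (weight σ (-k) * ‖modeCoeff φ (-k)‖) := by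
        rw [norm_mul, weight_neg]
        linear_combination -‖c k‖ * ‖modeCoeff φ (-k)‖ * hinv
    _ ≤ H k * weight (-σ) k * M :=
        mul_le_mul (mul_le_mul_of_nonneg_right (hcH k) (weight_pos _ _).le) (h.2 (-k))
          (mul_nonneg (weight_pos _ _).le (norm_nonneg _))
          (mul_nonneg ((norm_nonneg _).trans (hcH k)) (weight_pos _ _).le)
    _ = M * (H k * weight (-σ) k) := by ring

-- `(φ²)^_k = ∑ j, c_j c_{k-j}`, and the weight splits as `weight k ≤ weight j * weight (k-j)`.
lemma HasMajorant.coeffDecay_sq (hσ : 0 ≤ σ) {H : ℤ → ℝ} (hφ : HasMajorant H id φ)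
    (hH : Summable H) (hs : Summable fun k => (weight σ k * H k) ^ 2) :
    CoeffDecay σ (∑' k, (weight σ k * H k) ^ 2) (fun u => φ u ^ 2) := by
  have hcont := hφ.continuous hH
  obtain ⟨c, hcH, hc⟩ := hφ
  have hcs : Summable fun k => ‖c k‖ := hH.of_nonneg_of_le (fun _ => norm_nonneg _) hcH
  refine ⟨hcont.pow 2, fun k => ?_⟩
  have hconv := hc.hasSum_modeCoeff_mul hcs hcont k
  simp only [hc.modeCoeff_eq hcs, id_eq, ← sq] at hconv
  have hs' : HasSum (fun j => (weight σ (k - j) * H (k - j)) ^ 2)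
      (∑' j, (weight σ j * H j) ^ 2) :=
    (Equiv.subLeft k).hasSum_iff (f := fun j => (weight σ j * H j) ^ 2) |>.2 hs.hasSum
  have hb : ∀ j, ‖weight σ k * (c j * c (k - j))‖ ≤
      1 / 2 * (weight σ j * H j) ^ 2 + 1 / 2 * (weight σ (k - j) * H (k - j)) ^ 2 := fun j => by
    have hj0 : 0 ≤ H j := (norm_nonneg _).trans (hcH j)
    have hwj := weight_pos σ j
    have hwkj := weight_pos σ (k - j)
    rw [norm_mul, norm_mul, Complex.norm_real, Real.norm_of_nonneg (weight_pos σ k).le]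
    calc weight σ k * (‖c j‖ * ‖c (k - j)‖)
        ≤ weight σ j * weight σ (k - j) * (H j * H (k - j)) := by
          gcongr
          exacts [weight_le_mul_sub hσ j k, hcH j, hcH (k - j)]
      _ ≤ _ := by nlinarith [sq_nonneg (weight σ j * H j - weight σ (k - j) * H (k - j))]
  have hle := tsum_of_norm_bounded ((hs.hasSum.mul_left (1 / 2)).add (hs'.mul_left (1 / 2))) hb
  rw [tsum_mul_left, hconv.tsum_eq, norm_mul, Complex.norm_real,
    Real.norm_of_nonneg (weight_pos σ k).le] at hle
  linarith

end Wiener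

end

section

/-! ### Power series in the Wiener algebra -/

/-- Trigonometric polynomials of degree at most `K`. -/
def trigPoly (K : ℕ) : Submodule ℂ (ℝ → ℂ) :=
  Submodule.span ℂ (expMode '' Icc (-(K : ℤ)) K)

lemma expMode_mem_trigPoly {K : ℕ} {m : ℤ} (hm : m ∈ Icc (-(K : ℤ)) K) :
    expMode m ∈ trigPoly K :=
  Submodule.subset_span (mem_image_of_mem _ hm)

lemma trigPoly_mul {K L : ℕ} {φ ψ : ℝ → ℂ} (hφ : φ ∈ trigPoly K) (hψ : ψ ∈ trigPoly L) :
    φ * ψ ∈ trigPoly (K + L) := by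
  have hmul := Submodule.mul_mem_mul hφ hψ
  rw [trigPoly, trigPoly, Submodule.span_mul_span] at hmul
  refine Submodule.span_mono ?_ hmul
  rintro _ ⟨_, ⟨m, hm, rfl⟩, _, ⟨l, hl, rfl⟩, rfl⟩
  refine ⟨m + l, ?_, funext (expMode_add_freq m l)⟩
  rw [mem_Icc] at hm hl ⊢
  push_cast
  omega

lemma trigPoly_pow {K : ℕ} {φ : ℝ → ℂ} (hφ : φ ∈ trigPoly K) (j : ℕ) :
    φ ^ j ∈ trigPoly (K * j) := by
  induction j with
  | zero => exact Submodule.subset_span ⟨0, by simp, funext expMode_zero⟩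
  | succ j ih => rw [pow_succ, mul_add, mul_one]; exact trigPoly_mul ih hφ

lemma trigPoly_eq {K : ℕ} {φ : ℝ → ℂ} (hφ : φ ∈ trigPoly K) :
    Continuous φ ∧
      ∀ u, φ u = ∑ m ∈ Finset.Icc (-(K : ℤ)) K, modeCoeff φ m * expMode m u := by
  induction hφ using Submodule.span_induction with
  | mem φ h =>
    obtain ⟨m, hm, rfl⟩ := h
    refine ⟨continuous_expMode m, fun u => ?_⟩
    rw [Finset.sum_eq_single_of_mem m (Finset.mem_Icc.2 hm) fun k _ hk => by
      rw [modeCoeff_expMode, if_neg hk.symm, zero_mul], modeCoeff_expMode, if_pos rfl, one_mul]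
  | zero => exact ⟨continuous_const, fun u => by simp [modeCoeff]⟩
  | add φ ψ _ _ hφ hψ =>
    refine ⟨hφ.1.add hψ.1, fun u => ?_⟩
    have hcoeff : ∀ k, modeCoeff (φ + ψ) k = modeCoeff φ k + modeCoeff ψ k :=
      modeCoeff_add hφ.1 hψ.1
    simp only [hcoeff, add_mul, Finset.sum_add_distrib, Pi.add_apply, ← hφ.2, ← hψ.2]
  | smul z φ _ hφ =>
    refine ⟨hφ.1.const_smul z, fun u => ?_⟩
    have hcoeff : ∀ k, modeCoeff (z • φ) k = z * modeCoeff φ k := modeCoeff_const_mul z φ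
    simp only [hcoeff, mul_assoc, ← Finset.mul_sum, Pi.smul_apply, smul_eq_mul, ← hφ.2]

lemma norm_modeCoeff_le {φ : ℝ → ℂ} {B : ℝ} (hB : ∀ u, ‖φ u‖ ≤ B) (k : ℤ) :
    ‖modeCoeff φ k‖ ≤ B := by
  have hle := intervalIntegral.norm_integral_le_of_norm_le_const (a := 0) (b := 1) (C := B)
    (f := fun u => φ u * expMode (-k) u) fun u _ => by
      rw [norm_mul, norm_expMode, mul_one]
      exact hB u
  simpa [modeCoeff] using hle

lemma wienerNormLE_of_mem_trigPoly {σ B : ℝ} (hσ : 0 ≤ σ) {K : ℕ} {φ : ℝ → ℂ}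
    (hφ : φ ∈ trigPoly K) (hB : ∀ u, ‖φ u‖ ≤ B) :
    WienerNormLE σ ((2 * K + 1) * (1 + K) ^ σ * B) φ := by
  have hB0 : 0 ≤ B := (norm_nonneg _).trans (hB 0)
  refine ⟨Finset.Icc (-(K : ℤ)) K, inferInstance, fun m => modeCoeff φ m, fun m => m,
    Summable.of_finite, ?_, fun u => ?_⟩
  · have hweight : ∀ m ∈ Finset.Icc (-(K : ℤ)) K, weight σ m ≤ (1 + K) ^ σ := fun m hm => by
      have hmK : |(m : ℝ)| ≤ K := by exact_mod_cast abs_le.2 (Finset.mem_Icc.1 hm)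
      exact Real.rpow_le_rpow (by positivity) (by linarith) hσ
    have hcard : ((Finset.Icc (-(K : ℤ)) K).card : ℝ) = 2 * K + 1 := by
      rw [Int.card_Icc]
      exact_mod_cast (by omega : ((K : ℤ) + 1 - -K).toNat = 2 * K + 1)
    rw [Finset.tsum_subtype (Finset.Icc (-(K : ℤ)) K) (fun m => ‖modeCoeff φ m‖ * weight σ m)]
    calc ∑ m ∈ Finset.Icc (-(K : ℤ)) K, ‖modeCoeff φ m‖ * weight σ m
        ≤ ∑ m ∈ Finset.Icc (-(K : ℤ)) K, B * (1 + K) ^ σ := Finset.sum_le_sum fun m hm =>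
          mul_le_mul (norm_modeCoeff_le hB m) (hweight m hm) (weight_pos _ _).le hB0
      _ = (2 * K + 1) * (1 + K) ^ σ * B := by
          rw [Finset.sum_const, nsmul_eq_mul, hcard]
          ring
  · rw [(trigPoly_eq hφ).2 u]
    exact Finset.hasSum (Finset.Icc (-(K : ℤ)) K) (fun m => modeCoeff φ m * expMode m u)

lemma WienerNormLE.pow_of_trigPoly_add {σ ρ η : ℝ} (hσ : 0 ≤ σ) {K : ℕ} {q e : ℝ → ℂ}
    (hq : q ∈ trigPoly K) (hρ : ∀ u, ‖q u‖ ≤ ρ) (he : WienerNormLE σ η e) (k : ℕ) :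
    WienerNormLE σ ((2 * (K * k) + 1) * (1 + K * k) ^ σ * (ρ + η) ^ k)
      (fun u => (q u + e u) ^ k) := by
  have hρ0 : 0 ≤ ρ := (norm_nonneg _).trans (hρ 0)
  have hη0 := he.nonneg
  simp only [add_pow, Finset.mul_sum]
  refine WienerNormLE.finset_sum _ fun j hj => ?_
  have hjk : (j : ℝ) ≤ k := by exact_mod_cast Finset.mem_range_succ_iff.1 hj
  have hqj := wienerNormLE_of_mem_trigPoly hσ (trigPoly_pow hq j) (B := ρ ^ j) fun u => by
    simpa using pow_le_pow_left₀ (norm_nonneg _) (hρ u) j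
  refine ((hqj.mul hσ (he.pow hσ (k - j))).mul hσ
    (WienerNormLE.const σ (k.choose j : ℂ))).mono ?_
  simp only [Complex.norm_natCast]
  push_cast
  calc (2 * ((K : ℝ) * j) + 1) * (1 + K * j) ^ σ * ρ ^ j * η ^ (k - j) * k.choose j
      ≤ (2 * ((K : ℝ) * k) + 1) * (1 + K * k) ^ σ * ρ ^ j * η ^ (k - j) * k.choose j := by
        gcongr
    _ = (2 * ((K : ℝ) * k) + 1) * (1 + K * k) ^ σ * (ρ ^ j * η ^ (k - j) * k.choose j) := by
        ring

lemma exists_poly_mul_pow_le (σ : ℝ) {R R' : ℝ} (hR : 0 < R) (hRR : R < R') (K : ℕ) :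
    ∃ C : ℝ, ∀ k : ℕ, (2 * ((K : ℝ) * k) + 1) * (1 + K * k) ^ σ * R ^ k ≤ C * R' ^ k := by
  have hR' : 0 < R' := hR.trans hRR
  set r := R / R' with hr
  have hr0 : 0 < r := div_pos hR hR'
  set N := ⌈σ⌉₊ + 1 with hN
  obtain ⟨B, hB⟩ := (tendsto_pow_const_mul_const_pow_of_abs_lt_one N
    (by rwa [abs_of_pos hr0, hr, div_lt_one hR'] : |r| < 1)).bddAbove_range
  refine ⟨2 * (1 + K) ^ N * (B / r), fun k => ?_⟩
  have hBk : ((k + 1 : ℕ) : ℝ) ^ N * r ^ (k + 1) ≤ B := hB ⟨k + 1, rfl⟩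
  have hKk : (0 : ℝ) ≤ K * k := by positivity
  have hceil : (1 + (K : ℝ) * k) ^ σ ≤ (1 + K * k) ^ ⌈σ⌉₊ := by
    rw [← Real.rpow_natCast]
    exact Real.rpow_le_rpow_of_exponent_le (by linarith) (Nat.le_ceil σ)
  have hbase : 1 + (K : ℝ) * k ≤ (1 + K) * (k + 1 : ℕ) := by
    push_cast
    nlinarith [(Nat.cast_nonneg K : (0 : ℝ) ≤ K), (Nat.cast_nonneg k : (0 : ℝ) ≤ k)]
  calc (2 * ((K : ℝ) * k) + 1) * (1 + K * k) ^ σ * R ^ k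
      ≤ 2 * (1 + (K : ℝ) * k) * (1 + K * k) ^ ⌈σ⌉₊ * R ^ k := by gcongr; linarith
    _ = 2 * (1 + (K : ℝ) * k) ^ N * R ^ k := by rw [hN, pow_succ]; ring
    _ ≤ 2 * ((1 + (K : ℝ)) * (k + 1 : ℕ)) ^ N * R ^ k := by gcongr
    _ = 2 * (1 + (K : ℝ)) ^ N * (((k + 1 : ℕ) : ℝ) ^ N * r ^ (k + 1) / r) * R' ^ k := by
        rw [mul_pow, pow_succ r, hr, div_pow]
        field_simp
    _ ≤ 2 * (1 + K) ^ N * (B / r) * R' ^ k := by gcongr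

section Calculus

variable {ι : Type} [Countable ι] {C : ι → ℝ} {m : ι → ℤ} {σ ρ : ℝ}

lemma HasMajorant.wienerNormLE {φ : ℝ → ℂ} (h : HasMajorant C m φ)
    (hC : Summable fun i => C i * weight σ (m i)) :
    WienerNormLE σ (∑' i, C i * weight σ (m i)) φ := by
  obtain ⟨c, hcC, hφ⟩ := h
  have hle : ∀ i, ‖c i‖ * weight σ (m i) ≤ C i * weight σ (m i) := fun i =>
    mul_le_mul_of_nonneg_right (hcC i) (weight_pos _ _).le
  have hs := hC.of_nonneg_of_le (fun i => norm_mul_weight_nonneg σ (c i) (m i)) hle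
  exact ⟨ι, inferInstance, c, m, hs, hs.tsum_le_tsum hle hC, hφ⟩

lemma HasMajorant.exists_trigPoly_wienerNormLE_sub {η : ℝ} (hη : 0 < η)
    (hC : Summable fun i => C i * weight σ (m i)) :
    ∃ K : ℕ, ∀ y, HasMajorant C m y →
      ∃ q ∈ trigPoly K, WienerNormLE σ η (fun u => y u - q u) := by
  classical
  obtain ⟨s, hs⟩ := ((tendsto_tsum_compl_atTop_zero
    fun i => C i * weight σ (m i)).eventually (gt_mem_nhds hη)).exists
  refine ⟨s.sup fun i => (m i).natAbs, fun y ⟨c, hcC, hy⟩ => ?_⟩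
  have hdeg : ∀ i ∈ s, m i ∈ Icc (-((s.sup fun i => (m i).natAbs : ℕ) : ℤ))
      (s.sup fun i => (m i).natAbs : ℕ) := fun i hi => by
    have := Finset.le_sup (f := fun i => (m i).natAbs) hi
    rw [mem_Icc]
    omega
  refine ⟨∑ i ∈ s, c i • expMode (m i), Submodule.sum_mem _ fun i hi =>
    Submodule.smul_mem _ _ (expMode_mem_trigPoly (hdeg i hi)), ?_⟩
  have htail : HasMajorant (fun i : {i // i ∉ s} => C i) (fun i => m i)
      (fun u => y u - (∑ i ∈ s, c i • expMode (m i)) u) :=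
    ⟨fun i => c i, fun i => hcC i, fun u =>
      (Finset.hasSum_compl_iff s (f := fun i => c i * expMode (m i) u)).2 (by simpa using hy u)⟩
  exact (htail.wienerNormLE (hC.subtype _)).mono hs.le

-- Up to a small Wiener norm, `y` is a trigonometric polynomial of fixed degree, so the Wiener
-- norm of `y ^ k` grows at most like `(ρ + η) ^ k` up to a factor polynomial in `k`.
lemma exists_wienerNormLE_powerSeries (hσ : 0 ≤ σ) (hρ0 : 0 ≤ ρ) (hρ : ρ < 1)
    (hC : Summable fun i => C i * weight σ (m i)) {b : ℕ → ℝ}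
    (hb : ∀ R : ℝ, 0 ≤ R → R < 1 → Summable fun k => |b k| * R ^ k) :
    ∃ M : ℝ, ∀ y : ℝ → ℂ, HasMajorant C m y → (∀ u, ‖y u‖ ≤ ρ) → ∀ ψ : ℝ → ℂ,
      (∀ u, HasSum (fun k => (b k : ℂ) * y u ^ k) (ψ u)) → WienerNormLE σ M ψ := by
  set η := (1 - ρ) / 4 with hη
  have hη0 : 0 < η := by rw [hη]; linarith
  obtain ⟨K, hK⟩ := HasMajorant.exists_trigPoly_wienerNormLE_sub hη0 hC
  obtain ⟨B, hB⟩ := exists_poly_mul_pow_le σ (R := ρ + η + η) (R' := ρ + 3 * η)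
    (by linarith) (by linarith) K
  have hsum : Summable fun k => |b k| * (B * (ρ + 3 * η) ^ k) :=
    ((hb (ρ + 3 * η) (by linarith) (by linarith)).mul_left B).congr fun k => by ring
  refine ⟨∑' k, |b k| * (B * (ρ + 3 * η) ^ k), fun y hy hyρ ψ hψ => ?_⟩
  obtain ⟨q, hq, he⟩ := hK y hy
  have hqρ : ∀ u, ‖q u‖ ≤ ρ + η := fun u =>
    calc ‖q u‖ = ‖y u - (y u - q u)‖ := by rw [sub_sub_cancel]
      _ ≤ ‖y u‖ + ‖y u - q u‖ := norm_sub_le _ _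
      _ ≤ ρ + η := add_le_add (hyρ u) (he.norm_le hσ u)
  refine WienerNormLE.tsum hσ (φ := fun k u => (b k : ℂ) * y u ^ k) (fun k => ?_) hsum hψ
  have hpow := (WienerNormLE.pow_of_trigPoly_add hσ hq hqρ he k).mono (hB k)
  simpa using hpow.const_mul hσ (b k : ℂ)

end Calculus

lemma exists_powerSeries_one_sub_rpow (α : ℝ) : ∃ b : ℕ → ℝ,
    (∀ R : ℝ, 0 ≤ R → R < 1 → Summable fun k => |b k| * R ^ k) ∧
      ∀ y : ℝ, |y| < 1 → HasSum (fun k => b k * y ^ k) ((1 - y) ^ (-α)) := by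
  have hseries := Real.one_div_one_sub_rpow_hasFPowerSeriesOnBall_zero α
  refine ⟨fun n => Ring.choose (α + n - 1) n, fun R hR hR1 => ?_, fun y hy => ?_⟩
  · lift R to NNReal using hR
    have hs := FormalMultilinearSeries.summable_norm_mul_pow _ (r := R)
      (lt_of_lt_of_le (by exact_mod_cast hR1) hseries.r_le)
    simpa [FormalMultilinearSeries.ofScalars_norm] using hs
  · have hs := hseries.hasSum (y := y) (by simpa [enorm_eq_nnnorm, ← NNReal.coe_lt_coe] using hy)
    rw [zero_add] at hs
    rw [Real.rpow_neg (by linarith [abs_lt.1 hy]), ← one_div]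
    simpa [FormalMultilinearSeries.ofScalars_apply_eq, mul_comm] using hs

end

section

/-! ### Averages over segments -/

section Normed

variable {E : Type*} [NormedAddCommGroup E] [NormedSpace ℝ E] {f g : ℝ → E}

/-- The mean of `f` over the segment from `u + x` to `u + y`; at `y = x` it is `f (u + x)`. -/
def segAvg (f : ℝ → E) (u x y : ℝ) : E := ∫ θ in (0 : ℝ)..1, f (u + (x + θ * (y - x)))

lemma continuous_segAvg (hf : Continuous f) :
    Continuous fun q : ℝ × ℝ × ℝ => segAvg f q.1 q.2.1 q.2.2 :=
  intervalIntegral.continuous_parametric_intervalIntegral_of_continuous' (by fun_prop) 0 1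

lemma norm_segAvg_le {B : ℝ} (hB : ∀ u, ‖f u‖ ≤ B) (u x y : ℝ) : ‖segAvg f u x y‖ ≤ B := by
  simpa [segAvg] using intervalIntegral.norm_integral_le_of_norm_le_const (a := 0) (b := 1)
    (f := fun θ => f (u + (x + θ * (y - x)))) (C := B) fun θ _ => hB _

lemma norm_segAvg_sub_segAvg_le (hf : Continuous f) {u x y x' y' B : ℝ}
    (h : ∀ θ ∈ Icc (0 : ℝ) 1, ‖f (u + (x + θ * (y - x))) - f (u + (x' + θ * (y' - x')))‖ ≤ B) :
    ‖segAvg f u x y - segAvg f u x' y'‖ ≤ B := by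
  rw [segAvg, segAvg, ← intervalIntegral.integral_sub
    (Continuous.intervalIntegrable (by fun_prop) _ _)
    (Continuous.intervalIntegrable (by fun_prop) _ _)]
  refine (intervalIntegral.norm_integral_le_of_norm_le_const fun θ hθ => ?_).trans_eq
    (show B * |(1 : ℝ) - 0| = B by simp)
  rw [uIoc_of_le zero_le_one] at hθ
  exact h θ (Ioc_subset_Icc_self hθ)

lemma segAvg_add_smul (hf : Continuous f) (hg : Continuous g) (τ u x y : ℝ) :
    segAvg (fun t => f t + τ • g t) u x y = segAvg f u x y + τ • segAvg g u x y := by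
  unfold segAvg
  rw [intervalIntegral.integral_add (Continuous.intervalIntegrable (by fun_prop) _ _)
    (Continuous.intervalIntegrable (by fun_prop) _ _), intervalIntegral.integral_smul]

variable [CompleteSpace E]

lemma segAvg_self (f : ℝ → E) (u x : ℝ) : segAvg f u x x = f (u + x) := by simp [segAvg]

lemma map_segAvg {F : Type*} [NormedAddCommGroup F] [NormedSpace ℝ F]
    [CompleteSpace F] (L : E →L[ℝ] F) (hf : Continuous f) (u x y : ℝ) :
    L (segAvg f u x y) = segAvg (fun t => L (f t)) u x y :=
  (L.intervalIntegral_comp_comm (Continuous.intervalIntegrable (by fun_prop) _ _)).symm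

end Normed

lemma segAvg_expMode (k : ℤ) (u x y : ℝ) :
    segAvg (expMode k) u x y = segAvg (expMode k) 0 x y * expMode k u := by
  simp only [segAvg, expMode_add k u, zero_add, mul_comm (expMode k u),
    intervalIntegral.integral_mul_const]

lemma norm_segAvg_expMode_sub_le (k : ℤ) {x y x' y' r : ℝ}
    (h : ∀ θ ∈ Icc (0 : ℝ) 1, |x + θ * (y - x) - (x' + θ * (y' - x'))| ≤ r) :
    ‖segAvg (expMode k) 0 x y - segAvg (expMode k) 0 x' y'‖ ≤ oscBound k r :=
  norm_segAvg_sub_segAvg_le (continuous_expMode k) fun θ hθ =>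
    (norm_expMode_sub_le _ _ _).trans (oscBound_mono k (by simpa using h θ hθ))

lemma HasTrigSeries.segAvg_right {ι : Type*} [Countable ι] {c : ι → ℂ} {m : ι → ℤ} {φ : ℝ → ℂ}
    (h : HasTrigSeries c m φ) (hc : Summable fun i => ‖c i‖) (x y : ℝ) :
    HasTrigSeries (fun i => c i * segAvg (expMode (m i)) 0 x y) m (fun u => segAvg φ u x y) :=
  fun u => by
  have hsum := intervalIntegral.hasSum_integral_of_dominated_convergence (a := 0) (b := 1)
    (μ := volume) (F := fun i θ => c i * expMode (m i) (u + (x + θ * (y - x))))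
    (f := fun θ => φ (u + (x + θ * (y - x)))) (fun i _ => ‖c i‖)
    (fun i => (by fun_prop : Continuous _).aestronglyMeasurable)
    (fun i => Eventually.of_forall fun θ _ => by simp [norm_expMode])
    (Eventually.of_forall fun _ _ => hc) (by simp) (Eventually.of_forall fun θ _ => h _)
  refine hsum.congr_fun fun i => ?_
  rw [intervalIntegral.integral_const_mul, mul_assoc, ← segAvg_expMode, segAvg]

/-! ### Curves with componentwise dominated Fourier coefficients -/

/-- All components of `f` are Fourier series with coefficients dominated by `G`. -/
def HasCoeffBound {n : ℕ} (G : ℤ → ℝ) (f : ℝ → EuclideanSpace ℝ (Fin n)) : Prop :=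
  ∀ i, HasMajorant G id (fun u => ((f u i : ℝ) : ℂ))

/-- The squared weighted `ℓ²` modulus of continuity of coefficients dominated by `G`. -/
def modulusSq (σ : ℝ) (G : ℤ → ℝ) (r : ℝ) : ℝ := ∑' k, (weight σ k * (G k * oscBound k r)) ^ 2

lemma modulusSq_nonneg (σ : ℝ) (G : ℤ → ℝ) (r : ℝ) : 0 ≤ modulusSq σ G r :=
  tsum_nonneg fun _ => sq_nonneg _

section Bounds

variable {n : ℕ} {f : ℝ → EuclideanSpace ℝ (Fin n)} {G : ℤ → ℝ} {σ : ℝ}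

lemma summable_modulusSq (hG2 : Summable fun k => (weight σ k * G k) ^ 2) {r : ℝ} (hr : 0 ≤ r) :
    Summable fun k => (weight σ k * (G k * oscBound k r)) ^ 2 := by
  refine (hG2.mul_left (2 ^ 2)).of_nonneg_of_le (fun k => sq_nonneg _) fun k => ?_
  calc (weight σ k * (G k * oscBound k r)) ^ 2
      = oscBound k r ^ 2 * (weight σ k * G k) ^ 2 := by ring
    _ ≤ 2 ^ 2 * (weight σ k * G k) ^ 2 := by
        gcongr
        exacts [oscBound_nonneg k hr, oscBound_le_two k r]

lemma summable_mul_oscBound (hG0 : ∀ k, 0 ≤ G k) (hG : Summable G) {r : ℝ} (hr : 0 ≤ r) :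
    Summable fun k => G k * oscBound k r :=
  (hG.mul_right 2).of_nonneg_of_le (fun k => mul_nonneg (hG0 k) (oscBound_nonneg k hr))
    fun k => mul_le_mul_of_nonneg_left (oscBound_le_two k r) (hG0 k)

lemma HasCoeffBound.continuous (h : HasCoeffBound G f) (hG : Summable G) : Continuous f :=
  (PiLp.continuous_toLp 2 _).comp
    (continuous_pi fun i => Complex.continuous_re.comp ((h i).continuous hG))

lemma HasCoeffBound.hasTrigSeries_segAvg (h : HasCoeffBound G f) (hG : Summable G) {i : Fin n}
    {c : ℤ → ℂ} (hcG : ∀ k, ‖c k‖ ≤ G k) (hc : HasTrigSeries c id fun u => ((f u i : ℝ) : ℂ))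
    (x y : ℝ) :
    HasTrigSeries (fun k => c k * segAvg (expMode k) 0 x y) id
      (fun u => ((segAvg f u x y i : ℝ) : ℂ)) := by
  have hcoord : ∀ u, ((segAvg f u x y i : ℝ) : ℂ) = segAvg (fun t => ((f t i : ℝ) : ℂ)) u x y :=
    fun u => map_segAvg (Complex.ofRealCLM.comp (EuclideanSpace.proj i)) (h.continuous hG) u x y
  simp only [hcoord]
  exact hc.segAvg_right (hG.of_nonneg_of_le (fun _ => norm_nonneg _) hcG) x y

lemma HasCoeffBound.average (h : HasCoeffBound G f) (hG : Summable G) (x y : ℝ) :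
    HasCoeffBound G (fun u => segAvg f u x y) := fun i => by
  obtain ⟨c, hcG, hc⟩ := h i
  refine ⟨_, fun k => ?_, h.hasTrigSeries_segAvg hG hcG hc x y⟩
  rw [norm_mul]
  exact (mul_le_of_le_one_right (norm_nonneg _)
    (norm_segAvg_le (fun u => (norm_expMode k u).le) 0 x y)).trans (hcG k)

lemma HasCoeffBound.segAvg_sub_segAvg (h : HasCoeffBound G f) (hG : Summable G)
    {x y x' y' r : ℝ} (hr : ∀ θ ∈ Icc (0 : ℝ) 1, |x + θ * (y - x) - (x' + θ * (y' - x'))| ≤ r) :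
    HasCoeffBound (fun k => G k * oscBound k r)
      (fun u => segAvg f u x y - segAvg f u x' y') := fun i => by
  obtain ⟨c, hcG, hc⟩ := h i
  refine ⟨fun k => c k * (segAvg (expMode k) 0 x y - segAvg (expMode k) 0 x' y'),
    fun k => ?_, fun u => ?_⟩
  · rw [norm_mul]
    exact mul_le_mul (hcG k) (norm_segAvg_expMode_sub_le k hr) (norm_nonneg _)
      ((norm_nonneg _).trans (hcG k))
  · simp only [mul_sub, sub_mul, PiLp.sub_apply, Complex.ofReal_sub]
    exact (h.hasTrigSeries_segAvg hG hcG hc x y u).sub (h.hasTrigSeries_segAvg hG hcG hc x' y' u)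

lemma HasCoeffBound.coeffDecay_norm_sq (hσ : 0 ≤ σ) (h : HasCoeffBound G f) (hG : Summable G)
    (hG2 : Summable fun k => (weight σ k * G k) ^ 2) :
    CoeffDecay σ (n * ∑' k, (weight σ k * G k) ^ 2) (fun u => ((‖f u‖ ^ 2 : ℝ) : ℂ)) := by
  have hsum := CoeffDecay.finset_sum Finset.univ fun i _ => (h i).coeffDecay_sq hσ hG hG2
  simpa [EuclideanSpace.norm_sq_eq] using hsum

lemma HasCoeffBound.coeffDecay_norm_segAvg_sub_sq (hσ : 0 ≤ σ) (h : HasCoeffBound G f)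
    (hG0 : ∀ k, 0 ≤ G k) (hG : Summable G) (hG2 : Summable fun k => (weight σ k * G k) ^ 2)
    {x y x' y' r : ℝ} (hr : ∀ θ ∈ Icc (0 : ℝ) 1, |x + θ * (y - x) - (x' + θ * (y' - x'))| ≤ r) :
    CoeffDecay σ (n * modulusSq σ G r)
      (fun u => ((‖segAvg f u x y - segAvg f u x' y'‖ ^ 2 : ℝ) : ℂ)) := by
  have hr0 : 0 ≤ r := (abs_nonneg _).trans (hr 0 (left_mem_Icc.2 zero_le_one))
  exact (h.segAvg_sub_segAvg hG hr).coeffDecay_norm_sq hσ (summable_mul_oscBound hG0 hG hr0)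
    (summable_modulusSq hG2 hr0)

end Bounds

/-! ### The unit-length defect of an average -/

lemma one_sub_norm_segAvg_sq {E : Type*} [NormedAddCommGroup E] [InnerProductSpace ℝ E]
    [CompleteSpace E] {f : ℝ → E} (hf : Continuous f) (hf1 : ∀ u, ‖f u‖ = 1) (u x y : ℝ) :
    1 - ‖segAvg f u x y‖ ^ 2 =
      ∫ θ in (0 : ℝ)..1, ‖f (u + (x + θ * (y - x))) - segAvg f u x y‖ ^ 2 := by
  have hinner : ∫ θ in (0 : ℝ)..1, inner ℝ (f (u + (x + θ * (y - x)))) (segAvg f u x y) =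
      ‖segAvg f u x y‖ ^ 2 := by
    simp only [real_inner_comm (segAvg f u x y), ← real_inner_self_eq_norm_sq]
    exact (map_segAvg (innerSL ℝ (segAvg f u x y)) hf u x y).symm
  simp only [norm_sub_sq_real, hf1]
  rw [intervalIntegral.integral_add (Continuous.intervalIntegrable (by fun_prop) _ _) (by simp),
    intervalIntegral.integral_sub (by simp) (Continuous.intervalIntegrable (by fun_prop) _ _),
    intervalIntegral.integral_const_mul, hinner]
  simp only [intervalIntegral.integral_const, sub_zero, smul_eq_mul]
  ring

lemma abs_segment_sub_segment_le {θ t x y r : ℝ} (hθ : θ ∈ Icc (0 : ℝ) 1)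
    (ht : t ∈ Icc (0 : ℝ) 1) (hr : |y - x| ≤ r) :
    |x + θ * (y - x) - (x + t * (y - x))| ≤ r := by
  rw [show x + θ * (y - x) - (x + t * (y - x)) = (θ - t) * (y - x) by ring, abs_mul]
  have hle : |θ - t| ≤ 1 := abs_le.2 ⟨by linarith [hθ.1, ht.2], by linarith [hθ.2, ht.1]⟩
  exact (mul_le_of_le_one_left (abs_nonneg _) hle).trans hr

lemma HasCoeffBound.coeffDecay_one_sub_norm_segAvg_sq {n : ℕ} {f : ℝ → EuclideanSpace ℝ (Fin n)}
    {G : ℤ → ℝ} {σ : ℝ} (hσ : 0 ≤ σ) (h : HasCoeffBound G f) (hG0 : ∀ k, 0 ≤ G k)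
    (hG : Summable G) (hG2 : Summable fun k => (weight σ k * G k) ^ 2) (hf1 : ∀ u, ‖f u‖ = 1)
    {x y r : ℝ} (hr : |y - x| ≤ r) :
    CoeffDecay σ (n * modulusSq σ G r) (fun u => ((1 - ‖segAvg f u x y‖ ^ 2 : ℝ) : ℂ)) := by
  have hf := h.continuous hG
  simp only [one_sub_norm_segAvg_sq hf hf1, ← intervalIntegral.integral_ofReal]
  refine CoeffDecay.integral (φ := fun θ u =>
    ((‖f (u + (x + θ * (y - x))) - segAvg f u x y‖ ^ 2 : ℝ) : ℂ)) ?_ fun θ hθ => ?_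
  · have := (continuous_segAvg hf).comp (by fun_prop : Continuous fun q : ℝ × ℝ => (q.2, x, y))
    simp only [Function.comp_def] at this
    fun_prop
  · simp only [← segAvg_self f _ (x + θ * (y - x))]
    exact h.coeffDecay_norm_segAvg_sub_sq hσ hG0 hG hG2 fun t ht => by
      rw [sub_self, mul_zero, add_zero]
      exact abs_segment_sub_segment_le hθ ht hr

lemma HasMajorant.mul {ι κ : Type*} {C : ι → ℝ} {D : κ → ℝ} {m : ι → ℤ} {l : κ → ℤ}
    {φ ψ : ℝ → ℂ} (h : HasMajorant C m φ) (h' : HasMajorant D l ψ) (hC : Summable C)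
    (hD : Summable D) :
    HasMajorant (fun x : ι × κ => C x.1 * D x.2) (fun x => m x.1 + l x.2)
      (fun u => φ u * ψ u) := by
  obtain ⟨c, hcC, hc⟩ := h
  obtain ⟨d, hdD, hd⟩ := h'
  refine ⟨_, fun x => ?_, hc.mul hd (hC.of_nonneg_of_le (fun _ => norm_nonneg _) hcC)
    (hD.of_nonneg_of_le (fun _ => norm_nonneg _) hdD)⟩
  rw [norm_mul]
  exact mul_le_mul (hcC _) (hdD _) (norm_nonneg _) ((norm_nonneg _).trans (hcC _))

lemma HasMajorant.sum {ι κ : Type*} [Fintype κ] {C : ι → ℝ} {m : ι → ℤ} {φ : κ → ℝ → ℂ}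
    (h : ∀ j, HasMajorant C m (φ j)) (hC : Summable C) :
    HasMajorant (fun x : κ × ι => C x.2) (fun x => m x.2) (fun u => ∑ j, φ j u) := by
  choose c hcC hc using h
  refine ⟨fun x => c x.1 x.2, fun x => hcC x.1 x.2, fun u => ?_⟩
  have hs : Summable fun x : κ × ι => c x.1 x.2 * expMode (m x.2) u := by
    refine Summable.of_norm ((summable_prod_of_nonneg fun x => norm_nonneg _).2
      ⟨fun j => hC.of_nonneg_of_le (fun _ => norm_nonneg _) fun i => ?_, Summable.of_finite⟩)
    simpa [norm_expMode] using hcC j i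
  convert hs.hasSum using 1
  exact ((hs.hasSum.prod_fiberwise fun j => hc j u).unique (hasSum_fintype _)).symm

lemma HasMajorant.one_sub {ι : Type*} {C : ι → ℝ} {m : ι → ℤ} {φ : ℝ → ℂ}
    (h : HasMajorant C m φ) :
    HasMajorant (Sum.elim (fun _ : Unit => 1) C) (Sum.elim (fun _ => 0) m)
      (fun u => 1 - φ u) := by
  obtain ⟨c, hcC, hc⟩ := h
  refine ⟨Sum.elim (fun _ => 1) fun i => -c i, Sum.rec (by simp) (by simpa using hcC),
    fun u => ?_⟩
  have hconst : HasSum (fun _ : Unit => (1 : ℂ) * expMode 0 u) 1 := by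
    simp [expMode_zero]
  simp only [sub_eq_add_neg]
  exact HasSum.sum (by exact hconst) (by simpa [Function.comp_def] using (hc u).neg)

section Defect

variable {n : ℕ} {G : ℤ → ℝ}

/-- Coefficients dominating those of `1 - ‖f‖²` when `G` dominates those of `f`. -/
def defectCoef (n : ℕ) (G : ℤ → ℝ) : Unit ⊕ (Fin n × ℤ × ℤ) → ℝ :=
  Sum.elim (fun _ => 1) fun x => G x.2.1 * G x.2.2

/-- The frequencies belonging to `defectCoef`. -/
def defectFreq (n : ℕ) : Unit ⊕ (Fin n × ℤ × ℤ) → ℤ :=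
  Sum.elim (fun _ => 0) fun x => x.2.1 + x.2.2

lemma summable_defectCoef {σ : ℝ} (hσ : 0 ≤ σ) (hG0 : ∀ k, 0 ≤ G k)
    (hG : Summable fun k => G k * weight σ k) :
    Summable fun i => defectCoef n G i * weight σ (defectFreq n i) := by
  have hnn : ∀ k, 0 ≤ G k * weight σ k := fun k => mul_nonneg (hG0 k) (weight_pos _ _).le
  have hpair : Summable fun x : ℤ × ℤ => G x.1 * G x.2 * weight σ (x.1 + x.2) := by
    refine (hG.mul_of_nonneg hG hnn hnn).of_nonneg_of_le
      (fun x => mul_nonneg (mul_nonneg (hG0 _) (hG0 _)) (weight_pos _ _).le) fun x => ?_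
    rw [mul_mul_mul_comm]
    exact mul_le_mul_of_nonneg_left (weight_add_le hσ _ _) (mul_nonneg (hG0 _) (hG0 _))
  have htriple : Summable fun x : Fin n × ℤ × ℤ =>
      G x.2.1 * G x.2.2 * weight σ (x.2.1 + x.2.2) :=
    (summable_prod_of_nonneg fun x =>
      mul_nonneg (mul_nonneg (hG0 _) (hG0 _)) (weight_pos _ _).le).2
      ⟨fun _ => hpair, Summable.of_finite⟩
  exact (HasSum.sum (f := fun i => defectCoef n G i * weight σ (defectFreq n i))
    (hasSum_unique _) (by exact htriple.hasSum)).summable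

lemma HasCoeffBound.hasMajorant_one_sub_norm_sq {f : ℝ → EuclideanSpace ℝ (Fin n)}
    (h : HasCoeffBound G f) (hG0 : ∀ k, 0 ≤ G k) (hG : Summable G) :
    HasMajorant (defectCoef n G) (defectFreq n) (fun u => ((1 - ‖f u‖ ^ 2 : ℝ) : ℂ)) := by
  have heq : ∀ u, ((1 - ‖f u‖ ^ 2 : ℝ) : ℂ) = 1 - ∑ i, (f u i : ℂ) * (f u i : ℂ) := fun u => by
    rw [EuclideanSpace.norm_sq_eq]
    simp [sq]
  simp only [heq]
  exact (HasMajorant.sum (fun i => (h i).mul (h i) hG hG)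
    (hG.mul_of_nonneg hG hG0 hG0)).one_sub

end Defect

end

section

/-! ### Square summable weighted sequences -/

lemma weight_mono {s t : ℝ} (h : s ≤ t) (k : ℤ) : weight s k ≤ weight t k :=
  Real.rpow_le_rpow_of_exponent_le (by linarith [abs_nonneg (k : ℝ)]) h

lemma weight_sq (t : ℝ) (k : ℤ) : weight t k ^ 2 = weight (2 * t) k := by
  rw [two_mul, weight_add_exp, sq]

lemma summable_weight_neg_sq {t : ℝ} (ht : 1 / 2 < t) :
    Summable fun k : ℤ => weight (-t) k ^ 2 := by
  refine Summable.of_norm_bounded_eventually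
    (Real.summable_abs_int_rpow (b := 2 * t) (by linarith)) ?_
  filter_upwards [(Set.finite_singleton (0 : ℤ)).eventually_cofinite_notMem] with k hk
  have hk0 : 0 < |(k : ℝ)| := abs_pos.2 (Int.cast_ne_zero.2 hk)
  rw [weight_sq, Real.norm_of_nonneg (weight_pos _ _).le, weight, mul_neg]
  exact Real.rpow_le_rpow_of_nonpos hk0 (by linarith) (by linarith)

/-- Nonnegative coefficients of Sobolev regularity `s`, i.e. `(1 + |k|) ^ s * G k` is square
summable. -/
structure SobolevSeq (s : ℝ) (G : ℤ → ℝ) : Prop where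
  nonneg : ∀ k, 0 ≤ G k
  summable_sq : Summable fun k => (weight s k * G k) ^ 2

namespace SobolevSeq

variable {s t : ℝ} {G : ℤ → ℝ}

lemma mono (h : SobolevSeq t G) (hst : s ≤ t) : SobolevSeq s G :=
  ⟨h.nonneg, h.summable_sq.of_nonneg_of_le (fun _ => sq_nonneg _) fun k =>
    pow_le_pow_left₀ (mul_nonneg (weight_pos _ _).le (h.nonneg k))
      (mul_le_mul_of_nonneg_right (weight_mono hst k) (h.nonneg k)) 2⟩

lemma summable_and_tsum_mul_weight_le (ht : 1 / 2 < t) (h : SobolevSeq (t + s) G) :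
    (Summable fun k => G k * weight s k) ∧ ∑' k, G k * weight s k ≤
      √(∑' k : ℤ, weight (-t) k ^ 2) * √(∑' k, (weight (t + s) k * G k) ^ 2) := by
  have hsplit : ∀ k, G k * weight s k = weight (-t) k * (weight (t + s) k * G k) := fun k => by
    rw [← mul_assoc, ← weight_add_exp, mul_comm, neg_add_cancel_left]
  simp only [hsplit]
  have hnn : ∀ k, 0 ≤ weight (t + s) k * G k := fun k =>
    mul_nonneg (weight_pos _ _).le (h.nonneg k)
  have hw : Summable fun k : ℤ => weight (-t) k ^ (2 : ℝ) := by
    simpa using summable_weight_neg_sq ht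
  have hG : Summable fun k => (weight (t + s) k * G k) ^ (2 : ℝ) := by simpa using h.summable_sq
  refine ⟨Real.summable_mul_of_Lp_Lq_of_nonneg Real.HolderConjugate.two_two
    (fun k => (weight_pos _ _).le) hnn hw hG, ?_⟩
  simpa [Real.sqrt_eq_rpow] using Real.inner_le_Lp_mul_Lq_tsum_of_nonneg
    Real.HolderConjugate.two_two (fun k => (weight_pos _ _).le) hnn hw hG

lemma summable_mul_weight {σ : ℝ} (h : SobolevSeq s G) (hs : σ + 1 / 2 < s) :
    Summable fun k => G k * weight σ k :=
  (summable_and_tsum_mul_weight_le (t := s - σ) (by linarith) (by simpa using h)).1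

lemma summable (h : SobolevSeq s G) (hs : 1 / 2 < s) : Summable G := by
  simpa [weight_exp_zero] using h.summable_mul_weight (σ := 0) (by linarith)

end SobolevSeq

/-! ### Bounded families in the Wiener algebra -/

section Families

variable {T : Type*} {σ : ℝ} {ω : T → ℝ} {φ ψ : T → ℝ → ℝ}

/-- A family of real functions bounded in the weighted Wiener algebra. -/
def UnifWiener (σ : ℝ) (φ : T → ℝ → ℝ) : Prop :=
  ∃ M, 0 ≤ M ∧ ∀ t, WienerNormLE σ M (fun u => (φ t u : ℂ))

/-- A family of real functions whose coefficients decay at the rate `σ` with constants `O(ω)`. -/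
def UnifDecay (σ : ℝ) (ω : T → ℝ) (φ : T → ℝ → ℝ) : Prop :=
  ∃ M, 0 ≤ M ∧ ∀ t, CoeffDecay σ (M * ω t) (fun u => (φ t u : ℂ))

namespace UnifWiener

lemma const (z : ℝ) : UnifWiener σ (fun (_ : T) _ => z) :=
  ⟨‖(z : ℂ)‖, norm_nonneg _, fun _ => WienerNormLE.const σ _⟩

lemma add (h : UnifWiener σ φ) (h' : UnifWiener σ ψ) :
    UnifWiener σ (fun t u => φ t u + ψ t u) := by
  obtain ⟨M, hM, h⟩ := h
  obtain ⟨N, hN, h'⟩ := h'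
  exact ⟨M + N, add_nonneg hM hN, fun t => by simpa using (h t).add (h' t)⟩

lemma mul (hσ : 0 ≤ σ) (h : UnifWiener σ φ) (h' : UnifWiener σ ψ) :
    UnifWiener σ (fun t u => φ t u * ψ t u) := by
  obtain ⟨M, hM, h⟩ := h
  obtain ⟨N, hN, h'⟩ := h'
  exact ⟨M * N, mul_nonneg hM hN, fun t => by simpa using (h t).mul hσ (h' t)⟩

lemma sub (hσ : 0 ≤ σ) (h : UnifWiener σ φ) (h' : UnifWiener σ ψ) :
    UnifWiener σ (fun t u => φ t u - ψ t u) := by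
  simpa [sub_eq_add_neg] using h.add ((const (-1)).mul hσ h')

lemma norm_sq {n : ℕ} (hσ : 0 ≤ σ) {P : T → ℝ → EuclideanSpace ℝ (Fin n)}
    (hP : ∀ i, UnifWiener σ (fun t u => P t u i)) : UnifWiener σ (fun t u => ‖P t u‖ ^ 2) := by
  choose M hM0 hM using fun i => (hP i).mul hσ (hP i)
  refine ⟨∑ i, M i, Finset.sum_nonneg fun i _ => hM0 i, fun t => ?_⟩
  simpa [EuclideanSpace.norm_sq_eq, ← pow_two] using
    WienerNormLE.finset_sum Finset.univ fun i _ => hM i t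

lemma mul_unifDecay (hσ : 0 ≤ σ) (h : UnifWiener σ φ) (h' : UnifDecay σ ω ψ) :
    UnifDecay σ ω (fun t u => φ t u * ψ t u) := by
  obtain ⟨M, hM, h⟩ := h
  obtain ⟨N, hN, h'⟩ := h'
  exact ⟨M * N, mul_nonneg hM hN, fun t => by
    simpa [mul_assoc] using (h t).mul_coeffDecay hσ (h' t)⟩

end UnifWiener

namespace UnifDecay

lemma add (h : UnifDecay σ ω φ) (h' : UnifDecay σ ω ψ) :
    UnifDecay σ ω (fun t u => φ t u + ψ t u) := by
  obtain ⟨M, hM, h⟩ := h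
  obtain ⟨N, hN, h'⟩ := h'
  exact ⟨M + N, add_nonneg hM hN, fun t => by simpa [add_mul] using (h t).add (h' t)⟩

lemma sub (h : UnifDecay σ ω φ) (h' : UnifDecay σ ω ψ) :
    UnifDecay σ ω (fun t u => φ t u - ψ t u) := by
  obtain ⟨M, hM, h⟩ := h
  obtain ⟨N, hN, h'⟩ := h'
  exact ⟨M + N, add_nonneg hM hN, fun t => by simpa [add_mul] using (h t).sub (h' t)⟩

lemma congr (h : UnifDecay σ ω φ) (he : ∀ t u, ψ t u = φ t u) : UnifDecay σ ω ψ := by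
  obtain rfl : ψ = φ := by ext; exact he _ _
  exact h

lemma continuous (h : UnifDecay σ ω φ) (t : T) : Continuous (φ t) := by
  obtain ⟨M, _, h⟩ := h
  exact Complex.continuous_re.comp (h t).1

end UnifDecay

lemma HasCoeffBound.unifWiener_apply {n : ℕ} {G : ℤ → ℝ} (hG0 : ∀ k, 0 ≤ G k)
    (hG : Summable fun k => G k * weight σ k) {P : T → ℝ → EuclideanSpace ℝ (Fin n)}
    (h : ∀ t, HasCoeffBound G (P t)) (i : Fin n) : UnifWiener σ (fun t u => P t u i) :=
  ⟨∑' k, G k * weight σ k, tsum_nonneg fun k => mul_nonneg (hG0 k) (weight_pos _ _).le,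
    fun t => (h t i).wienerNormLE hG⟩

/-! ### Powers of families bounded away from zero -/

lemma exists_powerSeries_one_sub_rpow_sub_one (α : ℝ) : ∃ b : ℕ → ℝ,
    (∀ R : ℝ, 0 ≤ R → R < 1 → Summable fun k => |b k| * R ^ k) ∧
      ∀ y : ℝ, |y| < 1 → (1 - y) ^ (-α) - 1 = (∑' k, b k * y ^ k) * y := by
  obtain ⟨b, hb, hbs⟩ := exists_powerSeries_one_sub_rpow α
  have hb0 : b 0 = 1 := by
    have hzero : HasSum (fun k => b k * (0 : ℝ) ^ k) (b 0) := by
      simpa using hasSum_single (f := fun k => b k * (0 : ℝ) ^ k) 0 fun k hk => by simp [hk]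
    simpa using hzero.unique (hbs 0 (by simp))
  refine ⟨fun k => b (k + 1), fun R hR hR1 => ?_, fun y hy => ?_⟩
  · obtain ⟨R', hRR', hR'1⟩ := exists_between hR1
    have hR'0 : 0 < R' := hR.trans_lt hRR'
    refine (((summable_nat_add_iff 1).2 (hb R' hR'0.le hR'1)).mul_left R'⁻¹).of_nonneg_of_le
      (fun k => by positivity) fun k => ?_
    rw [pow_succ]
    field_simp
    gcongr
  · have htail := (hasSum_nat_add_iff' 1).2 (hbs y hy)
    simp only [Finset.range_one, Finset.sum_singleton, hb0, pow_zero, mul_one] at htail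
    rw [← htail.tsum_eq, ← tsum_mul_right]
    simp only [pow_succ, mul_assoc]

section Calculus

variable {ι : Type} [Countable ι] {C : ι → ℝ} {m : ι → ℤ} {ρ : ℝ} {y : T → ℝ → ℝ}

lemma HasMajorant.unifWiener_powerSeries (hσ : 0 ≤ σ) (hρ0 : 0 ≤ ρ) (hρ : ρ < 1)
    (hC : Summable fun i => C i * weight σ (m i))
    (hy : ∀ t, HasMajorant C m (fun u => (y t u : ℂ))) (hyρ : ∀ t u, |y t u| ≤ ρ) {b : ℕ → ℝ}
    (hb : ∀ R : ℝ, 0 ≤ R → R < 1 → Summable fun k => |b k| * R ^ k) :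
    UnifWiener σ (fun t u => ∑' k, b k * y t u ^ k) := by
  obtain ⟨M, hM⟩ := exists_wienerNormLE_powerSeries hσ hρ0 hρ hC hb
  have hsum : ∀ t u, Summable fun k => b k * y t u ^ k := fun t u =>
    Summable.of_norm (by simpa using hb |y t u| (abs_nonneg _) ((hyρ t u).trans_lt hρ))
  refine ⟨max M 0, le_max_right _ _, fun t =>
    (hM _ (hy t) (fun u => by simpa using hyρ t u) _ fun u => ?_).mono (le_max_left _ _)⟩
  exact_mod_cast (hsum t u).hasSum

lemma HasMajorant.unifWiener_one_sub_rpow (hσ : 0 ≤ σ) (hρ0 : 0 ≤ ρ) (hρ : ρ < 1)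
    (hC : Summable fun i => C i * weight σ (m i))
    (hy : ∀ t, HasMajorant C m (fun u => (y t u : ℂ))) (hyρ : ∀ t u, |y t u| ≤ ρ) (α : ℝ) :
    UnifWiener σ (fun t u => (1 - y t u) ^ (-α)) := by
  obtain ⟨b, hb, hbs⟩ := exists_powerSeries_one_sub_rpow α
  have heq : ∀ t u, (1 - y t u) ^ (-α) = ∑' k, b k * y t u ^ k := fun t u =>
    (hbs _ ((hyρ t u).trans_lt hρ)).tsum_eq.symm
  simpa only [heq] using HasMajorant.unifWiener_powerSeries hσ hρ0 hρ hC hy hyρ hb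

lemma UnifDecay.one_sub_rpow_sub_one (hσ : 0 ≤ σ) (hρ0 : 0 ≤ ρ) (hρ : ρ < 1)
    (hC : Summable fun i => C i * weight σ (m i))
    (hy : ∀ t, HasMajorant C m (fun u => (y t u : ℂ))) (hyρ : ∀ t u, |y t u| ≤ ρ) (α : ℝ)
    (h : UnifDecay σ ω y) : UnifDecay σ ω (fun t u => (1 - y t u) ^ (-α) - 1) := by
  obtain ⟨b, hb, hbs⟩ := exists_powerSeries_one_sub_rpow_sub_one α
  exact ((HasMajorant.unifWiener_powerSeries hσ hρ0 hρ hC hy hyρ hb).mul_unifDecay hσ h).congr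
    fun t u => hbs _ ((hyρ t u).trans_lt hρ)

end Calculus

end Families

/-! ### Functionals of negative order -/

section Functionals

variable {n : ℕ} {T : Type*} {σ : ℝ} {ω : T → ℝ}
  {F F' : T → (ℝ → EuclideanSpace ℝ (Fin n)) → ℝ → ℝ}

/-- A family of densities `F t g` on the circle whose means are bounded by `O(ω t)` times the
`ℓ¹`-norm of the coefficients of `g` with weight `-σ`. -/
def UnifDualBound (σ : ℝ) (ω : T → ℝ) (F : T → (ℝ → EuclideanSpace ℝ (Fin n)) → ℝ → ℝ) : Prop :=
  ∃ K, 0 ≤ K ∧ ∀ t (H : ℤ → ℝ) g, HasCoeffBound H g → Summable H →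
    (Summable fun k => H k * weight (-σ) k) →
    Continuous (F t g) ∧ |∫ u in (0 : ℝ)..1, F t g u| ≤ K * ω t * ∑' k, H k * weight (-σ) k

lemma UnifDualBound.add (h : UnifDualBound σ ω F) (h' : UnifDualBound σ ω F') :
    UnifDualBound σ ω (fun t g u => F t g u + F' t g u) := by
  obtain ⟨K, hK, h⟩ := h
  obtain ⟨K', hK', h'⟩ := h'
  refine ⟨K + K', add_nonneg hK hK', fun t H g hg hH hs => ?_⟩
  obtain ⟨hc, hb⟩ := h t H g hg hH hs
  obtain ⟨hc', hb'⟩ := h' t H g hg hH hs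
  refine ⟨hc.add hc', ?_⟩
  rw [intervalIntegral.integral_add (hc.intervalIntegrable _ _) (hc'.intervalIntegrable _ _),
    add_mul, add_mul]
  exact (abs_add_le _ _).trans (add_le_add hb hb')

lemma UnifDualBound.congr (h : UnifDualBound σ ω F) (hF : ∀ t g u, F t g u = F' t g u) :
    UnifDualBound σ ω F' := by
  obtain rfl : F = F' := by ext; apply hF
  exact h

lemma UnifDecay.dualBound_apply {φ : T → ℝ → ℝ} (h : UnifDecay σ ω φ) (l r : T → ℝ) (i : Fin n) :
    UnifDualBound (n := n) σ ω (fun t g u => φ t u * segAvg g u (l t) (r t) i) := by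
  have hφc := h.continuous
  obtain ⟨K, hK, hb⟩ := h
  refine ⟨K, hK, fun t H g hg hH hs => ?_⟩
  have hP := hg.average hH (l t) (r t)
  have hPc := hP.continuous hH
  refine ⟨(hφc t).mul (by fun_prop), ?_⟩
  have hle := (hb t).norm_integral_mul_le (hP i) hH hs
  rw [← Real.norm_eq_abs, ← Complex.norm_real, ← intervalIntegral.integral_ofReal]
  simpa using hle

lemma UnifDualBound.finset_sum {κ : Type*} (s : Finset κ)
    {F : κ → T → (ℝ → EuclideanSpace ℝ (Fin n)) → ℝ → ℝ}
    (h : ∀ i, UnifDualBound σ ω (F i)) :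
    UnifDualBound σ ω (fun t g u => ∑ i ∈ s, F i t g u) := by
  classical
  induction s using Finset.induction_on with
  | empty => exact ⟨0, le_rfl, fun _ _ _ _ _ _ => by simp [continuous_const]⟩
  | insert i s hi ih => simpa only [Finset.sum_insert hi] using (h i).add ih

lemma UnifDecay.dualBound_inner (hσ : 0 ≤ σ) {φ : T → ℝ → ℝ} (h : UnifDecay σ ω φ)
    {P : T → ℝ → EuclideanSpace ℝ (Fin n)} (hP : ∀ i, UnifWiener σ (fun t u => P t u i))
    (l r : T → ℝ) :
    UnifDualBound σ ω (fun t g u => φ t u * inner ℝ (P t u) (segAvg g u (l t) (r t))) := by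
  have hinner : ∀ (t : T) (g : ℝ → EuclideanSpace ℝ (Fin n)) (u : ℝ),
      φ t u * inner ℝ (P t u) (segAvg g u (l t) (r t)) =
        ∑ i, P t u i * φ t u * segAvg g u (l t) (r t) i := fun t g u => by
    simp only [PiLp.inner_apply, Finset.mul_sum, RCLike.inner_apply, conj_trivial]
    exact Finset.sum_congr rfl fun i _ => by ring
  simpa only [hinner] using
    UnifDualBound.finset_sum Finset.univ fun i => ((hP i).mul_unifDecay hσ h).dualBound_apply l r i

end Functionals

/-! ### The energy density and its first variation -/

section Density

variable {E : Type*} [NormedAddCommGroup E] [InnerProductSpace ℝ E]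

/-- The squared area of the parallelogram spanned by `a` and `b`. -/
def wedgeSq (a b : E) : ℝ := ‖a‖ ^ 2 * ‖b‖ ^ 2 - inner ℝ a b ^ 2

/-- The derivative of `wedgeSq` at `(a, b)` in direction `(A, B)`. -/
def wedgeSqDeriv (a b A B : E) : ℝ :=
  2 * inner ℝ a A * ‖b‖ ^ 2 + 2 * ‖a‖ ^ 2 * inner ℝ b B
    - 2 * inner ℝ a b * (inner ℝ a B + inner ℝ b A)

/-- The difference of the mean slopes over `[u, u + w]` and `[u, u + v]` of the primitive of `f`. -/
def segAvgDiff (f : ℝ → E) (u v w : ℝ) : E := segAvg f u 0 w - segAvg f u 0 v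

/-- The product of the `-p`-th powers of the chord-arc quotients at `u`, `u + v`, `u + w`. -/
def chordFactor (p : ℝ) (f : ℝ → E) (u v w : ℝ) : ℝ :=
  (‖segAvg f u 0 w‖ ^ 2) ^ (-(p / 2)) * (‖segAvg f u 0 v‖ ^ 2) ^ (-(p / 2))
    * (‖segAvg f u v w‖ ^ 2) ^ (-(p / 2))

/-- The logarithmic derivative, in direction `g`, of the speeds times the chord factor. -/
def logDensityDeriv (p : ℝ) (f g : ℝ → E) (u v w : ℝ) : ℝ :=
  inner ℝ (f u) (g u) / ‖f u‖ ^ 2 + inner ℝ (f (u + v)) (g (u + v)) / ‖f (u + v)‖ ^ 2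
    + inner ℝ (f (u + w)) (g (u + w)) / ‖f (u + w)‖ ^ 2
    - p * (inner ℝ (segAvg f u 0 w) (segAvg g u 0 w) / ‖segAvg f u 0 w‖ ^ 2
      + inner ℝ (segAvg f u 0 v) (segAvg g u 0 v) / ‖segAvg f u 0 v‖ ^ 2
      + inner ℝ (segAvg f u v w) (segAvg g u v w) / ‖segAvg f u v w‖ ^ 2)

/-- The energy density, at the points `u`, `u + v`, `u + w`, of a curve with derivative `f`,
divided by the singular kernel of `Qform`. -/
def density (p : ℝ) (f : ℝ → E) (u v w : ℝ) : ℝ :=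
  ‖f u‖ * ‖f (u + v)‖ * ‖f (u + w)‖ * chordFactor p f u v w
    * wedgeSq (segAvg f u 0 w) (segAvg f u 0 v)

/-- The first variation of `density` in direction `g`. -/
def densityDeriv (p : ℝ) (f g : ℝ → E) (u v w : ℝ) : ℝ :=
  ‖f u‖ * ‖f (u + v)‖ * ‖f (u + w)‖ * chordFactor p f u v w
    * (wedgeSqDeriv (segAvg f u 0 w) (segAvg f u 0 v) (segAvg g u 0 w) (segAvg g u 0 v)
      + wedgeSq (segAvg f u 0 w) (segAvg f u 0 v) * logDensityDeriv p f g u v w)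

lemma wedgeSq_eq (a b : E) :
    wedgeSq a b = ‖a - b‖ ^ 2 * ((‖a‖ ^ 2 + ‖b‖ ^ 2) / 2 - ‖a - b‖ ^ 2 / 4)
      - (‖a‖ ^ 2 - ‖b‖ ^ 2) ^ 2 / 4 := by
  rw [wedgeSq, norm_sub_sq_real]; ring

lemma wedgeSqDeriv_eq (a b A B : E) :
    wedgeSqDeriv a b A B = inner ℝ a A * (‖b‖ ^ 2 - ‖a‖ ^ 2 + ‖a - b‖ ^ 2)
      + inner ℝ b B * (‖a‖ ^ 2 - ‖b‖ ^ 2 + ‖a - b‖ ^ 2)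
      + (‖a‖ ^ 2 + ‖b‖ ^ 2 - ‖a - b‖ ^ 2) * inner ℝ (a - b) (A - B) := by
  rw [wedgeSqDeriv, norm_sub_sq_real]
  simp only [inner_sub_left, inner_sub_right]
  ring

variable [CompleteSpace E]

-- Every scalar factor in front of an inner product is quadratically small for close points.
lemma densityDeriv_sub_inner (p : ℝ) (f g : ℝ → E) (hf1 : ∀ u, ‖f u‖ = 1) (u v w : ℝ) :
    densityDeriv p f g u v w / 2 - inner ℝ (segAvgDiff f u v w) (segAvgDiff g u v w) =
    let a := segAvg f u 0 w
    let b := segAvg f u 0 v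
    let d := segAvg f u v w
    let D := segAvgDiff f u v w
    let Z := 1 / 2 * chordFactor p f u v w
    Z * (‖b‖ ^ 2 - ‖a‖ ^ 2 + ‖D‖ ^ 2 - p * (‖a‖ ^ 2) ^ (-1 : ℝ) * wedgeSq a b)
        * inner ℝ a (segAvg g u 0 w)
      + Z * (‖a‖ ^ 2 - ‖b‖ ^ 2 + ‖D‖ ^ 2 - p * (‖b‖ ^ 2) ^ (-1 : ℝ) * wedgeSq a b)
        * inner ℝ b (segAvg g u 0 v)
      + Z * (-p * (‖d‖ ^ 2) ^ (-1 : ℝ) * wedgeSq a b) * inner ℝ d (segAvg g u v w)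
      + Z * wedgeSq a b * inner ℝ (f u) (segAvg g u 0 0)
      + Z * wedgeSq a b * inner ℝ (f (u + v)) (segAvg g u v v)
      + Z * wedgeSq a b * inner ℝ (f (u + w)) (segAvg g u w w)
      + (Z * (‖a‖ ^ 2 + ‖b‖ ^ 2 - ‖D‖ ^ 2) - 1) * inner ℝ D (segAvg g u 0 w)
      + (1 - Z * (‖a‖ ^ 2 + ‖b‖ ^ 2 - ‖D‖ ^ 2)) * inner ℝ D (segAvg g u 0 v) := by
  simp only [densityDeriv, wedgeSqDeriv_eq, logDensityDeriv, segAvgDiff, hf1, Real.rpow_neg_one,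
    segAvg_self, add_zero, inner_sub_right]
  ring

end Density

/-! ### The first variation up to its leading form -/

/-- `f` has chord-arc constant at least `m`: its means over segments of length up to `2/3`, the
length occurring for pairs in `domainD`, have norm at least `m`. -/
def ChordArcGe {E : Type*} [NormedAddCommGroup E] [NormedSpace ℝ E] (m : ℝ) (f : ℝ → E) : Prop :=
  ∀ u x y, |y - x| ≤ 2 / 3 → m ≤ ‖segAvg f u x y‖

/-- A unit tangent with coefficients dominated by a sequence of Sobolev regularity `s` and with
positive chord-arc constant `m`. -/
structure RegularTangent {n : ℕ} (s m : ℝ) (G : ℤ → ℝ) (f : ℝ → EuclideanSpace ℝ (Fin n)) :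
    Prop where
  sobolev : SobolevSeq s G
  coeff : HasCoeffBound G f
  norm_eq_one : ∀ u, ‖f u‖ = 1
  pos : 0 < m
  chordArc : ChordArcGe m f

section Tangent

variable {n : ℕ} {T : Type*} {s σ m : ℝ} {G : ℤ → ℝ} {f : ℝ → EuclideanSpace ℝ (Fin n)}

lemma RegularTangent.mono (h : RegularTangent s m G f) (hst : σ ≤ s) : RegularTangent σ m G f :=
  { h with sobolev := h.sobolev.mono hst }

lemma RegularTangent.le_one (h : RegularTangent s m G f) : m ≤ 1 := by
  simpa [segAvg_self, h.norm_eq_one] using h.chordArc 0 0 0 (by norm_num)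

lemma RegularTangent.abs_one_sub_norm_segAvg_sq_le (h : RegularTangent s m G f) (u : ℝ) {x y : ℝ}
    (hxy : |y - x| ≤ 2 / 3) : |1 - ‖segAvg f u x y‖ ^ 2| ≤ 1 - m ^ 2 := by
  have hle := norm_segAvg_le (fun u => (h.norm_eq_one u).le) u x y
  have hge := h.chordArc u x y hxy
  rw [abs_of_nonneg (by nlinarith [norm_nonneg (segAvg f u x y)])]
  nlinarith [h.pos]

lemma RegularTangent.one_sub_sq_mem (h : RegularTangent s m G f) :
    0 ≤ 1 - m ^ 2 ∧ 1 - m ^ 2 < 1 :=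
  ⟨by nlinarith [h.pos, h.le_one], by nlinarith [h.pos]⟩

lemma HasCoeffBound.unifWiener_segAvg_apply (h : HasCoeffBound G f) (hG : SobolevSeq s G)
    (hσ : 0 ≤ σ) (hs : σ + 1 / 2 < s) (l r : T → ℝ) (i : Fin n) :
    UnifWiener σ (fun t u => segAvg f u (l t) (r t) i) :=
  HasCoeffBound.unifWiener_apply hG.nonneg (hG.summable_mul_weight hs)
    (fun _ => h.average (hG.summable (by linarith)) _ _) i

lemma HasCoeffBound.unifDecay_norm_segAvgDiff_sq (h : HasCoeffBound G f) (hG : SobolevSeq s G)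
    (hσ : 0 ≤ σ) (hs : σ + 1 / 2 < s) {v w : T → ℝ} (hvw : ∀ t, v t ≤ w t) :
    UnifDecay σ (fun t => modulusSq σ G (w t - v t))
      (fun t u => ‖segAvgDiff f u (v t) (w t)‖ ^ 2) := by
  refine ⟨n, n.cast_nonneg, fun t => h.coeffDecay_norm_segAvg_sub_sq hσ hG.nonneg
    (hG.summable (by linarith)) (hG.mono (by linarith)).summable_sq fun θ hθ => ?_⟩
  have hdiff : 0 + θ * (w t - 0) - (0 + θ * (v t - 0)) = θ * (w t - v t) := by ring
  have hnn := sub_nonneg.2 (hvw t)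
  rw [hdiff, abs_of_nonneg (mul_nonneg hθ.1 hnn)]
  exact mul_le_of_le_one_left hnn hθ.2

namespace RegularTangent

lemma unifDecay_one_sub_norm_segAvg_sq (h : RegularTangent s m G f) (hσ : 0 ≤ σ)
    (hs : σ + 1 / 2 < s) {l r ρ : T → ℝ} (hρ : ∀ t, |r t - l t| ≤ ρ t) :
    UnifDecay σ (fun t => modulusSq σ G (ρ t)) (fun t u => 1 - ‖segAvg f u (l t) (r t)‖ ^ 2) :=
  ⟨n, n.cast_nonneg, fun t => h.coeff.coeffDecay_one_sub_norm_segAvg_sq hσ h.sobolev.nonneg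
    (h.sobolev.summable (by linarith)) (h.sobolev.mono (by linarith)).summable_sq
    h.norm_eq_one (hρ t)⟩

lemma hasMajorant_one_sub_norm_segAvg_sq (h : RegularTangent s m G f) (hs : 1 / 2 < s)
    (x y : ℝ) :
    HasMajorant (defectCoef n G) (defectFreq n)
      (fun u => ((1 - ‖segAvg f u x y‖ ^ 2 : ℝ) : ℂ)) :=
  (h.coeff.average (h.sobolev.summable hs) x y).hasMajorant_one_sub_norm_sq h.sobolev.nonneg
    (h.sobolev.summable hs)

lemma unifWiener_norm_segAvg_sq_rpow (h : RegularTangent s m G f) (hσ : 0 ≤ σ)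
    (hs : σ + 1 / 2 < s) {l r : T → ℝ} (hlr : ∀ t, |r t - l t| ≤ 2 / 3) (α : ℝ) :
    UnifWiener σ (fun t u => (‖segAvg f u (l t) (r t)‖ ^ 2) ^ (-α)) := by
  simpa using HasMajorant.unifWiener_one_sub_rpow hσ h.one_sub_sq_mem.1 h.one_sub_sq_mem.2
    (summable_defectCoef hσ h.sobolev.nonneg (h.sobolev.summable_mul_weight hs))
    (fun t => h.hasMajorant_one_sub_norm_segAvg_sq (by linarith) (l t) (r t))
    (fun t u => h.abs_one_sub_norm_segAvg_sq_le u (hlr t)) α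

lemma unifDecay_norm_segAvg_sq_rpow_sub_one (h : RegularTangent s m G f) (hσ : 0 ≤ σ)
    (hs : σ + 1 / 2 < s) {l r ρ : T → ℝ} (hlr : ∀ t, |r t - l t| ≤ 2 / 3)
    (hρ : ∀ t, |r t - l t| ≤ ρ t) (α : ℝ) :
    UnifDecay σ (fun t => modulusSq σ G (ρ t))
      (fun t u => (‖segAvg f u (l t) (r t)‖ ^ 2) ^ (-α) - 1) := by
  simpa using (h.unifDecay_one_sub_norm_segAvg_sq hσ hs hρ).one_sub_rpow_sub_one hσ
    h.one_sub_sq_mem.1 h.one_sub_sq_mem.2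
    (summable_defectCoef hσ h.sobolev.nonneg (h.sobolev.summable_mul_weight hs))
    (fun t => h.hasMajorant_one_sub_norm_segAvg_sq (by linarith) (l t) (r t))
    (fun t u => h.abs_one_sub_norm_segAvg_sq_le u (hlr t)) α

end RegularTangent

end Tangent

lemma domainD_bounds {x : ℝ × ℝ} (hx : x ∈ domainD) :
    x.1 < 0 ∧ 0 < x.2 ∧ |x.1 - 0| ≤ 2 / 3 ∧ |x.2 - 0| ≤ 2 / 3 ∧ |x.2 - x.1| ≤ 2 / 3 := by
  obtain ⟨⟨h1, h2⟩, ⟨h3, h4⟩, h5, h6⟩ := hx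
  refine ⟨h2, h3, ?_, ?_, ?_⟩ <;> exact abs_le.2 ⟨by linarith, by linarith⟩

/-- The modulus of continuity at the length of the parameter interval of a pair in `domainD`. -/
def pairModulus (σ : ℝ) (G : ℤ → ℝ) (x : domainD) : ℝ := modulusSq σ G (x.1.2 - x.1.1)

namespace RegularTangent

variable {n : ℕ} {s σ m : ℝ} {G : ℤ → ℝ} {f : ℝ → EuclideanSpace ℝ (Fin n)}

lemma unifDecay_defect_right (h : RegularTangent s m G f) (hσ : 0 ≤ σ) (hs : σ + 1 / 2 < s) :
    UnifDecay σ (pairModulus σ G) (fun x u => 1 - ‖segAvg f u 0 x.1.2‖ ^ 2) :=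
  h.unifDecay_one_sub_norm_segAvg_sq hσ hs fun ⟨x, hx⟩ => by
    obtain ⟨h1, h2, -⟩ := domainD_bounds hx
    rw [sub_zero, abs_of_pos h2]; linarith

lemma unifDecay_defect_left (h : RegularTangent s m G f) (hσ : 0 ≤ σ) (hs : σ + 1 / 2 < s) :
    UnifDecay σ (pairModulus σ G) (fun x u => 1 - ‖segAvg f u 0 x.1.1‖ ^ 2) :=
  h.unifDecay_one_sub_norm_segAvg_sq hσ hs fun ⟨x, hx⟩ => by
    obtain ⟨h1, h2, -⟩ := domainD_bounds hx
    rw [sub_zero, abs_of_neg h1]; linarith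

lemma unifDecay_norm_segAvgDiff_sq (h : RegularTangent s m G f) (hσ : 0 ≤ σ)
    (hs : σ + 1 / 2 < s) :
    UnifDecay σ (pairModulus σ G) (fun x u => ‖segAvgDiff f u x.1.1 x.1.2‖ ^ 2) :=
  h.coeff.unifDecay_norm_segAvgDiff_sq h.sobolev hσ hs fun x =>
    ((domainD_bounds x.2).1.trans (domainD_bounds x.2).2.1).le

lemma unifWiener_chordFactor (h : RegularTangent s m G f) (hσ : 0 ≤ σ) (hs : σ + 1 / 2 < s)
    (p : ℝ) : UnifWiener σ (fun (x : domainD) u => chordFactor p f u x.1.1 x.1.2) :=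
  ((h.unifWiener_norm_segAvg_sq_rpow hσ hs (fun x => (domainD_bounds x.2).2.2.2.1) _).mul hσ
    (h.unifWiener_norm_segAvg_sq_rpow hσ hs (fun x => (domainD_bounds x.2).2.2.1) _)).mul hσ
    (h.unifWiener_norm_segAvg_sq_rpow hσ hs (fun x => (domainD_bounds x.2).2.2.2.2) _)

-- `abc - 1 = bc (a - 1) + c (b - 1) + (c - 1)`
lemma unifDecay_chordFactor_sub_one (h : RegularTangent s m G f) (hσ : 0 ≤ σ)
    (hs : σ + 1 / 2 < s) (p : ℝ) :
    UnifDecay σ (pairModulus σ G) (fun x u => chordFactor p f u x.1.1 x.1.2 - 1) := by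
  have hb := h.unifWiener_norm_segAvg_sq_rpow (T := domainD) hσ hs
    (fun x => (domainD_bounds x.2).2.2.1) (p / 2)
  have hd := h.unifWiener_norm_segAvg_sq_rpow (T := domainD) hσ hs
    (fun x => (domainD_bounds x.2).2.2.2.2) (p / 2)
  have ha1 : UnifDecay σ (pairModulus σ G)
      (fun x u => (‖segAvg f u 0 x.1.2‖ ^ 2) ^ (-(p / 2)) - 1) :=
    h.unifDecay_norm_segAvg_sq_rpow_sub_one hσ hs (fun x => (domainD_bounds x.2).2.2.2.1)
      (fun ⟨x, hx⟩ => by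
        obtain ⟨h1, h2, -⟩ := domainD_bounds hx
        rw [sub_zero, abs_of_pos h2]; linarith) _
  have hb1 : UnifDecay σ (pairModulus σ G)
      (fun x u => (‖segAvg f u 0 x.1.1‖ ^ 2) ^ (-(p / 2)) - 1) :=
    h.unifDecay_norm_segAvg_sq_rpow_sub_one hσ hs (fun x => (domainD_bounds x.2).2.2.1)
      (fun ⟨x, hx⟩ => by
        obtain ⟨h1, h2, -⟩ := domainD_bounds hx
        rw [sub_zero, abs_of_neg h1]; linarith) _
  have hd1 : UnifDecay σ (pairModulus σ G)
      (fun x u => (‖segAvg f u x.1.1 x.1.2‖ ^ 2) ^ (-(p / 2)) - 1) :=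
    h.unifDecay_norm_segAvg_sq_rpow_sub_one hσ hs (fun x => (domainD_bounds x.2).2.2.2.2)
      (fun ⟨x, hx⟩ => by
        obtain ⟨h1, h2, -⟩ := domainD_bounds hx
        rw [abs_of_pos (by linarith)]) _
  refine ((((hb.mul hσ hd).mul_unifDecay hσ ha1).add (hd.mul_unifDecay hσ hb1)).add hd1).congr
    fun x u => ?_
  rw [chordFactor]; ring

lemma unifWiener_segAvgDiff_apply (h : RegularTangent s m G f) (hσ : 0 ≤ σ)
    (hs : σ + 1 / 2 < s) (i : Fin n) :
    UnifWiener σ (fun (x : domainD) u => segAvgDiff f u x.1.1 x.1.2 i) := by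
  have hP := fun r : domainD → ℝ =>
    h.coeff.unifWiener_segAvg_apply h.sobolev hσ hs (fun _ => 0) r i
  simpa only [segAvgDiff, PiLp.sub_apply] using (hP fun x => x.1.2).sub hσ (hP fun x => x.1.1)

lemma unifDecay_wedgeSq (h : RegularTangent s m G f) (hσ : 0 ≤ σ) (hs : σ + 1 / 2 < s) :
    UnifDecay σ (pairModulus σ G)
      (fun x u => wedgeSq (segAvg f u 0 x.1.2) (segAvg f u 0 x.1.1)) := by
  have hsq : ∀ r : domainD → ℝ, UnifWiener σ (fun x u => ‖segAvg f u 0 (r x)‖ ^ 2) := fun r =>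
    UnifWiener.norm_sq hσ (h.coeff.unifWiener_segAvg_apply h.sobolev hσ hs (fun _ => 0) r)
  have hD : UnifWiener σ (fun (x : domainD) u => ‖segAvgDiff f u x.1.1 x.1.2‖ ^ 2) :=
    UnifWiener.norm_sq hσ (h.unifWiener_segAvgDiff_apply hσ hs)
  have hquarter := UnifWiener.const (T := domainD) (σ := σ) (1 / 4)
  have hmain := (((UnifWiener.const (1 / 2)).mul hσ ((hsq fun x => x.1.2).add
    (hsq fun x => x.1.1))).sub hσ (hquarter.mul hσ hD)).mul_unifDecay hσ
      (h.unifDecay_norm_segAvgDiff_sq hσ hs)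
  have hcorr := (hquarter.mul hσ ((hsq fun x => x.1.1).sub hσ (hsq fun x => x.1.2))).mul_unifDecay
    hσ ((h.unifDecay_defect_right hσ hs).sub (h.unifDecay_defect_left hσ hs))
  refine (hmain.sub hcorr).congr fun x u => ?_
  rw [wedgeSq_eq, segAvgDiff]; ring

lemma unifDecay_mul_wedgeSq (h : RegularTangent s m G f) (hσ : 0 ≤ σ) (hs : σ + 1 / 2 < s)
    {l r : domainD → ℝ} (hlr : ∀ x, |r x - l x| ≤ 2 / 3) (c : ℝ) :
    UnifDecay σ (pairModulus σ G) (fun x u => c * (‖segAvg f u (l x) (r x)‖ ^ 2) ^ (-1 : ℝ)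
      * wedgeSq (segAvg f u 0 x.1.2) (segAvg f u 0 x.1.1)) :=
  ((UnifWiener.const c).mul hσ (h.unifWiener_norm_segAvg_sq_rpow hσ hs hlr 1)).mul_unifDecay hσ
    (h.unifDecay_wedgeSq hσ hs)

lemma unifDecay_half_chordFactor_mul_sub_one (h : RegularTangent s m G f) (hσ : 0 ≤ σ)
    (hs : σ + 1 / 2 < s) (p : ℝ) :
    UnifDecay σ (pairModulus σ G) (fun x u => 1 / 2 * chordFactor p f u x.1.1 x.1.2 *
      (‖segAvg f u 0 x.1.2‖ ^ 2 + ‖segAvg f u 0 x.1.1‖ ^ 2 - ‖segAvgDiff f u x.1.1 x.1.2‖ ^ 2)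
        - 1) := by
  have hsmall := ((h.unifDecay_defect_right hσ hs).add (h.unifDecay_defect_left hσ hs)).add
    (h.unifDecay_norm_segAvgDiff_sq hσ hs)
  refine ((h.unifDecay_chordFactor_sub_one hσ hs p).sub
    (((UnifWiener.const (1 / 2)).mul hσ (h.unifWiener_chordFactor hσ hs p)).mul_unifDecay hσ
      hsmall)).congr fun x u => ?_
  ring

lemma unifDualBound_densityDeriv_sub_inner (h : RegularTangent s m G f) (hσ : 0 ≤ σ)
    (hs : σ + 1 / 2 < s) (p : ℝ) :
    UnifDualBound σ (pairModulus σ G) (fun x g u => densityDeriv p f g u x.1.1 x.1.2 / 2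
      - inner ℝ (segAvgDiff f u x.1.1 x.1.2) (segAvgDiff g u x.1.1 x.1.2)) := by
  have hP := fun l r => h.coeff.unifWiener_segAvg_apply (T := domainD) h.sobolev hσ hs l r
  have hD := h.unifWiener_segAvgDiff_apply hσ hs
  have hZ := (UnifWiener.const (1 / 2)).mul hσ (h.unifWiener_chordFactor hσ hs p)
  have hdefect := (h.unifDecay_defect_right hσ hs).sub (h.unifDecay_defect_left hσ hs)
  have hdefect' := (h.unifDecay_defect_left hσ hs).sub (h.unifDecay_defect_right hσ hs)
  have hDsq := h.unifDecay_norm_segAvgDiff_sq hσ hs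
  have ha := hZ.mul_unifDecay hσ ((hdefect.add hDsq).sub
    (h.unifDecay_mul_wedgeSq hσ hs (fun x => (domainD_bounds x.2).2.2.2.1) p))
  have hb := hZ.mul_unifDecay hσ ((hdefect'.add hDsq).sub
    (h.unifDecay_mul_wedgeSq hσ hs (fun x => (domainD_bounds x.2).2.2.1) p))
  have hd := hZ.mul_unifDecay hσ
    (h.unifDecay_mul_wedgeSq hσ hs (fun x => (domainD_bounds x.2).2.2.2.2) (-p))
  have hE := hZ.mul_unifDecay hσ (h.unifDecay_wedgeSq hσ hs)
  have hlead := h.unifDecay_half_chordFactor_mul_sub_one hσ hs p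
  have hlead' := (UnifWiener.const (-1)).mul_unifDecay hσ hlead
  have hterm : ∀ {φ : domainD → ℝ → ℝ}, UnifDecay σ (pairModulus σ G) φ → ∀ l r : domainD → ℝ,
      UnifDualBound σ (pairModulus σ G) (fun x g u =>
        φ x u * inner ℝ (segAvg f u (l x) (r x)) (segAvg g u (l x) (r x))) := fun hφ l r =>
    hφ.dualBound_inner hσ (hP l r) l r
  refine ((((((((hterm ha (fun _ => 0) fun x => x.1.2).add
    (hterm hb (fun _ => 0) fun x => x.1.1)).add
    (hterm hd (fun x => x.1.1) fun x => x.1.2)).add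
    (hterm hE (fun _ => 0) fun _ => 0)).add
    (hterm hE (fun x => x.1.1) fun x => x.1.1)).add
    (hterm hE (fun x => x.1.2) fun x => x.1.2)).add
    (hlead.dualBound_inner hσ hD (fun _ => 0) fun x => x.1.2)).add
    (hlead'.dualBound_inner hσ hD (fun _ => 0) fun x => x.1.1)).congr fun x g u => ?_
  rw [densityDeriv_sub_inner p f g h.norm_eq_one]
  simp only [segAvg_self, add_zero]
  ring

end RegularTangent

end

section

/-! ### Integrability of the kernel against squared oscillations -/

/-- The singular kernel of `Qform`. -/
def mengerKernel (p : ℝ) (x : ℝ × ℝ) : ℝ := (|x.1 - x.2| ^ p * |x.1| ^ (p - 2) * |x.2| ^ (p - 2))⁻¹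

lemma mengerKernel_nonneg (p : ℝ) (x : ℝ × ℝ) : 0 ≤ mengerKernel p x := by
  unfold mengerKernel; positivity

lemma measurable_mengerKernel (p : ℝ) : Measurable (mengerKernel p) := by
  unfold mengerKernel; fun_prop

lemma measurableSet_domainD : MeasurableSet domainD := by
  unfold domainD
  simp only [mem_Ioo, ofPred_and]
  refine ((measurableSet_lt ?_ ?_).inter (measurableSet_lt ?_ ?_)).inter
    (((measurableSet_lt ?_ ?_).inter (measurableSet_lt ?_ ?_)).inter
      ((measurableSet_le ?_ ?_).inter (measurableSet_le ?_ ?_))) <;> fun_prop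

/-- The truncated power by which the kernel, multiplied by a squared oscillation of frequency
proportional to `m`, is dominated in each variable. -/
def truncPower (β m t : ℝ) : ℝ := t ^ (-β) * min 2 (m * t)

lemma measurable_truncPower (β m : ℝ) : Measurable (truncPower β m) := by
  unfold truncPower; fun_prop

lemma truncPower_nonneg {m t : ℝ} (β : ℝ) (hm : 0 ≤ m) (ht : 0 ≤ t) : 0 ≤ truncPower β m t := by
  unfold truncPower; positivity

lemma truncPower_add (β δ m : ℝ) {t : ℝ} (ht : 0 < t) :
    truncPower (β + δ) m t = t ^ (-β) * truncPower δ m t := by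
  rw [truncPower, truncPower, neg_add, Real.rpow_add ht, mul_assoc]

lemma truncPower_anti {β m t r : ℝ} (hβ : 1 < β) (hm : 0 ≤ m) (ht : 0 < t) (htr : t ≤ r) :
    truncPower β m r ≤ truncPower β m t := by
  have hmin : ∀ y : ℝ, 0 < y → truncPower β m y = min (2 * y ^ (-β)) (m * y ^ (1 - β)) :=
    fun y hy => by
      rw [truncPower, mul_comm, min_mul_of_nonneg _ _ (by positivity), mul_assoc,
        ← Real.rpow_one_add' hy.le (by linarith), ← sub_eq_add_neg]
  have hpow : ∀ {α : ℝ}, α ≤ 0 → r ^ α ≤ t ^ α := Real.rpow_le_rpow_of_nonpos ht htr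
  rw [hmin r (ht.trans_le htr), hmin t ht]
  exact min_le_min (mul_le_mul_of_nonneg_left (hpow (by linarith)) zero_le_two)
    (mul_le_mul_of_nonneg_left (hpow (by linarith)) hm)

-- `truncPower (p / 2) m` is antitone, so its square at `v + w` splits into the values at `v`, `w`.
lemma mengerKernel_mul_oscBound_sq_le {p : ℝ} (hp : 2 < p) (k : ℤ) {v w : ℝ} (hv : 0 < v)
    (hw : 0 < w) :
    mengerKernel p (-v, w) * oscBound k (w + v) ^ 2 ≤
      truncPower (3 * p / 2 - 2) (2 * Real.pi * |(k : ℝ)|) v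
        * truncPower (3 * p / 2 - 2) (2 * Real.pi * |(k : ℝ)|) w := by
  set m := 2 * Real.pi * |(k : ℝ)|
  have hm0 : 0 ≤ m := by positivity
  have hr : 0 < w + v := by positivity
  have hsq : ((w + v) ^ (-(p / 2))) ^ 2 = (w + v) ^ (-p) := by
    rw [← Real.rpow_natCast, ← Real.rpow_mul hr.le]
    push_cast
    ring_nf
  have hexp : 3 * p / 2 - 2 = (p - 2) + p / 2 := by ring
  calc mengerKernel p (-v, w) * oscBound k (w + v) ^ 2
      = v ^ (-(p - 2)) * w ^ (-(p - 2)) * (truncPower (p / 2) m (w + v)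
          * truncPower (p / 2) m (w + v)) := by
        rw [mengerKernel, ← neg_add', abs_neg, abs_neg, abs_of_pos hv, abs_of_pos hw,
          abs_of_pos (by positivity), mul_inv, mul_inv, ← Real.rpow_neg hv.le,
          ← Real.rpow_neg hw.le, add_comm v w, ← Real.rpow_neg hr.le, ← hsq, truncPower, oscBound]
        ring
    _ ≤ v ^ (-(p - 2)) * w ^ (-(p - 2)) * (truncPower (p / 2) m v * truncPower (p / 2) m w) := by
        have := truncPower_nonneg (p / 2) hm0 hr.le
        have := truncPower_nonneg (p / 2) hm0 hv.le
        gcongr <;> refine truncPower_anti (by linarith) hm0 ?_ ?_ <;> linarith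
    _ = _ := by rw [hexp, truncPower_add _ _ _ hv, truncPower_add _ _ _ hw]; ring

lemma setLIntegral_Ioc_truncPower_le {β m : ℝ} (hβ : β < 2) (hm : 0 < m) :
    ∫⁻ t in Ioc 0 m⁻¹, ENNReal.ofReal (truncPower β m t)
      ≤ ENNReal.ofReal (1 / (2 - β) * m ^ (β - 1)) := by
  have hm' : 0 < m⁻¹ := inv_pos.2 hm
  have hint : IntegrableOn (fun t : ℝ => m * t ^ (1 - β)) (Ioc 0 m⁻¹) :=
    ((intervalIntegrable_iff_integrableOn_Ioc_of_le hm'.le).1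
      (intervalIntegral.intervalIntegrable_rpow' (by linarith))).const_mul m
  calc ∫⁻ t in Ioc 0 m⁻¹, ENNReal.ofReal (truncPower β m t)
      ≤ ∫⁻ t in Ioc 0 m⁻¹, ENNReal.ofReal (m * t ^ (1 - β)) := by
        refine setLIntegral_mono' measurableSet_Ioc fun t ht => ENNReal.ofReal_le_ofReal ?_
        have ht0 : 0 < t := ht.1
        rw [truncPower, sub_eq_neg_add, Real.rpow_add_one ht0.ne', mul_left_comm]
        gcongr
        exact min_le_right _ _
    _ = ENNReal.ofReal (∫ t in (0 : ℝ)..m⁻¹, m * t ^ (1 - β)) := by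
        rw [intervalIntegral.integral_of_le hm'.le, ofReal_integral_eq_lintegral_ofReal hint]
        filter_upwards [ae_restrict_mem measurableSet_Ioc] with t ht
        exact mul_nonneg hm.le (Real.rpow_nonneg ht.1.le _)
    _ = ENNReal.ofReal (1 / (2 - β) * m ^ (β - 1)) := by
        rw [intervalIntegral.integral_const_mul, integral_rpow (Or.inl (by linarith)),
          Real.zero_rpow (by linarith), show 1 - β + 1 = 2 - β by ring, Real.inv_rpow hm.le,
          ← Real.rpow_neg hm.le, show β - 1 = 1 + -(2 - β) by ring, Real.rpow_add hm,
          Real.rpow_one]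
        ring_nf

lemma setLIntegral_Ioi_truncPower_le {β m : ℝ} (hβ : 1 < β) (hm : 0 < m) :
    ∫⁻ t in Ioi m⁻¹, ENNReal.ofReal (truncPower β m t)
      ≤ ENNReal.ofReal (2 / (β - 1) * m ^ (β - 1)) := by
  have hm' : 0 < m⁻¹ := inv_pos.2 hm
  have hint : IntegrableOn (fun t : ℝ => t ^ (-β) * 2) (Ioi m⁻¹) :=
    (integrableOn_Ioi_rpow_of_lt (by linarith) hm').mul_const 2
  calc ∫⁻ t in Ioi m⁻¹, ENNReal.ofReal (truncPower β m t)
      ≤ ∫⁻ t in Ioi m⁻¹, ENNReal.ofReal (t ^ (-β) * 2) := by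
        refine setLIntegral_mono' measurableSet_Ioi fun t ht => ENNReal.ofReal_le_ofReal ?_
        exact mul_le_mul_of_nonneg_left (min_le_left _ _) (Real.rpow_nonneg (hm'.trans ht).le _)
    _ = ENNReal.ofReal (∫ t in Ioi m⁻¹, t ^ (-β) * 2) := by
        rw [ofReal_integral_eq_lintegral_ofReal hint]
        filter_upwards [ae_restrict_mem measurableSet_Ioi] with t ht
        exact mul_nonneg (Real.rpow_nonneg (hm'.trans ht).le _) zero_le_two
    _ = ENNReal.ofReal (2 / (β - 1) * m ^ (β - 1)) := by
        rw [integral_mul_const, integral_Ioi_rpow_of_lt (by linarith) hm',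
          show -β + 1 = -(β - 1) by ring, Real.inv_rpow hm.le, ← Real.rpow_neg hm.le, neg_neg,
          neg_div_neg_eq]
        ring_nf

lemma setLIntegral_truncPower_le {β m : ℝ} (hβ : β ∈ Ioo (1 : ℝ) 2) (hm : 0 < m) :
    ∫⁻ t in Ioi (0 : ℝ), ENNReal.ofReal (truncPower β m t) ≤
      ENNReal.ofReal ((1 / (2 - β) + 2 / (β - 1)) * m ^ (β - 1)) := by
  have h1 : 0 < β - 1 := sub_pos.2 hβ.1
  have h2 : 0 < 2 - β := sub_pos.2 hβ.2
  rw [← Ioc_union_Ioi_eq_Ioi (inv_pos.2 hm).le, add_mul,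
    ENNReal.ofReal_add (by positivity) (by positivity)]
  exact (lintegral_union_le _ _ _).trans (add_le_add (setLIntegral_Ioc_truncPower_le hβ.2 hm)
    (setLIntegral_Ioi_truncPower_le hβ.1 hm))

lemma setLIntegral_domainD_le_mul {F : ℝ × ℝ → ℝ≥0∞} {φ : ℝ → ℝ≥0∞} (hφ : Measurable φ)
    (hF : ∀ v w, 0 < v → 0 < w → F (-v, w) ≤ φ v * φ w) :
    ∫⁻ x in domainD, F x ≤ (∫⁻ t in Ioi (0 : ℝ), φ t) * ∫⁻ t in Ioi (0 : ℝ), φ t := by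
  have hreflect : ∫⁻ t in Iio (0 : ℝ), φ (-t) = ∫⁻ t in Ioi (0 : ℝ), φ t := by
    simpa using (Measure.measurePreserving_neg (volume : Measure ℝ)).setLIntegral_comp_preimage
      (measurableSet_Ioi (a := (0 : ℝ))) hφ
  calc ∫⁻ x in domainD, F x ≤ ∫⁻ x in Iio (0 : ℝ) ×ˢ Ioi (0 : ℝ), φ (-x.1) * φ x.2 :=
        (setLIntegral_mono' measurableSet_domainD fun x hx => by
          simpa using hF (-x.1) x.2 (neg_pos.2 hx.1.2) hx.2.1.1).trans
          (lintegral_mono_set (s := domainD) fun x hx => ⟨hx.1.2, hx.2.1.1⟩)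
    _ = (∫⁻ t in Iio (0 : ℝ), φ (-t)) * ∫⁻ t in Ioi (0 : ℝ), φ t := by
        rw [Measure.volume_eq_prod, ← Measure.prod_restrict]
        exact lintegral_prod_mul (f := fun t => φ (-t)) (hφ.comp measurable_neg).aemeasurable
          hφ.aemeasurable
    _ = _ := by rw [hreflect]

lemma exists_setLIntegral_mengerKernel_mul_oscBound_sq_le {p : ℝ} (hp : p ∈ Ioo (2 : ℝ) (8 / 3)) :
    ∃ C, 0 ≤ C ∧ ∀ k : ℤ, ∫⁻ x in domainD,
      ENNReal.ofReal (mengerKernel p x * oscBound k (x.2 - x.1) ^ 2) ≤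
        ENNReal.ofReal (C * |(k : ℝ)| ^ (3 * p - 6)) := by
  obtain ⟨hp1, hp2⟩ := hp
  set β := 3 * p / 2 - 2 with hβdef
  have hβ : β ∈ Ioo (1 : ℝ) 2 := ⟨by linarith, by linarith⟩
  set c := 1 / (2 - β) + 2 / (β - 1)
  have hc0 : 0 ≤ c := add_nonneg (one_div_nonneg.2 (by linarith [hβ.2]))
    (div_nonneg zero_le_two (by linarith [hβ.1]))
  refine ⟨c ^ 2 * (2 * Real.pi) ^ (3 * p - 6), by positivity, fun k => ?_⟩
  rcases eq_or_ne k 0 with rfl | hk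
  · simp [oscBound]
  set m := 2 * Real.pi * |(k : ℝ)| with hm
  have hm0 : 0 < m := mul_pos Real.two_pi_pos (abs_pos.2 (Int.cast_ne_zero.2 hk))
  have hpow : m ^ (β - 1) * m ^ (β - 1) =
      (2 * Real.pi) ^ (3 * p - 6) * |(k : ℝ)| ^ (3 * p - 6) := by
    rw [← Real.rpow_add hm0, hm, ← Real.mul_rpow (by positivity) (by positivity), hβdef]
    ring_nf
  have hI := setLIntegral_truncPower_le hβ hm0
  refine (setLIntegral_domainD_le_mul (measurable_truncPower β m).ennreal_ofReal
    fun v w hv hw => ?_).trans ((mul_le_mul' hI hI).trans_eq ?_)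
  · rw [← ENNReal.ofReal_mul (truncPower_nonneg β hm0.le hv.le), sub_neg_eq_add]
    exact ENNReal.ofReal_le_ofReal (mengerKernel_mul_oscBound_sq_le hp1 k hv hw)
  · rw [← ENNReal.ofReal_mul (by positivity)]
    congr 1
    linear_combination c ^ 2 * hpow

variable {σ p : ℝ} {G : ℤ → ℝ}

lemma continuousOn_modulusSq (hG : SobolevSeq σ G) : ContinuousOn (modulusSq σ G) (Ici 0) := by
  refine continuousOn_tsum (u := fun k => 4 * (weight σ k * G k) ^ 2)
    (fun k => by unfold oscBound; fun_prop) (hG.summable_sq.mul_left 4) fun k r hr => ?_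
  rw [Real.norm_of_nonneg (sq_nonneg _)]
  calc (weight σ k * (G k * oscBound k r)) ^ 2
      = oscBound k r ^ 2 * (weight σ k * G k) ^ 2 := by ring
    _ ≤ 2 ^ 2 * (weight σ k * G k) ^ 2 := by
        gcongr
        exacts [oscBound_nonneg k hr, oscBound_le_two k r]
    _ = 4 * (weight σ k * G k) ^ 2 := by norm_num

lemma lintegral_mengerKernel_mul_modulusSq (hG : SobolevSeq σ G) :
    ∫⁻ x in domainD, ENNReal.ofReal (mengerKernel p x * modulusSq σ G (x.2 - x.1)) =
      ∑' k : ℤ, ENNReal.ofReal ((weight σ k * G k) ^ 2) *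
        ∫⁻ x in domainD, ENNReal.ofReal (mengerKernel p x * oscBound k (x.2 - x.1) ^ 2) := by
  have hmeas : ∀ k : ℤ, Measurable fun x : ℝ × ℝ =>
      ENNReal.ofReal (mengerKernel p x * oscBound k (x.2 - x.1) ^ 2) := fun k => by
    have := measurable_mengerKernel p
    unfold oscBound; fun_prop
  simp_rw [← fun k => lintegral_const_mul (μ := volume.restrict domainD)
    (ENNReal.ofReal ((weight σ k * G k) ^ 2)) (hmeas k)]
  rw [← lintegral_tsum fun k => ((hmeas k).const_mul _).aemeasurable]
  refine setLIntegral_congr_fun measurableSet_domainD fun x hx => ?_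
  have hpos : 0 ≤ x.2 - x.1 := by linarith [hx.1.2, hx.2.1.1]
  rw [modulusSq, ← tsum_mul_left, ENNReal.ofReal_tsum_of_nonneg
    (fun k => mul_nonneg (mengerKernel_nonneg p x) (sq_nonneg _))
    ((summable_modulusSq hG.summable_sq hpos).mul_left _)]
  refine tsum_congr fun k => ?_
  rw [← ENNReal.ofReal_mul (sq_nonneg _)]
  ring_nf

lemma SobolevSeq.summable_sq_mul_abs_rpow {t : ℝ} (ht : 0 ≤ t) (hG : SobolevSeq (σ + t) G) :
    Summable fun k => (weight σ k * G k) ^ 2 * |(k : ℝ)| ^ (2 * t) := by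
  refine hG.summable_sq.of_nonneg_of_le (fun k => by positivity) fun k => ?_
  calc (weight σ k * G k) ^ 2 * |(k : ℝ)| ^ (2 * t)
      ≤ (weight σ k * G k) ^ 2 * weight (2 * t) k := by
        have : |(k : ℝ)| ≤ 1 + |(k : ℝ)| := by linarith
        unfold weight
        gcongr
    _ = (weight (σ + t) k * G k) ^ 2 := by rw [← weight_sq, weight_add_exp]; ring

lemma integrableOn_mengerKernel_mul_modulusSq (hp : p ∈ Ioo (2 : ℝ) (8 / 3))
    (hG : SobolevSeq (σ + (3 * p / 2 - 3)) G) :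
    IntegrableOn (fun x => mengerKernel p x * modulusSq σ G (x.2 - x.1)) domainD := by
  have ht : 0 ≤ 3 * p / 2 - 3 := by linarith [hp.1]
  have hGσ : SobolevSeq σ G := hG.mono (by linarith)
  refine ⟨(measurable_mengerKernel p).aestronglyMeasurable.mul
    (((continuousOn_modulusSq hGσ).comp (f := fun x : ℝ × ℝ => x.2 - x.1) (by fun_prop)
      fun x hx => by simpa using (hx.1.2.trans hx.2.1.1).le).aestronglyMeasurable
      measurableSet_domainD), ?_⟩
  obtain ⟨C, hC, hk⟩ := exists_setLIntegral_mengerKernel_mul_oscBound_sq_le hp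
  rw [hasFiniteIntegral_iff_ofReal (Eventually.of_forall fun x =>
    mul_nonneg (mengerKernel_nonneg p x) (modulusSq_nonneg _ _ _)),
    lintegral_mengerKernel_mul_modulusSq hGσ]
  calc ∑' k : ℤ, ENNReal.ofReal ((weight σ k * G k) ^ 2) *
        ∫⁻ x in domainD, ENNReal.ofReal (mengerKernel p x * oscBound k (x.2 - x.1) ^ 2)
      ≤ ∑' k : ℤ, ENNReal.ofReal
          (C * ((weight σ k * G k) ^ 2 * |(k : ℝ)| ^ (2 * (3 * p / 2 - 3)))) := by
        refine ENNReal.tsum_le_tsum fun k => (mul_le_mul_right (hk k) _).trans_eq ?_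
        rw [← ENNReal.ofReal_mul (sq_nonneg _)]
        ring_nf
    _ < ∞ := by
        rw [← ENNReal.ofReal_tsum_of_nonneg (fun k => by positivity)
          ((hG.summable_sq_mul_abs_rpow ht).mul_left C)]
        exact ENNReal.ofReal_lt_top

end

section

/-! ### Pointwise bounds for the density and its first variation -/

section PointwiseBounds

variable {E : Type*} [NormedAddCommGroup E] [InnerProductSpace ℝ E] {f g : ℝ → E}
  {p m M N : ℝ}

lemma wedgeSq_nonneg (a b : E) : 0 ≤ wedgeSq a b := by
  have := abs_real_inner_le_norm a b
  rw [wedgeSq, ← mul_pow, sub_nonneg, ← sq_abs (inner ℝ a b)]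
  gcongr

lemma wedgeSq_sub_left (a b : E) : wedgeSq (a - b) b = wedgeSq a b := by
  rw [wedgeSq, wedgeSq, norm_sub_sq_real, inner_sub_left, real_inner_self_eq_norm_sq]; ring

lemma wedgeSqDeriv_sub_left (a b A B : E) :
    wedgeSqDeriv (a - b) b (A - B) B = wedgeSqDeriv a b A B := by
  simp only [wedgeSqDeriv, norm_sub_sq_real, inner_sub_left, inner_sub_right,
    real_inner_self_eq_norm_sq, real_inner_comm b a]
  ring

lemma wedgeSq_le (a b : E) : wedgeSq a b ≤ ‖a - b‖ ^ 2 * ‖b‖ ^ 2 := by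
  rw [← wedgeSq_sub_left, wedgeSq]
  exact sub_le_self _ (sq_nonneg _)

lemma abs_wedgeSqDeriv_le (a b A B : E) :
    |wedgeSqDeriv a b A B| ≤ 4 * ‖a‖ * ‖b‖ * (‖A‖ * ‖b‖ + ‖a‖ * ‖B‖) := by
  calc |wedgeSqDeriv a b A B|
      ≤ 2 * |inner ℝ a A| * ‖b‖ ^ 2 + 2 * ‖a‖ ^ 2 * |inner ℝ b B|
        + 2 * |inner ℝ a b| * (|inner ℝ a B| + |inner ℝ b A|) := by
        refine (abs_sub _ _).trans (add_le_add ((abs_add_le _ _).trans_eq ?_) ?_)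
        · simp [abs_mul]
        · simp only [abs_mul, abs_two]
          gcongr
          exact abs_add_le _ _
    _ ≤ 2 * (‖a‖ * ‖A‖) * ‖b‖ ^ 2 + 2 * ‖a‖ ^ 2 * (‖b‖ * ‖B‖)
        + 2 * (‖a‖ * ‖b‖) * (‖a‖ * ‖B‖ + ‖b‖ * ‖A‖) := by
        gcongr <;> exact abs_real_inner_le_norm _ _
    _ = 4 * ‖a‖ * ‖b‖ * (‖A‖ * ‖b‖ + ‖a‖ * ‖B‖) := by ring

lemma abs_inner_div_norm_sq_le {a A : E} (hm : 0 < m) (ha : m ≤ ‖a‖) (hA : ‖A‖ ≤ N) :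
    |inner ℝ a A / ‖a‖ ^ 2| ≤ N / m := by
  have ha0 : 0 < ‖a‖ := hm.trans_le ha
  have hN : 0 ≤ N := (norm_nonneg _).trans hA
  calc |inner ℝ a A / ‖a‖ ^ 2| ≤ ‖a‖ * N / ‖a‖ ^ 2 := by
        rw [abs_div, abs_of_nonneg (sq_nonneg ‖a‖)]
        gcongr
        exact (abs_real_inner_le_norm a A).trans (by gcongr)
    _ = N / ‖a‖ := by field_simp
    _ ≤ N / m := by gcongr

lemma chordFactor_nonneg (p : ℝ) (f : ℝ → E) (u v w : ℝ) : 0 ≤ chordFactor p f u v w := by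
  unfold chordFactor; positivity

lemma chordFactor_le (hp : 0 ≤ p) (hm : 0 < m) (h : ChordArcGe m f) (u : ℝ) {x : ℝ × ℝ}
    (hx : x ∈ domainD) : chordFactor p f u x.1 x.2 ≤ ((m ^ 2) ^ (-(p / 2))) ^ 3 := by
  obtain ⟨-, -, hv, hw, hvw⟩ := domainD_bounds hx
  have hpow : ∀ y z, |z - y| ≤ 2 / 3 →
      (‖segAvg f u y z‖ ^ 2) ^ (-(p / 2)) ≤ (m ^ 2) ^ (-(p / 2)) := fun y z hyz =>
    Real.rpow_le_rpow_of_nonpos (by positivity)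
      (pow_le_pow_left₀ hm.le (h u y z hyz) 2) (by linarith)
  calc chordFactor p f u x.1 x.2
      ≤ (m ^ 2) ^ (-(p / 2)) * (m ^ 2) ^ (-(p / 2)) * (m ^ 2) ^ (-(p / 2)) := by
        exact mul_le_mul (mul_le_mul (hpow _ _ hw) (hpow _ _ hv) (by positivity) (by positivity))
          (hpow _ _ hvw) (by positivity) (by positivity)
    _ = ((m ^ 2) ^ (-(p / 2))) ^ 3 := by ring

lemma speed_mul_chordFactor_le (hp : 0 ≤ p) (hm : 0 < m) (h : ChordArcGe m f)
    (hfM : ∀ t, ‖f t‖ ≤ M) (u : ℝ) {x : ℝ × ℝ} (hx : x ∈ domainD) :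
    ‖f u‖ * ‖f (u + x.1)‖ * ‖f (u + x.2)‖ * chordFactor p f u x.1 x.2
      ≤ M ^ 3 * ((m ^ 2) ^ (-(p / 2))) ^ 3 := by
  have hM : 0 ≤ M := (norm_nonneg _).trans (hfM 0)
  have := chordFactor_nonneg p f u x.1 x.2
  calc ‖f u‖ * ‖f (u + x.1)‖ * ‖f (u + x.2)‖ * chordFactor p f u x.1 x.2
      ≤ M * M * M * ((m ^ 2) ^ (-(p / 2))) ^ 3 := by
        gcongr
        exacts [hfM _, hfM _, hfM _, chordFactor_le hp hm h u hx]
    _ = M ^ 3 * ((m ^ 2) ^ (-(p / 2))) ^ 3 := by ring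

lemma exists_abs_density_le (hp : 0 ≤ p) (hm : 0 < m) (h : ChordArcGe m f)
    (hfM : ∀ t, ‖f t‖ ≤ M) :
    ∃ K, ∀ u, ∀ x ∈ domainD, |density p f u x.1 x.2| ≤ K * ‖segAvgDiff f u x.1 x.2‖ ^ 2 := by
  refine ⟨M ^ 3 * ((m ^ 2) ^ (-(p / 2))) ^ 3 * M ^ 2, fun u x hx => ?_⟩
  have hM : 0 ≤ M := (norm_nonneg _).trans (hfM 0)
  have hchord := chordFactor_nonneg p f u x.1 x.2
  have hwedge := wedgeSq_nonneg (segAvg f u 0 x.2) (segAvg f u 0 x.1)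
  have hb := norm_segAvg_le hfM u 0 x.1
  rw [density, abs_of_nonneg (by positivity), mul_assoc _ (M ^ 2), mul_comm (M ^ 2)]
  refine mul_le_mul (speed_mul_chordFactor_le hp hm h hfM u hx) ?_ hwedge (by positivity)
  exact (wedgeSq_le _ _).trans (mul_le_mul_of_nonneg_left (by gcongr) (sq_nonneg _))

variable [CompleteSpace E]

lemma ChordArcGe.le_norm (h : ChordArcGe m f) (u : ℝ) : m ≤ ‖f u‖ := by
  simpa [segAvg_self] using h u 0 0 (by norm_num)

lemma abs_logDensityDeriv_le (hp : 0 ≤ p) (hm : 0 < m) (h : ChordArcGe m f)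
    (hg : ∀ t, ‖g t‖ ≤ N) (u : ℝ) {x : ℝ × ℝ} (hx : x ∈ domainD) :
    |logDensityDeriv p f g u x.1 x.2| ≤ (3 + 3 * p) * (N / m) := by
  obtain ⟨-, -, hv, hw, hvw⟩ := domainD_bounds hx
  have hpoint := fun t => abs_inner_div_norm_sq_le hm (h.le_norm t) (hg t)
  have havg := fun y z (hyz : |z - y| ≤ 2 / 3) =>
    abs_inner_div_norm_sq_le hm (h u y z hyz) (norm_segAvg_le hg u y z)
  calc |logDensityDeriv p f g u x.1 x.2|
      ≤ (N / m + N / m + N / m) + p * (N / m + N / m + N / m) := by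
        refine (abs_sub _ _).trans ?_
        rw [abs_mul, abs_of_nonneg hp]
        gcongr
        · exact (abs_add_three _ _ _).trans
            (add_le_add (add_le_add (hpoint _) (hpoint _)) (hpoint _))
        · exact (abs_add_three _ _ _).trans
            (add_le_add (add_le_add (havg _ _ hw) (havg _ _ hv)) (havg _ _ hvw))
    _ = (3 + 3 * p) * (N / m) := by ring

lemma exists_abs_densityDeriv_le (hp : 0 ≤ p) (hm : 0 < m) (hM : 0 ≤ M) (hN : 0 ≤ N) :
    ∃ K, 0 ≤ K ∧ ∀ f g : ℝ → E, ChordArcGe m f → (∀ t, ‖f t‖ ≤ M) → (∀ t, ‖g t‖ ≤ N) →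
      ∀ u, ∀ x ∈ domainD, |densityDeriv p f g u x.1 x.2|
        ≤ K * (‖segAvgDiff f u x.1 x.2‖ ^ 2 + ‖segAvgDiff g u x.1 x.2‖ ^ 2) := by
  refine ⟨M ^ 3 * ((m ^ 2) ^ (-(p / 2))) ^ 3 *
    (2 * M ^ 2 + 4 * M * N + M ^ 2 * ((3 + 3 * p) * (N / m))), by positivity,
    fun f g h hf hg u x hx => ?_⟩
  set c := segAvgDiff f u x.1 x.2 with hc
  set C := segAvgDiff g u x.1 x.2 with hC
  have hb := norm_segAvg_le hf u 0 x.1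
  have hB := norm_segAvg_le hg u 0 x.1
  have hderiv : |wedgeSqDeriv (segAvg f u 0 x.2) (segAvg f u 0 x.1) (segAvg g u 0 x.2)
      (segAvg g u 0 x.1)| ≤ (2 * M ^ 2 + 4 * M * N) * (‖c‖ ^ 2 + ‖C‖ ^ 2) := by
    rw [← wedgeSqDeriv_sub_left, ← segAvgDiff, ← segAvgDiff, ← hc, ← hC]
    calc _ ≤ 4 * ‖c‖ * M * (‖C‖ * M + ‖c‖ * N) := by
          refine (abs_wedgeSqDeriv_le _ _ _ _).trans ?_
          gcongr
      _ = 2 * M ^ 2 * (2 * ‖c‖ * ‖C‖) + 4 * M * N * ‖c‖ ^ 2 := by ring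
      _ ≤ 2 * M ^ 2 * (‖c‖ ^ 2 + ‖C‖ ^ 2) + 4 * M * N * (‖c‖ ^ 2 + ‖C‖ ^ 2) := by
          gcongr
          exacts [two_mul_le_add_sq _ _, le_add_of_nonneg_right (sq_nonneg _)]
      _ = _ := by ring
  have hwedge : wedgeSq (segAvg f u 0 x.2) (segAvg f u 0 x.1)
      ≤ (‖c‖ ^ 2 + ‖C‖ ^ 2) * M ^ 2 := by
    refine (wedgeSq_le _ _).trans ?_
    rw [← segAvgDiff, ← hc]
    gcongr
    exact le_add_of_nonneg_right (sq_nonneg _)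
  have hchord := chordFactor_nonneg p f u x.1 x.2
  rw [densityDeriv, abs_mul, abs_of_nonneg (by positivity),
    mul_assoc (M ^ 3 * ((m ^ 2) ^ (-(p / 2))) ^ 3)]
  refine mul_le_mul (speed_mul_chordFactor_le hp hm h hf u hx) ((abs_add_le _ _).trans ?_)
    (abs_nonneg _) (by positivity)
  rw [abs_mul, abs_of_nonneg (wedgeSq_nonneg _ _)]
  calc _ ≤ (2 * M ^ 2 + 4 * M * N) * (‖c‖ ^ 2 + ‖C‖ ^ 2)
        + (‖c‖ ^ 2 + ‖C‖ ^ 2) * M ^ 2 * ((3 + 3 * p) * (N / m)) :=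
        add_le_add hderiv (mul_le_mul hwedge (abs_logDensityDeriv_le hp hm h hg u hx)
          (abs_nonneg _) (by positivity))
    _ = _ := by ring

end PointwiseBounds

/-! ### The density along a line of curves -/

section Line

variable {E : Type*} [NormedAddCommGroup E] [InnerProductSpace ℝ E] {f g : ℝ → E}
  {p m M N : ℝ}

lemma hasDerivAt_norm_sq_rpow {φ : ℝ → E} {φ' : E} {τ : ℝ} (q : ℝ) (h : HasDerivAt φ φ' τ)
    (h0 : φ τ ≠ 0) :
    HasDerivAt (fun t => (‖φ t‖ ^ 2) ^ q)
      ((‖φ τ‖ ^ 2) ^ q * (2 * q * (inner ℝ (φ τ) φ' / ‖φ τ‖ ^ 2))) τ := by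
  have hsq : ‖φ τ‖ ^ 2 ≠ 0 := by simpa using h0
  refine (h.norm_sq.rpow_const (p := q) (Or.inl hsq)).congr_deriv ?_
  rw [Real.rpow_sub_one hsq]
  field_simp

lemma hasDerivAt_norm {φ : ℝ → E} {φ' : E} {τ : ℝ} (h : HasDerivAt φ φ' τ) (h0 : φ τ ≠ 0) :
    HasDerivAt (fun t => ‖φ t‖) (‖φ τ‖ * (inner ℝ (φ τ) φ' / ‖φ τ‖ ^ 2)) τ := by
  simpa only [← Real.sqrt_eq_rpow, Real.sqrt_sq (norm_nonneg _), mul_one_div_cancel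
    (two_ne_zero' ℝ), one_mul] using hasDerivAt_norm_sq_rpow (1 / 2) h h0

lemma hasDerivAt_wedgeSq {φ ψ : ℝ → E} {φ' ψ' : E} {τ : ℝ} (hφ : HasDerivAt φ φ' τ)
    (hψ : HasDerivAt ψ ψ' τ) :
    HasDerivAt (fun t => wedgeSq (φ t) (ψ t)) (wedgeSqDeriv (φ τ) (ψ τ) φ' ψ') τ := by
  refine ((hφ.norm_sq.mul hψ.norm_sq).sub ((hφ.inner ℝ hψ).pow 2)).congr_deriv ?_
  rw [wedgeSqDeriv, real_inner_comm (ψ τ) φ']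
  push_cast
  ring

lemma hasDerivAt_add_smul (a A : E) (τ : ℝ) : HasDerivAt (fun t : ℝ => a + t • A) A τ := by
  simpa using ((hasDerivAt_id τ).smul_const A).const_add a

lemma segAvgDiff_add_smul (hf : Continuous f) (hg : Continuous g) (τ u v w : ℝ) :
    segAvgDiff (fun t => f t + τ • g t) u v w = segAvgDiff f u v w + τ • segAvgDiff g u v w := by
  simp only [segAvgDiff, segAvg_add_smul hf hg, smul_sub]
  abel

lemma norm_segAvgDiff_add_smul_sq_le (hf : Continuous f) (hg : Continuous g) {τ : ℝ}
    (hτ : |τ| ≤ 1) (u v w : ℝ) :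
    ‖segAvgDiff (fun t => f t + τ • g t) u v w‖ ^ 2
      ≤ 2 * (‖segAvgDiff f u v w‖ ^ 2 + ‖segAvgDiff g u v w‖ ^ 2) := by
  calc ‖segAvgDiff (fun t => f t + τ • g t) u v w‖ ^ 2
      ≤ (‖segAvgDiff f u v w‖ + ‖segAvgDiff g u v w‖) ^ 2 := by
        rw [segAvgDiff_add_smul hf hg]
        gcongr
        refine (norm_add_le _ _).trans (add_le_add_right ?_ _)
        rw [norm_smul]
        exact mul_le_of_le_one_left (norm_nonneg _) hτ
    _ ≤ _ := add_sq_le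

lemma ChordArcGe.exists_add_smul (hm : 0 < m) (h : ChordArcGe m f) (hf : Continuous f)
    (hg : Continuous g) (hgN : ∀ t, ‖g t‖ ≤ N) :
    ∃ δ ∈ Ioc (0 : ℝ) 1, ∀ τ, |τ| < δ → ChordArcGe (m / 2) fun t => f t + τ • g t := by
  have hN : 0 ≤ N := (norm_nonneg _).trans (hgN 0)
  refine ⟨min 1 (m / 2 / (N + 1)), ⟨by positivity, min_le_left _ _⟩, fun τ hτ u x y hxy => ?_⟩
  have hτN : |τ| * (N + 1) ≤ m / 2 :=
    (le_div_iff₀ (by positivity)).1 (hτ.le.trans (min_le_right _ _))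
  have hsmall : ‖τ • segAvg g u x y‖ ≤ m / 2 := by
    rw [norm_smul, Real.norm_eq_abs]
    refine le_trans ?_ hτN
    gcongr
    exact (norm_segAvg_le hgN u x y).trans (by linarith)
  rw [segAvg_add_smul hf hg]
  linarith [norm_sub_le_norm_add (segAvg f u x y) (τ • segAvg g u x y), h u x y hxy]

variable [CompleteSpace E]

lemma hasDerivAt_density (p : ℝ) (hm : 0 < m) (hf : Continuous f) (hg : Continuous g) {τ : ℝ}
    (h : ChordArcGe m fun t => f t + τ • g t) (u : ℝ) {x : ℝ × ℝ} (hx : x ∈ domainD) :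
    HasDerivAt (fun τ => density p (fun t => f t + τ • g t) u x.1 x.2)
      (densityDeriv p (fun t => f t + τ • g t) g u x.1 x.2) τ := by
  obtain ⟨-, -, hv, hw, hvw⟩ := domainD_bounds hx
  have hspeed : ∀ t, HasDerivAt (fun τ : ℝ => ‖f t + τ • g t‖)
      (‖f t + τ • g t‖ * (inner ℝ (f t + τ • g t) (g t) / ‖f t + τ • g t‖ ^ 2)) τ := fun t =>
    hasDerivAt_norm (hasDerivAt_add_smul _ _ τ) (norm_pos_iff.1 (hm.trans_le (h.le_norm t)))
  have havg : ∀ y z, HasDerivAt (fun τ => segAvg (fun t => f t + τ • g t) u y z)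
      (segAvg g u y z) τ := fun y z => by
    simpa only [segAvg_add_smul hf hg] using hasDerivAt_add_smul _ _ τ
  have hchord := fun (y z : ℝ) (hyz : |z - y| ≤ 2 / 3) =>
    hasDerivAt_norm_sq_rpow (-(p / 2)) (havg y z) (norm_pos_iff.1 (hm.trans_le (h u y z hyz)))
  refine (((((hspeed u).mul (hspeed (u + x.1))).mul (hspeed (u + x.2))).mul
    (((hchord _ _ hw).mul (hchord _ _ hv)).mul (hchord _ _ hvw))).mul
    (hasDerivAt_wedgeSq (havg _ _) (havg _ _))).congr_deriv ?_
  simp only [densityDeriv, logDensityDeriv, chordFactor, Pi.mul_apply]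
  ring

lemma exists_abs_densityDeriv_add_smul_le (hp : 0 ≤ p) (hm : 0 < m) (h : ChordArcGe m f)
    (hf : Continuous f) (hg : Continuous g) (hfM : ∀ t, ‖f t‖ ≤ M) (hgN : ∀ t, ‖g t‖ ≤ N) :
    ∃ K δ : ℝ, 0 < δ ∧ ∀ τ, |τ| < δ → ∀ u, ∀ x ∈ domainD,
      HasDerivAt (fun τ => density p (fun t => f t + τ • g t) u x.1 x.2)
        (densityDeriv p (fun t => f t + τ • g t) g u x.1 x.2) τ ∧
      |densityDeriv p (fun t => f t + τ • g t) g u x.1 x.2|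
        ≤ K * (‖segAvgDiff f u x.1 x.2‖ ^ 2 + ‖segAvgDiff g u x.1 x.2‖ ^ 2) := by
  have hM : 0 ≤ M := (norm_nonneg _).trans (hfM 0)
  have hN : 0 ≤ N := (norm_nonneg _).trans (hgN 0)
  obtain ⟨δ, ⟨hδ, hδ1⟩, hchord⟩ := h.exists_add_smul hm hf hg hgN
  obtain ⟨K, hK, hbound⟩ :=
    exists_abs_densityDeriv_le (E := E) hp (half_pos hm) (add_nonneg hM hN) hN
  refine ⟨3 * K, δ, hδ, fun τ hτ u x hx =>
    ⟨hasDerivAt_density p (half_pos hm) hf hg (hchord τ hτ) u hx, ?_⟩⟩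
  have hτ1 : |τ| ≤ 1 := hτ.le.trans hδ1
  have hsup : ∀ t, ‖f t + τ • g t‖ ≤ M + N := fun t => by
    refine (norm_add_le _ _).trans (add_le_add (hfM t) ?_)
    rw [norm_smul]
    exact (mul_le_of_le_one_left (norm_nonneg _) hτ1).trans (hgN t)
  calc _ ≤ K * (‖segAvgDiff (fun t => f t + τ • g t) u x.1 x.2‖ ^ 2
        + ‖segAvgDiff g u x.1 x.2‖ ^ 2) := hbound _ g (hchord τ hτ) hsup hgN u x hx
    _ ≤ K * (2 * (‖segAvgDiff f u x.1 x.2‖ ^ 2 + ‖segAvgDiff g u x.1 x.2‖ ^ 2)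
        + (‖segAvgDiff f u x.1 x.2‖ ^ 2 + ‖segAvgDiff g u x.1 x.2‖ ^ 2)) := by
        gcongr
        exacts [norm_segAvgDiff_add_smul_sq_le hf hg hτ1 u _ _,
          le_add_of_nonneg_left (sq_nonneg _)]
    _ = _ := by ring

end Line

/-! ### Integrability over base points and offsets -/

/-- The measure on triples `(u, v, w)` with base point `u` in `[0, 1)` and offsets `(v, w)` in
`domainD`. -/
def baseOffsetMeasure : Measure (ℝ × ℝ × ℝ) :=
  (volume.restrict (Ico (0 : ℝ) 1)).prod (volume.restrict domainD)

lemma ae_baseOffsetMeasure_mem_domainD : ∀ᵐ z ∂baseOffsetMeasure, z.2 ∈ domainD := by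
  rw [baseOffsetMeasure, Measure.prod_restrict]
  filter_upwards [ae_restrict_mem (measurableSet_Ico.prod measurableSet_domainD)] with z hz
  exact hz.2

section Measurability

variable {E : Type*} [NormedAddCommGroup E] [InnerProductSpace ℝ E] [MeasurableSpace E]
  [BorelSpace E] {f g : ℝ → E}

lemma measurable_segAvg (hf : Continuous f) {l r : ℝ × ℝ × ℝ → ℝ} (hl : Continuous l)
    (hr : Continuous r) : Measurable fun z : ℝ × ℝ × ℝ => segAvg f z.1 (l z) (r z) :=
  ((continuous_segAvg hf).comp (continuous_fst.prodMk (hl.prodMk hr))).measurable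

variable [SecondCountableTopology E]

lemma measurable_segAvgDiff (hf : Continuous f) :
    Measurable fun z : ℝ × ℝ × ℝ => segAvgDiff f z.1 z.2.1 z.2.2 :=
  (measurable_segAvg hf (by fun_prop) (by fun_prop)).sub
    (measurable_segAvg hf (by fun_prop) (by fun_prop))

lemma measurable_density (p : ℝ) (hf : Continuous f) :
    Measurable fun z : ℝ × ℝ × ℝ => density p f z.1 z.2.1 z.2.2 := by
  have ha := measurable_segAvg hf (l := fun _ => 0) (r := fun z => z.2.2) (by fun_prop)
    (by fun_prop)
  have hb := measurable_segAvg hf (l := fun _ => 0) (r := fun z => z.2.1) (by fun_prop)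
    (by fun_prop)
  have hd := measurable_segAvg hf (l := fun z => z.2.1) (r := fun z => z.2.2) (by fun_prop)
    (by fun_prop)
  have hm := hf.measurable
  unfold density chordFactor wedgeSq
  fun_prop

lemma measurable_densityDeriv (p : ℝ) (hf : Continuous f) (hg : Continuous g) :
    Measurable fun z : ℝ × ℝ × ℝ => densityDeriv p f g z.1 z.2.1 z.2.2 := by
  have hmeas : ∀ {h : ℝ → E}, Continuous h → Measurable h ∧
      (Measurable fun z : ℝ × ℝ × ℝ => segAvg h z.1 0 z.2.2) ∧
      (Measurable fun z : ℝ × ℝ × ℝ => segAvg h z.1 0 z.2.1) ∧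
      Measurable fun z : ℝ × ℝ × ℝ => segAvg h z.1 z.2.1 z.2.2 := fun hh =>
    ⟨hh.measurable, measurable_segAvg hh (by fun_prop) (by fun_prop),
      measurable_segAvg hh (by fun_prop) (by fun_prop),
      measurable_segAvg hh (by fun_prop) (by fun_prop)⟩
  obtain ⟨hf0, hfa, hfb, hfd⟩ := hmeas hf
  obtain ⟨hg0, hga, hgb, hgd⟩ := hmeas hg
  unfold densityDeriv chordFactor wedgeSq wedgeSqDeriv logDensityDeriv
  fun_prop

end Measurability

lemma CoeffDecay.integral_le {σ M : ℝ} {φ : ℝ → ℝ} (h : CoeffDecay σ M fun u => (φ u : ℂ)) :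
    ∫ u in Ico (0 : ℝ) 1, φ u ≤ M := by
  have hzero := h.2 0
  simp only [weight_zero, one_mul, modeCoeff, neg_zero, expMode_zero, mul_one,
    intervalIntegral.integral_ofReal, Complex.norm_real, Real.norm_eq_abs] at hzero
  rw [integral_Ico_eq_integral_Ioc, ← intervalIntegral.integral_of_le zero_le_one]
  exact (le_abs_self _).trans hzero

section Integrability

variable {n : ℕ} {p : ℝ} {G : ℤ → ℝ} {f : ℝ → EuclideanSpace ℝ (Fin n)}

lemma HasCoeffBound.exists_norm_le (h : HasCoeffBound G f) (hG : Summable G) :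
    ∃ M, ∀ u, ‖f u‖ ≤ M := by
  have hcoord : ∀ i u, |f u i| ≤ ∑' k, G k := fun i u => by
    obtain ⟨c, hcG, hc⟩ := h i
    have hnorm : ∀ k, ‖c k * expMode (id k) u‖ ≤ G k := fun k => by
      simpa [norm_expMode] using hcG k
    have hsum := tsum_of_norm_bounded hG.hasSum hnorm
    rwa [(hc u).tsum_eq, Complex.norm_real, Real.norm_eq_abs] at hsum
  refine ⟨√(∑ _ : Fin n, (∑' k, G k) ^ 2), fun u => ?_⟩
  rw [EuclideanSpace.norm_eq]
  gcongr with i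
  exact hcoord i u

lemma HasCoeffBound.integrable_mengerKernel_mul_norm_segAvgDiff_sq
    (hp : p ∈ Ioo (7 / 3 : ℝ) (8 / 3)) (hG : SobolevSeq (3 * p / 2 - 3) G)
    (h : HasCoeffBound G f) :
    Integrable (fun z : ℝ × ℝ × ℝ => mengerKernel p z.2 * ‖segAvgDiff f z.1 z.2.1 z.2.2‖ ^ 2)
      baseOffsetMeasure := by
  have hs : 0 + 1 / 2 < 3 * p / 2 - 3 := by linarith [hp.1]
  have hf := h.continuous (hG.summable (by linarith))
  have hdiff := measurable_segAvgDiff hf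
  have hkernel := measurable_mengerKernel p
  have hmeas : Measurable fun z : ℝ × ℝ × ℝ =>
      mengerKernel p z.2 * ‖segAvgDiff f z.1 z.2.1 z.2.2‖ ^ 2 := by fun_prop
  obtain ⟨K, -, hdecay⟩ := h.unifDecay_norm_segAvgDiff_sq (T := domainD) hG le_rfl hs
    (v := fun x => x.1.1) (w := fun x => x.1.2)
    fun x => ((domainD_bounds x.2).1.trans (domainD_bounds x.2).2.1).le
  unfold baseOffsetMeasure
  rw [integrable_prod_iff' hmeas.aestronglyMeasurable]
  refine ⟨?_, Integrable.mono' ((integrableOn_mengerKernel_mul_modulusSq (σ := 0)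
    ⟨by linarith [hp.1], hp.2⟩ (by rwa [zero_add])).const_mul K)
    hmeas.norm.aestronglyMeasurable.prod_swap.integral_prod_right' ?_⟩ <;>
  filter_upwards [ae_restrict_mem measurableSet_domainD] with x hx
  · have hcont : Continuous fun u => ((‖segAvgDiff f u x.1 x.2‖ ^ 2 : ℝ) : ℂ) :=
      (hdecay ⟨x, hx⟩).1
    exact (((Complex.continuous_re.comp hcont).integrableOn_Icc (a := 0) (b := 1)).mono_set
      Ico_subset_Icc_self).const_mul _
  · have hk := mengerKernel_nonneg p x
    rw [Real.norm_of_nonneg (integral_nonneg fun _ => norm_nonneg _)]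
    simp only [norm_mul, Real.norm_of_nonneg hk, norm_pow, norm_norm, integral_const_mul]
    rw [mul_left_comm]
    gcongr
    exact (hdecay ⟨x, hx⟩).integral_le

end Integrability

section FirstVariation

variable {n : ℕ} {p σ m : ℝ} {G H : ℤ → ℝ} {f g : ℝ → EuclideanSpace ℝ (Fin n)}

lemma integrable_mengerKernel_mul_inner_segAvgDiff (hp : p ∈ Ioo (7 / 3 : ℝ) (8 / 3))
    (hG : SobolevSeq (3 * p / 2 - 3) G) (hf : HasCoeffBound G f)
    (hH : SobolevSeq (3 * p / 2 - 3) H) (hg : HasCoeffBound H g) :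
    Integrable (fun z : ℝ × ℝ × ℝ => mengerKernel p z.2 *
      inner ℝ (segAvgDiff f z.1 z.2.1 z.2.2) (segAvgDiff g z.1 z.2.1 z.2.2))
      baseOffsetMeasure := by
  have hs : 1 / 2 < 3 * p / 2 - 3 := by linarith [hp.1]
  have hfm := measurable_segAvgDiff (hf.continuous (hG.summable hs))
  have hgm := measurable_segAvgDiff (hg.continuous (hH.summable hs))
  have hkernel := measurable_mengerKernel p
  refine Integrable.mono' ((hf.integrable_mengerKernel_mul_norm_segAvgDiff_sq hp hG).add
    (hg.integrable_mengerKernel_mul_norm_segAvgDiff_sq hp hH))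
    (Measurable.aestronglyMeasurable (by fun_prop)) (Eventually.of_forall fun z => ?_)
  rw [norm_mul, Real.norm_of_nonneg (mengerKernel_nonneg p _), Pi.add_apply, ← mul_add]
  refine mul_le_mul_of_nonneg_left ((norm_inner_le_norm _ _).trans ?_) (mengerKernel_nonneg p _)
  nlinarith [two_mul_le_add_sq ‖segAvgDiff f z.1 z.2.1 z.2.2‖ ‖segAvgDiff g z.1 z.2.1 z.2.2‖,
    sq_nonneg ‖segAvgDiff f z.1 z.2.1 z.2.2‖, sq_nonneg ‖segAvgDiff g z.1 z.2.1 z.2.2‖]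

theorem RegularTangent.hasDerivAt_integral_density (hp : p ∈ Ioo (7 / 3 : ℝ) (8 / 3))
    (h : RegularTangent (3 * p / 2 - 3) m G f) (hH : SobolevSeq (3 * p / 2 - 3) H)
    (hg : HasCoeffBound H g) :
    Integrable (fun z => mengerKernel p z.2 * densityDeriv p f g z.1 z.2.1 z.2.2)
      baseOffsetMeasure ∧
    HasDerivAt (fun τ : ℝ => ∫ z, mengerKernel p z.2 *
        density p (fun t => f t + τ • g t) z.1 z.2.1 z.2.2 ∂baseOffsetMeasure)
      (∫ z, mengerKernel p z.2 * densityDeriv p f g z.1 z.2.1 z.2.2 ∂baseOffsetMeasure) 0 := by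
  have hp0 : 0 ≤ p := by linarith [hp.1]
  have hs : 1 / 2 < 3 * p / 2 - 3 := by linarith [hp.1]
  have hfc := h.coeff.continuous (h.sobolev.summable hs)
  have hgc := hg.continuous (hH.summable hs)
  have hf1 : ∀ t, ‖f t‖ ≤ 1 := fun t => (h.norm_eq_one t).le
  obtain ⟨N, hgN⟩ := hg.exists_norm_le (hH.summable hs)
  obtain ⟨K₀, hdensity⟩ := exists_abs_density_le hp0 h.pos h.chordArc hf1
  obtain ⟨K, δ, hδ, hderiv⟩ :=
    exists_abs_densityDeriv_add_smul_le hp0 h.pos h.chordArc hfc hgc hf1 hgN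
  have hfint := h.coeff.integrable_mengerKernel_mul_norm_segAvgDiff_sq hp h.sobolev
  have hgint := hg.integrable_mengerKernel_mul_norm_segAvgDiff_sq hp hH
  have hkernel : Measurable fun z : ℝ × ℝ × ℝ => mengerKernel p z.2 :=
    (measurable_mengerKernel p).comp measurable_snd
  have habs : ∀ (x : ℝ × ℝ) {a b : ℝ}, |a| ≤ b →
      ‖mengerKernel p x * a‖ ≤ mengerKernel p x * b := fun x a b hab => by
    rw [norm_mul, Real.norm_of_nonneg (mengerKernel_nonneg p x)]
    exact mul_le_mul_of_nonneg_left hab (mengerKernel_nonneg p x)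
  have hmeas : ∀ τ : ℝ, AEStronglyMeasurable (fun z => mengerKernel p z.2 *
      density p (fun t => f t + τ • g t) z.1 z.2.1 z.2.2) baseOffsetMeasure := fun τ =>
    (hkernel.mul (measurable_density p (by fun_prop))).aestronglyMeasurable
  simpa using hasDerivAt_integral_of_dominated_loc_of_deriv_le (μ := baseOffsetMeasure)
    (F' := fun τ z => mengerKernel p z.2 *
      densityDeriv p (fun t => f t + τ • g t) g z.1 z.2.1 z.2.2)
    (Metric.ball_mem_nhds (0 : ℝ) hδ) (Eventually.of_forall hmeas)
    (Integrable.mono' (hfint.const_mul K₀) (hmeas 0) <| by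
      filter_upwards [ae_baseOffsetMeasure_mem_domainD] with z hz
      simpa [mul_left_comm K₀] using habs z.2 (hdensity z.1 z.2 hz))
    (hkernel.mul (measurable_densityDeriv p (by fun_prop) hgc)).aestronglyMeasurable
    (by filter_upwards [ae_baseOffsetMeasure_mem_domainD] with z hz τ hτ
        rw [mem_ball_zero_iff] at hτ
        exact habs z.2 (hderiv τ hτ z.1 z.2 hz).2)
    ((hfint.add hgint).const_mul K |>.congr <| Eventually.of_forall fun z => by
      simp only [Pi.add_apply]; ring)
    (by filter_upwards [ae_baseOffsetMeasure_mem_domainD] with z hz τ hτ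
        rw [mem_ball_zero_iff] at hτ
        exact ((hderiv τ hτ z.1 z.2 hz).1).const_mul _)

lemma UnifDualBound.exists_abs_integral_le {F : ℝ × ℝ → (ℝ → EuclideanSpace ℝ (Fin n)) → ℝ → ℝ}
    (hF : UnifDualBound σ (pairModulus σ G) fun x : domainD => F x)
    (hp : p ∈ Ioo (2 : ℝ) (8 / 3)) (hG : SobolevSeq (σ + (3 * p / 2 - 3)) G) :
    ∃ C, 0 ≤ C ∧ ∀ (H : ℤ → ℝ) g, HasCoeffBound H g → Summable H →
      (Summable fun k => H k * weight (-σ) k) →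
      Integrable (fun z => mengerKernel p z.2 * F z.2 g z.1) baseOffsetMeasure →
      |∫ z, mengerKernel p z.2 * F z.2 g z.1 ∂baseOffsetMeasure|
        ≤ C * ∑' k, H k * weight (-σ) k := by
  obtain ⟨K, hK, hbound⟩ := hF
  refine ⟨K * ∫ x in domainD, mengerKernel p x * modulusSq σ G (x.2 - x.1), mul_nonneg hK
    (integral_nonneg fun x => mul_nonneg (mengerKernel_nonneg p x) (modulusSq_nonneg _ _ _)),
    fun H g hg hH hHσ hint => ?_⟩
  set S := ∑' k, H k * weight (-σ) k
  have hslice : ∀ᵐ x ∂volume.restrict domainD,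
      ‖∫ u in Ico (0 : ℝ) 1, mengerKernel p x * F x g u‖
        ≤ K * S * (mengerKernel p x * modulusSq σ G (x.2 - x.1)) := by
    filter_upwards [ae_restrict_mem measurableSet_domainD] with x hx
    have hle := (hbound ⟨x, hx⟩ H g hg hH hHσ).2
    rw [intervalIntegral.integral_of_le zero_le_one, ← integral_Ico_eq_integral_Ioc] at hle
    rw [integral_const_mul, norm_mul, Real.norm_of_nonneg (mengerKernel_nonneg p x)]
    calc _ ≤ mengerKernel p x * (K * modulusSq σ G (x.2 - x.1) * S) :=
          mul_le_mul_of_nonneg_left hle (mengerKernel_nonneg p x)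
      _ = _ := by ring
  unfold baseOffsetMeasure at hint ⊢
  rw [integral_prod_symm _ hint]
  refine (norm_integral_le_of_norm_le
    ((integrableOn_mengerKernel_mul_modulusSq hp hG).const_mul (K * S)) hslice).trans_eq ?_
  rw [integral_const_mul]
  ring

theorem RegularTangent.exists_remainder_le (hp : p ∈ Ioo (7 / 3 : ℝ) (8 / 3)) (hσ : 0 ≤ σ)
    (h : RegularTangent (σ + (3 * p / 2 - 3)) m G f) :
    ∃ C, 0 ≤ C ∧ ∀ (H : ℤ → ℝ) g, SobolevSeq (3 * p / 2 - 3) H → HasCoeffBound H g →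
      |1 / 2 * ∫ z, mengerKernel p z.2 * densityDeriv p f g z.1 z.2.1 z.2.2 ∂baseOffsetMeasure
        - ∫ z, mengerKernel p z.2 * inner ℝ (segAvgDiff f z.1 z.2.1 z.2.2)
          (segAvgDiff g z.1 z.2.1 z.2.2) ∂baseOffsetMeasure| ≤
        C * ∑' k, H k * weight (-σ) k := by
  have hs : 1 / 2 < 3 * p / 2 - 3 := by linarith [hp.1]
  have h0 : RegularTangent (3 * p / 2 - 3) m G f := h.mono (by linarith)
  obtain ⟨C, hC, hbound⟩ :=
    (h.unifDualBound_densityDeriv_sub_inner hσ (by linarith) p).exists_abs_integral_le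
      (F := fun x g u => densityDeriv p f g u x.1 x.2 / 2
        - inner ℝ (segAvgDiff f u x.1 x.2) (segAvgDiff g u x.1 x.2))
      ⟨by linarith [hp.1], hp.2⟩ h.sobolev
  refine ⟨C, hC, fun H g hH hg => ?_⟩
  have hderiv := (h0.hasDerivAt_integral_density hp hH hg).1.const_mul (1 / 2)
  have hinner := integrable_mengerKernel_mul_inner_segAvgDiff hp h0.sobolev h.coeff hH hg
  have hsplit : ∀ z : ℝ × ℝ × ℝ, 1 / 2 * (mengerKernel p z.2 * densityDeriv p f g z.1 z.2.1 z.2.2)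
      - mengerKernel p z.2 * inner ℝ (segAvgDiff f z.1 z.2.1 z.2.2) (segAvgDiff g z.1 z.2.1 z.2.2)
      = mengerKernel p z.2 * (densityDeriv p f g z.1 z.2.1 z.2.2 / 2
        - inner ℝ (segAvgDiff f z.1 z.2.1 z.2.2) (segAvgDiff g z.1 z.2.1 z.2.2)) :=
    fun z => by ring
  have hint := hderiv.sub hinner
  rw [← integral_const_mul, ← integral_sub hderiv hinner]
  simp only [Pi.sub_def, hsplit] at hint ⊢
  exact hbound H g hg (hH.summable hs) (hH.summable_mul_weight (by linarith)) hint

end FirstVariation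

end

section

/-! ### Fourier series of a curve and of its derivative -/

section FourierSeries

variable {φ : ℝ → ℂ}

lemma hasTrigSeries_modeCoeff (hφ : Continuous φ) (hper : Function.Periodic φ 1)
    (hs : Summable (modeCoeff φ)) : HasTrigSeries (modeCoeff φ) id φ := fun u => by
  let F : C(UnitAddCircle, ℂ) := ⟨hper.lift, continuous_coinduced_dom.2 hφ⟩
  have hcoeff : fourierCoeff F = modeCoeff φ := funext fun k => by
    rw [fourierCoeff_eq_intervalIntegral _ _ 0, div_one, one_smul, zero_add]
    exact intervalIntegral.integral_congr fun x _ => mul_comm _ _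
  have hsum := has_pointwise_sum_fourier_series_of_summable (hcoeff ▸ hs) (u : UnitAddCircle)
  rwa [hcoeff] at hsum

lemma HasTrigSeries.exists_hasDerivAt {ι : Type*} {c : ι → ℂ} {m : ι → ℤ} {C : ι → ℝ}
    (h : HasTrigSeries c m φ) (hC : Summable C)
    (hcC : ∀ i, 2 * Real.pi * |(m i : ℝ)| * ‖c i‖ ≤ C i) :
    ∃ φ', HasMajorant C m φ' ∧ ∀ u, HasDerivAt φ (φ' u) u := by
  set d : ι → ℂ := fun i => 2 * Real.pi * m i * Complex.I * c i
  have hd : ∀ i, ‖d i‖ ≤ C i := fun i => by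
    simpa [d, abs_of_pos Real.pi_pos] using hcC i
  have hterm : ∀ i u, ‖d i * expMode (m i) u‖ ≤ C i := fun i u => by
    rw [norm_mul, norm_expMode, mul_one]
    exact hd i
  refine ⟨fun u => ∑' i, d i * expMode (m i) u,
    ⟨d, hd, fun u => (Summable.of_norm_bounded hC fun i => hterm i u).hasSum⟩, fun u => ?_⟩
  have hderiv := hasDerivAt_tsum hC (fun i u => ((hasDerivAt_expMode (m i) u).const_mul (c i)
    |>.congr_deriv (show _ = d i * expMode (m i) u by simp only [d]; ring))) hterm
    (h 0).summable u
  simpa only [(h _).tsum_eq] using hderiv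

lemma HasMajorant.exists_hasDerivAt_real {ι : Type*} {m : ι → ℤ} {C : ι → ℝ} {ψ : ℝ → ℝ}
    {φ' : ℝ → ℂ} (h : HasMajorant C m φ') (hψ : ∀ u, HasDerivAt (fun u => (ψ u : ℂ)) (φ' u) u) :
    ∃ ψ' : ℝ → ℝ, HasMajorant C m (fun u => (ψ' u : ℂ)) ∧ ∀ u, HasDerivAt ψ (ψ' u) u := by
  have hre : ∀ u, HasDerivAt ψ (φ' u).re u := fun u =>
    Complex.reCLM.hasFDerivAt.comp_hasDerivAt u (hψ u)
  have hφ' : φ' = fun u => ((φ' u).re : ℂ) := funext fun u => (hψ u).unique (hre u).ofReal_comp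
  exact ⟨fun u => (φ' u).re, hφ' ▸ h, hre⟩

end FourierSeries

/-- Membership in the Bessel-potential space `W^{t,2}`, i.e. finiteness of `fourierSobNorm t f`. -/
def MemFourierSob {n : ℕ} (t : ℝ) (f : ℝ → EuclideanSpace ℝ (Fin n)) : Prop :=
  Summable fun k : ℤ => (1 + (k : ℝ) ^ 2) ^ t * ‖fourierCoef f k‖ ^ 2

/-- The size of the `k`-th Fourier coefficient of the derivative of `f`. -/
def derivCoeff {n : ℕ} (f : ℝ → EuclideanSpace ℝ (Fin n)) (k : ℤ) : ℝ :=
  2 * Real.pi * |(k : ℝ)| * ‖fourierCoef f k‖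

lemma weight_sq_le (t : ℝ) (k : ℤ) : weight t k ^ 2 ≤ 2 ^ |t| * (1 + (k : ℝ) ^ 2) ^ t := by
  have hcomm : weight t k ^ 2 = ((1 + |(k : ℝ)|) ^ 2) ^ t := by
    rw [weight, ← Real.rpow_mul_natCast (by positivity), ← Real.rpow_natCast (1 + _),
      ← Real.rpow_mul (by positivity), mul_comm]
  have hupper : (1 + |(k : ℝ)|) ^ 2 ≤ 2 * (1 + (k : ℝ) ^ 2) := by
    nlinarith [sq_nonneg (1 - |(k : ℝ)|), sq_abs (k : ℝ)]
  have hlower : 1 + (k : ℝ) ^ 2 ≤ (1 + |(k : ℝ)|) ^ 2 := by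
    nlinarith [abs_nonneg (k : ℝ), sq_abs (k : ℝ)]
  rw [hcomm]
  rcases le_total 0 t with ht | ht
  · rw [abs_of_nonneg ht, ← Real.mul_rpow (by norm_num) (by positivity)]
    exact Real.rpow_le_rpow (by positivity) hupper ht
  · exact (Real.rpow_le_rpow_of_nonpos (by positivity) hlower ht).trans
      (le_mul_of_one_le_left (by positivity) (Real.one_le_rpow one_le_two (abs_nonneg t)))

section DerivCoeff

variable {n : ℕ} {s t : ℝ} {f : ℝ → EuclideanSpace ℝ (Fin n)}

lemma derivCoeff_nonneg (f : ℝ → EuclideanSpace ℝ (Fin n)) (k : ℤ) : 0 ≤ derivCoeff f k := by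
  unfold derivCoeff
  positivity

lemma weight_mul_derivCoeff_sq_le (f : ℝ → EuclideanSpace ℝ (Fin n)) (t : ℝ) (k : ℤ) :
    (weight (t - 1) k * derivCoeff f k) ^ 2
      ≤ (2 * Real.pi) ^ 2 * 2 ^ |t| * ((1 + (k : ℝ) ^ 2) ^ t * ‖fourierCoef f k‖ ^ 2) := by
  have hw := (weight_pos (t - 1) k).le
  have hk : |(k : ℝ)| ≤ weight 1 k := by simp [weight]
  calc (weight (t - 1) k * derivCoeff f k) ^ 2
      = (2 * Real.pi) ^ 2 * (weight (t - 1) k * |(k : ℝ)|) ^ 2 * ‖fourierCoef f k‖ ^ 2 := by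
        rw [derivCoeff]
        ring
    _ ≤ (2 * Real.pi) ^ 2 * (weight (t - 1) k * weight 1 k) ^ 2 * ‖fourierCoef f k‖ ^ 2 := by
        gcongr
    _ = (2 * Real.pi) ^ 2 * weight t k ^ 2 * ‖fourierCoef f k‖ ^ 2 := by
        rw [← weight_add_exp, sub_add_cancel]
    _ ≤ (2 * Real.pi) ^ 2 * (2 ^ |t| * (1 + (k : ℝ) ^ 2) ^ t) * ‖fourierCoef f k‖ ^ 2 := by
        gcongr
        exact weight_sq_le t k
    _ = _ := by ring

lemma MemFourierSob.sobolevSeq_derivCoeff (h : MemFourierSob t f) (hst : s + 1 ≤ t) :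
    SobolevSeq s (derivCoeff f) :=
  SobolevSeq.mono ⟨derivCoeff_nonneg f, .of_nonneg_of_le (fun _ => sq_nonneg _)
    (weight_mul_derivCoeff_sq_le f t) (h.mul_left _)⟩ (le_sub_iff_add_le.2 hst)

lemma exists_tsum_derivCoeff_mul_weight_le (n : ℕ) (hst : s + 3 / 2 < t) :
    ∃ C, 0 ≤ C ∧ ∀ f : ℝ → EuclideanSpace ℝ (Fin n), MemFourierSob t f →
      ∑' k, derivCoeff f k * weight s k ≤ C * fourierSobNorm t f := by
  refine ⟨√(∑' k : ℤ, weight (-(t - 1 - s)) k ^ 2) * √((2 * Real.pi) ^ 2 * 2 ^ |t|),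
    by positivity, fun f h => ?_⟩
  have hsob : SobolevSeq (t - 1 - s + s) (derivCoeff f) := h.sobolevSeq_derivCoeff (by linarith)
  refine (hsob.summable_and_tsum_mul_weight_le (by linarith)).2.trans ?_
  have hnorm : √(∑' k, (weight (t - 1 - s + s) k * derivCoeff f k) ^ 2)
      ≤ √((2 * Real.pi) ^ 2 * 2 ^ |t|) * fourierSobNorm t f := by
    rw [fourierSobNorm, ← Real.sqrt_mul (by positivity), ← tsum_mul_left]
    exact Real.sqrt_le_sqrt (hsob.summable_sq.tsum_le_tsum (fun k => by
      simpa only [sub_add_cancel] using weight_mul_derivCoeff_sq_le f t k) (h.mul_left _))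
  rw [mul_assoc]
  exact mul_le_mul_of_nonneg_left hnorm (Real.sqrt_nonneg _)

lemma fourierCoef_apply (f : ℝ → EuclideanSpace ℝ (Fin n)) (k : ℤ) (i : Fin n) :
    fourierCoef f k i = modeCoeff (fun u => ((f u i : ℝ) : ℂ)) k := by
  simp only [modeCoeff, expMode_eq_exp, intervalIntegral.integral_of_le zero_le_one,
    ← integral_Ico_eq_integral_Ioc]
  refine integral_congr_ae (Eventually.of_forall fun x => ?_)
  push_cast
  ring_nf

lemma hasTrigSeries_fourierCoef (hf : Continuous f) (hper : Function.Periodic f 1)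
    (hs : Summable (derivCoeff f)) (i : Fin n) :
    HasTrigSeries (fun k => fourierCoef f k i) id fun u => ((f u i : ℝ) : ℂ) := by
  simp only [fourierCoef_apply]
  refine hasTrigSeries_modeCoeff (by fun_prop) (fun u => by simp only [hper u])
    (.of_norm_bounded_eventually hs ?_)
  filter_upwards [(Set.finite_singleton (0 : ℤ)).eventually_cofinite_notMem] with k hk
  have hk1 : (1 : ℝ) ≤ |(k : ℝ)| := by exact_mod_cast Int.one_le_abs hk
  rw [← fourierCoef_apply]
  exact (PiLp.norm_apply_le _ _).trans
    (le_mul_of_one_le_left (norm_nonneg _) (by nlinarith [Real.two_le_pi]))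

lemma exists_hasCoeffBound_hasDerivAt (hf : Continuous f) (hper : Function.Periodic f 1)
    (hs : Summable (derivCoeff f)) :
    ∃ g, HasCoeffBound (derivCoeff f) g ∧ ∀ u, HasDerivAt f (g u) u := by
  have hcoord : ∀ i, ∃ ψ : ℝ → ℝ, HasMajorant (derivCoeff f) id (fun u => (ψ u : ℂ)) ∧
      ∀ u, HasDerivAt (fun u => f u i) (ψ u) u := fun i => by
    obtain ⟨φ', hφ', hderiv⟩ := (hasTrigSeries_fourierCoef hf hper hs i).exists_hasDerivAt hs
      fun k => mul_le_mul_of_nonneg_left (PiLp.norm_apply_le _ _) (by positivity)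
    exact hφ'.exists_hasDerivAt_real hderiv
  choose ψ hψ hderiv using hcoord
  exact ⟨fun u => WithLp.toLp 2 fun i => ψ i u, hψ, fun u =>
    (PiLp.continuousLinearEquiv 2 ℝ fun _ : Fin n => ℝ).symm.hasFDerivAt.comp_hasDerivAt u
      (hasDerivAt_pi.2 fun i => hderiv i u)⟩

end DerivCoeff

namespace CurvePair

variable {n : ℕ} {γ γ' f : ℝ → EuclideanSpace ℝ (Fin n)}

lemma continuous (h : CurvePair γ γ') (hi : IntervalIntegrable γ' volume 0 1) :
    Continuous γ := by
  rw [funext h.primitive]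
  exact continuous_const.add (intervalIntegral.continuous_primitive
    (h.periodic'.intervalIntegrable₀ one_ne_zero hi) 0)

lemma ae_eq_of_hasDerivAt (h : CurvePair γ γ') (hi : IntervalIntegrable γ' volume 0 1)
    (hf : ∀ u, HasDerivAt γ (f u) u) : γ' =ᵐ[volume] f := by
  have hloc : LocallyIntegrable γ' := fun x =>
    ⟨Ioc (x - 1) (x + 1), Ioc_mem_nhds (by linarith) (by linarith),
      (h.periodic'.intervalIntegrable₀ one_ne_zero hi _ _).1⟩
  filter_upwards [LocallyIntegrable.ae_hasDerivAt_integral hloc] with x hx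
  have hγ := (hx 0).const_add (γ 0)
  rw [← funext h.primitive] at hγ
  exact hγ.unique (hf x)

end CurvePair

/-! ### The chord-arc bound -/

section Primitive

variable {E : Type*} [NormedAddCommGroup E] [NormedSpace ℝ E] {γ f : ℝ → E}

lemma segAvg_eq_shift (f : ℝ → E) (u x y : ℝ) : segAvg f u x y = segAvg f (u + x) 0 (y - x) := by
  simp only [segAvg, zero_add, sub_zero, add_assoc]

lemma periodic_segAvg (hf : Function.Periodic f 1) (x y : ℝ) :
    Function.Periodic (fun u => segAvg f u x y) 1 := fun u => by
  simp only [segAvg, add_right_comm u 1, hf _]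

lemma periodic_of_hasDerivAt (h : Function.Periodic γ 1) (hf : ∀ u, HasDerivAt γ (f u) u) :
    Function.Periodic f 1 := fun u => by
  have hshift := (hf (u + 1)).comp_add_const u 1
  rw [show (fun x => γ (x + 1)) = γ from funext h] at hshift
  exact hshift.unique (hf u)

variable [CompleteSpace E]

lemma sub_eq_smul_segAvg (hf : Continuous f) (hderiv : ∀ u, HasDerivAt γ (f u) u) (u x y : ℝ) :
    γ (u + y) - γ (u + x) = (y - x) • segAvg f u x y := by
  rw [← intervalIntegral.integral_eq_sub_of_hasDerivAt (fun t _ => hderiv t)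
    (hf.intervalIntegrable _ _), segAvg]
  have hsubst := intervalIntegral.smul_integral_comp_add_mul (a := 0) (b := 1) f (y - x) (u + x)
  rw [mul_zero, add_zero, mul_one, add_assoc, add_sub_cancel] at hsubst
  simp only [← hsubst, add_assoc, mul_comm]

lemma sub_eq_smul_segAvg_zero (hf : Continuous f) (hderiv : ∀ u, HasDerivAt γ (f u) u)
    (u y : ℝ) : γ (u + y) - γ u = y • segAvg f u 0 y := by
  simpa using sub_eq_smul_segAvg hf hderiv u 0 y

end Primitive

section ChordArc

variable {n : ℕ} {γ f : ℝ → EuclideanSpace ℝ (Fin n)}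

lemma InjCircle.segAvg_ne_zero (hinj : InjCircle γ) (hf : Continuous f)
    (hderiv : ∀ u, HasDerivAt γ (f u) u) (hf0 : ∀ u, f u ≠ 0) {u y : ℝ} (hy : |y| < 1) :
    segAvg f u 0 y ≠ 0 := by
  intro h0
  have hclose : γ u = γ (u + y) := by
    rw [eq_comm, ← sub_eq_zero, sub_eq_smul_segAvg_zero hf hderiv, h0, smul_zero]
  obtain ⟨k, hk⟩ := hinj _ _ hclose
  obtain rfl : y = k := add_left_cancel hk
  obtain rfl : k = 0 := Int.abs_lt_one_iff.1 (by exact_mod_cast hy)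
  rw [Int.cast_zero, segAvg_self] at h0
  exact hf0 _ h0

lemma InjCircle.exists_chordArcGe (hinj : InjCircle γ) (hper : Function.Periodic γ 1)
    (hf : Continuous f) (hderiv : ∀ u, HasDerivAt γ (f u) u) (hf0 : ∀ u, f u ≠ 0) :
    ∃ m, 0 < m ∧ ChordArcGe m f := by
  have hcont : Continuous fun q : ℝ × ℝ => ‖segAvg f q.1 0 q.2‖ :=
    ((continuous_segAvg hf).comp (f := fun q : ℝ × ℝ => (q.1, 0, q.2)) (by fun_prop)).norm
  obtain ⟨m, hm, hle⟩ := ((isCompact_Icc (a := (0 : ℝ)) (b := 1)).prod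
    (isCompact_Icc (a := (-(2 / 3) : ℝ)) (b := 2 / 3))).exists_forall_le' hcont.continuousOn
    fun q hq => norm_pos_iff.2 (hinj.segAvg_ne_zero hf hderiv hf0
      ((abs_le.2 hq.2).trans_lt (by norm_num)))
  refine ⟨m, hm, fun u x y hxy => ?_⟩
  obtain ⟨v, hv, hshift⟩ := (periodic_segAvg (periodic_of_hasDerivAt hper hderiv) 0
    (y - x)).exists_mem_Ico₀ one_pos (u + x)
  rw [segAvg_eq_shift, hshift]
  exact hle (v, y - x) ⟨Ico_subset_Icc_self hv, abs_le.1 hxy⟩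

end ChordArc

end

section

/-! ### The energy as an integral over base points and offsets -/

section Symmetrization

variable {J : ℝ × ℝ → ℝ≥0∞}

lemma lintegral_add_left_of_periodic {φ : ℝ → ℝ≥0∞} (hφ : Function.Periodic φ 1) (a : ℝ) :
    ∫⁻ x in Ico (0 : ℝ) 1, φ (a + x) = ∫⁻ x in Ico (0 : ℝ) 1, φ x := by
  have hshift := (measurePreserving_add_left volume a).setLIntegral_comp_preimage_emb
    (measurableEmbedding_addLeft a) φ (Ico a (a + 1))
  have hperiod := (isAddFundamentalDomain_Ioc (one_pos (α := ℝ)) a).setLIntegral_eq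
    (isAddFundamentalDomain_Ioc (one_pos (α := ℝ)) 0) φ (fun g x => by
      obtain ⟨k, hk⟩ := AddSubgroup.mem_zmultiples_iff.1 g.2
      rw [AddSubgroup.vadd_def, vadd_eq_add, ← hk, add_comm]
      exact hφ.zsmul k x)
  simp only [preimage_const_add_Ico, sub_self, add_sub_cancel_left] at hshift
  rw [hshift, restrict_Ico_eq_restrict_Ioc, hperiod, zero_add, restrict_Ico_eq_restrict_Ioc]

/-- The ordered pairs `0 < x < y < 1`. -/
def orderedTriangle : Set (ℝ × ℝ) := {q | 0 < q.1 ∧ q.1 < q.2 ∧ q.2 < 1}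

lemma measurableSet_orderedTriangle : MeasurableSet orderedTriangle :=
  (measurableSet_lt measurable_const measurable_fst).inter
    ((measurableSet_lt measurable_fst measurable_snd).inter
      (measurableSet_lt measurable_snd measurable_const))

lemma lintegral_comp_neg_sub (hJ : Measurable J) :
    ∫⁻ q : ℝ × ℝ, J (-q.1, q.2 - q.1) = ∫⁻ q, J q := by
  rw [Measure.volume_eq_prod, lintegral_prod _ (by fun_prop), lintegral_prod _ (by fun_prop),
    ← lintegral_neg_eq_self (μ := volume) fun x => ∫⁻ y, J (x, y)]
  exact lintegral_congr fun x => lintegral_sub_right_eq_self (fun y => J (-x, y)) x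

lemma lintegral_comp_sub_one_swap (hJ : Measurable J) :
    ∫⁻ q : ℝ × ℝ, J (q.2 - 1, q.1) = ∫⁻ q, J q := by
  rw [Measure.volume_eq_prod, lintegral_prod _ (by fun_prop), lintegral_prod_symm _ (by fun_prop)]
  exact lintegral_congr fun x => lintegral_sub_right_eq_self (fun y => J (y, x)) 1

lemma lintegral_comp_sub_one_sub (hJ : Measurable J) :
    ∫⁻ q : ℝ × ℝ, J (q.1 - q.2, 1 - q.2) = ∫⁻ q, J q := by
  rw [Measure.volume_eq_prod, lintegral_prod_symm _ (by fun_prop),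
    lintegral_prod_symm _ (by fun_prop),
    ← lintegral_sub_left_eq_self (μ := volume) (fun y => ∫⁻ x, J (x, y)) 1]
  exact lintegral_congr fun y => lintegral_sub_right_eq_self (fun x => J (x, 1 - y)) y

lemma ae_linear_ne {a b : ℝ} (h : a ≠ 0 ∨ b ≠ 0) (c : ℝ) :
    ∀ᵐ q : ℝ × ℝ, a * q.1 + b * q.2 ≠ c := by
  have hsurj : Function.Surjective (a • LinearMap.fst ℝ ℝ ℝ + b • LinearMap.snd ℝ ℝ ℝ) :=
    LinearMap.surjective fun h0 => h.elim
      (fun ha => ha (by simpa using LinearMap.congr_fun h0 (1, 0)))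
      (fun hb => hb (by simpa using LinearMap.congr_fun h0 (0, 1)))
  exact (ae_comp_linearMap_mem_iff _ volume volume hsurj (measurableSet_singleton c).compl).2
    (compl_mem_ae_iff.2 Real.volume_singleton)

/-- Three points of the circle cut it into arcs, and `domainD` describes the offsets of the two
other points as seen from the point opposite to the longest arc. -/
lemma indicator_orderedTriangle_ae_eq (J : ℝ × ℝ → ℝ≥0∞) :
    orderedTriangle.indicator J =ᵐ[volume] fun q =>
      {q | (q.2 - 1, q.1) ∈ domainD}.indicator J q
        + ({q | (-q.1, q.2 - q.1) ∈ domainD}.indicator J q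
          + {q | (q.1 - q.2, 1 - q.2) ∈ domainD}.indicator J q) := by
  filter_upwards [ae_linear_ne (a := 2) (b := -1) (by norm_num) 0,
    ae_linear_ne (a := -1) (b := 2) (by norm_num) 1,
    ae_linear_ne (a := 1) (b := 1) (by norm_num) 1] with ⟨x, y⟩ h1 h2 h3
  have hcover : (x, y) ∈ orderedTriangle ↔ (y - 1, x) ∈ domainD ∨ (-x, y - x) ∈ domainD ∨
      (x - y, 1 - y) ∈ domainD := by
    simp only [orderedTriangle, domainD, mem_ofPred_eq, mem_Ioo] at h1 h2 h3 ⊢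
    grind
  have hdisj : ((y - 1, x) ∈ domainD → (-x, y - x) ∉ domainD) ∧
      ((y - 1, x) ∈ domainD → (x - y, 1 - y) ∉ domainD) ∧
      ((-x, y - x) ∈ domainD → (x - y, 1 - y) ∉ domainD) := by
    simp only [domainD, mem_ofPred_eq, mem_Ioo] at h1 h2 h3 ⊢
    grind
  simp only [indicator, mem_ofPred_eq, hcover]
  by_cases hA : (y - 1, x) ∈ domainD <;> by_cases hB : (-x, y - x) ∈ domainD <;>
    by_cases hC : (x - y, 1 - y) ∈ domainD <;> simp_all

lemma setLIntegral_orderedTriangle (hJ : Measurable J) (hsymm : ∀ x y, J (x, y) = J (y, x))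
    (hper : ∀ x y, J (x + 1, y) = J (x, y)) (hshift : ∀ x y, J (x, y) = J (-x, y - x)) :
    ∫⁻ q in orderedTriangle, J q = 3 * ∫⁻ q in domainD, J q := by
  have hK : Measurable (domainD.indicator J) := hJ.indicator measurableSet_domainD
  have hA : ∀ q : ℝ × ℝ, J q = J (q.2 - 1, q.1) := fun q => by
    rw [← hper (q.2 - 1), sub_add_cancel, hsymm]
  have hC : ∀ q : ℝ × ℝ, J q = J (q.1 - q.2, 1 - q.2) := fun q => by
    rw [hsymm (q.1 - q.2), show 1 - q.2 = -q.2 + 1 by ring, hper, ← hshift, hsymm]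
  have hsplit : orderedTriangle.indicator J =ᵐ[volume] fun q => domainD.indicator J (q.2 - 1, q.1)
      + (domainD.indicator J (-q.1, q.2 - q.1) + domainD.indicator J (q.1 - q.2, 1 - q.2)) := by
    filter_upwards [indicator_orderedTriangle_ae_eq J] with q hq
    rw [hq]
    simp only [indicator, ← hA q, ← hC q, ← hshift q.1 q.2]
    rfl
  rw [← lintegral_indicator measurableSet_orderedTriangle, lintegral_congr_ae hsplit,
    lintegral_add_left (by fun_prop), lintegral_add_left (by fun_prop), lintegral_comp_neg_sub hK,
    lintegral_comp_sub_one_swap hK, lintegral_comp_sub_one_sub hK,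
    lintegral_indicator measurableSet_domainD]
  ring

lemma indicator_square_ae_eq (hsymm : ∀ x y, J (x, y) = J (y, x)) :
    (Ico (0 : ℝ) 1 ×ˢ Ico (0 : ℝ) 1).indicator J =ᵐ[volume] fun q =>
      orderedTriangle.indicator J q + orderedTriangle.indicator J q.swap := by
  filter_upwards [ae_linear_ne (a := 1) (b := -1) (by norm_num) 0,
    ae_linear_ne (a := 1) (b := 0) (by norm_num) 0,
    ae_linear_ne (a := 0) (b := 1) (by norm_num) 0] with ⟨x, y⟩ h1 h2 h3
  have hcover : (x, y) ∈ Ico (0 : ℝ) 1 ×ˢ Ico (0 : ℝ) 1 ↔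
      (x, y) ∈ orderedTriangle ∨ (y, x) ∈ orderedTriangle := by
    simp only [orderedTriangle, mem_ofPred_eq, mem_prod, mem_Ico] at h1 h2 h3 ⊢
    grind
  have hdisj : (x, y) ∈ orderedTriangle → (y, x) ∉ orderedTriangle := fun hxy hyx =>
    lt_asymm hxy.2.1 hyx.2.1
  simp only [indicator, Prod.swap_prod_mk, hsymm y x, hcover]
  by_cases hxy : (x, y) ∈ orderedTriangle <;> by_cases hyx : (y, x) ∈ orderedTriangle <;> simp_all

lemma setLIntegral_square (hJ : Measurable J) (hsymm : ∀ x y, J (x, y) = J (y, x))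
    (hper : ∀ x y, J (x + 1, y) = J (x, y)) (hshift : ∀ x y, J (x, y) = J (-x, y - x)) :
    ∫⁻ q in Ico (0 : ℝ) 1 ×ˢ Ico (0 : ℝ) 1, J q = 6 * ∫⁻ q in domainD, J q := by
  rw [← lintegral_indicator (measurableSet_Ico.prod measurableSet_Ico),
    lintegral_congr_ae (indicator_square_ae_eq hsymm),
    lintegral_add_left (hJ.indicator measurableSet_orderedTriangle), Measure.volume_eq_prod,
    lintegral_prod_swap, ← Measure.volume_eq_prod,
    lintegral_indicator measurableSet_orderedTriangle,
    setLIntegral_orderedTriangle hJ hsymm hper hshift]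
  ring

end Symmetrization

section TripleIntegral

lemma lintegral_lintegral_Ico_eq_setLIntegral_square {ψ : ℝ → ℝ → ℝ≥0∞}
    (hψ : Measurable fun q : ℝ × ℝ => ψ q.1 q.2) (hper₁ : ∀ a b, ψ (a + 1) b = ψ a b)
    (hper₂ : ∀ a b, ψ a (b + 1) = ψ a b) (u : ℝ) :
    ∫⁻ a in Ico (0 : ℝ) 1, ∫⁻ b in Ico (0 : ℝ) 1, ψ a b =
      ∫⁻ q in Ico (0 : ℝ) 1 ×ˢ Ico (0 : ℝ) 1, ψ (u + q.1) (u + q.2) := by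
  have hshift : Measurable fun q : ℝ × ℝ => ψ (u + q.1) (u + q.2) :=
    hψ.comp (f := fun q : ℝ × ℝ => (u + q.1, u + q.2)) (by fun_prop)
  rw [Measure.volume_eq_prod, ← Measure.prod_restrict, lintegral_prod _ hshift.aemeasurable,
    ← lintegral_add_left_of_periodic (fun a => lintegral_congr fun b => hper₁ a b) u]
  exact lintegral_congr fun a => (lintegral_add_left_of_periodic (hper₂ (u + a)) u).symm

variable {Φ : ℝ → ℝ → ℝ → ℝ≥0∞}

lemma lintegral_symm_periodic_eq (hΦ : Measurable fun z : ℝ × ℝ × ℝ => Φ z.1 z.2.1 z.2.2)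
    (h12 : ∀ a b c, Φ a b c = Φ b a c) (h23 : ∀ a b c, Φ a b c = Φ a c b)
    (hper : ∀ a b c, Φ (a + 1) b c = Φ a b c) :
    ∫⁻ a in Ico (0 : ℝ) 1, ∫⁻ b in Ico (0 : ℝ) 1, ∫⁻ c in Ico (0 : ℝ) 1, Φ a b c =
      6 * ∫⁻ z, Φ z.1 (z.1 + z.2.1) (z.1 + z.2.2) ∂baseOffsetMeasure := by
  have hper₂ : ∀ a b c, Φ a (b + 1) c = Φ a b c := fun a b c => by rw [h12, hper, h12]
  have hper₃ : ∀ a b c, Φ a b (c + 1) = Φ a b c := fun a b c => by rw [h23, hper₂, h23]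
  have hm : Measurable fun z : ℝ × ℝ × ℝ => Φ z.1 (z.1 + z.2.1) (z.1 + z.2.2) :=
    hΦ.comp (f := fun z : ℝ × ℝ × ℝ => (z.1, z.1 + z.2.1, z.1 + z.2.2)) (by fun_prop)
  set J : ℝ × ℝ → ℝ≥0∞ := fun q => ∫⁻ u in Ico (0 : ℝ) 1, Φ u (u + q.1) (u + q.2)
  have hJ : Measurable J := hm.lintegral_prod_left'
  have hJsymm : ∀ x y, J (x, y) = J (y, x) := fun x y => lintegral_congr fun u => h23 _ _ _
  have hJper : ∀ x y, J (x + 1, y) = J (x, y) := fun x y => lintegral_congr fun u => by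
    rw [← add_assoc, hper₂]
  have hJshift : ∀ x y, J (x, y) = J (-x, y - x) := fun x y => by
    have hdiag : Function.Periodic (fun u => Φ u (u + x) (u + y)) 1 := fun u => by
      simp only [add_right_comm u 1, hper, hper₂, hper₃]
    refine (lintegral_add_left_of_periodic hdiag (-x)).symm.trans (lintegral_congr fun u => ?_)
    rw [h12, neg_add_cancel_comm, neg_add_eq_sub, ← sub_eq_add_neg, add_sub_assoc',
      sub_add_eq_add_sub]
  simp only [fun u => lintegral_lintegral_Ico_eq_setLIntegral_square
    (hΦ.comp measurable_prodMk_left) (hper₂ u) (hper₃ u) u]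
  rw [lintegral_lintegral_swap hm.aemeasurable, setLIntegral_square hJ hJsymm hJper hJshift,
    baseOffsetMeasure, lintegral_prod_symm _ hm.aemeasurable]

end TripleIntegral

section Menger

variable {n : ℕ}

lemma wedgeNorm_eq_sqrt (a b : EuclideanSpace ℝ (Fin n)) : wedgeNorm a b = √(wedgeSq a b) := rfl

lemma wedgeNorm_rpow_two (a b : EuclideanSpace ℝ (Fin n)) :
    wedgeNorm a b ^ (2 : ℝ) = wedgeSq a b := by
  rw [wedgeNorm_eq_sqrt, Real.rpow_two, Real.sq_sqrt (wedgeSq_nonneg a b)]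

lemma wedgeSq_smul_smul (a b : EuclideanSpace ℝ (Fin n)) (s t : ℝ) :
    wedgeSq (s • a) (t • b) = |s| ^ 2 * |t| ^ 2 * wedgeSq a b := by
  simp only [wedgeSq, norm_smul, real_inner_smul_left, real_inner_smul_right, Real.norm_eq_abs,
    mul_pow, sq_abs]
  ring

lemma wedgeSq_comm (a b : EuclideanSpace ℝ (Fin n)) : wedgeSq a b = wedgeSq b a := by
  rw [wedgeSq, wedgeSq, real_inner_comm, mul_comm (‖a‖ ^ 2)]

lemma wedgeSq_neg_left (a b : EuclideanSpace ℝ (Fin n)) : wedgeSq (-a) b = wedgeSq a b := by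
  rw [wedgeSq, wedgeSq, norm_neg, inner_neg_left, neg_sq]

lemma invR_swap_left (p q : ℝ) (x y z : EuclideanSpace ℝ (Fin n)) :
    invR p q x y z = invR p q y x z := by
  have hwedge : wedgeSq (y - x) (z - x) = wedgeSq (x - y) (z - y) := by
    rw [wedgeSq_comm, ← wedgeSq_sub_left, sub_sub_sub_cancel_right, wedgeSq_comm,
      ← neg_sub x y, wedgeSq_neg_left]
  rw [invR, invR, wedgeNorm_eq_sqrt, wedgeNorm_eq_sqrt, hwedge, norm_sub_rev y x,
    norm_sub_rev y z, norm_sub_rev x z]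
  ring_nf

lemma invR_swap_right (p q : ℝ) (x y z : EuclideanSpace ℝ (Fin n)) :
    invR p q x y z = invR p q x z y := by
  rw [invR, invR, wedgeNorm_eq_sqrt, wedgeNorm_eq_sqrt, wedgeSq_comm, norm_sub_rev z y,
    mul_right_comm]

lemma measurable_invR (p q : ℝ) :
    Measurable fun z : EuclideanSpace ℝ (Fin n) × EuclideanSpace ℝ (Fin n) ×
      EuclideanSpace ℝ (Fin n) => invR p q z.1 z.2.1 z.2.2 := by
  unfold invR wedgeNorm
  fun_prop

lemma density_nonneg (p : ℝ) (f : ℝ → EuclideanSpace ℝ (Fin n)) (u v w : ℝ) :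
    0 ≤ density p f u v w :=
  mul_nonneg (mul_nonneg (by positivity) (chordFactor_nonneg _ _ _ _ _)) (wedgeSq_nonneg _ _)

lemma norm_sq_rpow_neg_half (a : EuclideanSpace ℝ (Fin n)) (p : ℝ) :
    (‖a‖ ^ 2) ^ (-(p / 2)) = (‖a‖ ^ p)⁻¹ := by
  rw [← Real.rpow_natCast_mul (norm_nonneg _), ← Real.rpow_neg (norm_nonneg _)]
  congr 1
  push_cast
  ring

lemma menger_congr {γ γ' f : ℝ → EuclideanSpace ℝ (Fin n)} (p q : ℝ) (h : γ' =ᵐ[volume] f) :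
    menger p q γ γ' = menger p q γ f := by
  have hres : γ' =ᵐ[volume.restrict (Ico (0 : ℝ) 1)] f := ae_restrict_of_ae h
  refine lintegral_congr_ae (hres.mono fun a ha => ?_)
  refine lintegral_congr_ae (hres.mono fun b hb => ?_)
  refine lintegral_congr_ae (hres.mono fun c hc => ?_)
  simp only [ha, hb, hc]

variable {γ f : ℝ → EuclideanSpace ℝ (Fin n)}

lemma speed_mul_invR_eq (hf : Continuous f) (hderiv : ∀ u, HasDerivAt γ (f u) u) (p u : ℝ)
    {v w : ℝ} (hv : v ≠ 0) (hw : w ≠ 0) :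
    ‖f u‖ * ‖f (u + v)‖ * ‖f (u + w)‖ * invR p 2 (γ u) (γ (u + v)) (γ (u + w)) =
      mengerKernel p (v, w) * density p f u v w := by
  have hv0 : 0 < |v| := abs_pos.2 hv
  have hw0 : 0 < |w| := abs_pos.2 hw
  have hvw : ‖γ (u + v) - γ (u + w)‖ = |v - w| * ‖segAvg f u v w‖ := by
    rw [norm_sub_rev, sub_eq_smul_segAvg hf hderiv u v w, norm_smul, Real.norm_eq_abs,
      abs_sub_comm]
  rw [invR, wedgeNorm_rpow_two, hvw, sub_eq_smul_segAvg_zero hf hderiv,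
    sub_eq_smul_segAvg_zero hf hderiv, wedgeSq_smul_smul, wedgeSq_comm, norm_smul, norm_smul]
  simp only [Real.norm_eq_abs, mengerKernel, density, chordFactor, norm_sq_rpow_neg_half]
  rw [Real.rpow_sub hv0, Real.rpow_sub hw0, Real.rpow_two, Real.rpow_two,
    Real.mul_rpow (by positivity) (by positivity), Real.mul_rpow (by positivity) (by positivity),
    Real.mul_rpow (by positivity) (by positivity), Real.mul_rpow (by positivity) (by positivity),
    Real.mul_rpow (by positivity) (by positivity)]
  simp only [mul_inv, div_eq_mul_inv, inv_inv]
  ring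

lemma menger_eq_lintegral_density (hper : Function.Periodic γ 1) (hf : Continuous f)
    (hderiv : ∀ u, HasDerivAt γ (f u) u) (p : ℝ) :
    menger p 2 γ f =
      6 * ∫⁻ z, ENNReal.ofReal (mengerKernel p z.2 * density p f z.1 z.2.1 z.2.2)
        ∂baseOffsetMeasure := by
  have hγ : Continuous γ := continuous_iff_continuousAt.2 fun u => (hderiv u).continuousAt
  have hfper := periodic_of_hasDerivAt hper hderiv
  have hinvR : Measurable fun z : ℝ × ℝ × ℝ => invR p 2 (γ z.1) (γ z.2.1) (γ z.2.2) :=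
    (measurable_invR p 2).comp (f := fun z : ℝ × ℝ × ℝ => (γ z.1, γ z.2.1, γ z.2.2))
      (Continuous.measurable (by fun_prop))
  have hfm := hf.measurable
  rw [menger, lintegral_symm_periodic_eq (Φ := fun a b c =>
    ENNReal.ofReal (‖f a‖ * ‖f b‖ * ‖f c‖ * invR p 2 (γ a) (γ b) (γ c))) (by fun_prop)
    (fun a b c => by rw [invR_swap_left, mul_comm ‖f a‖])
    (fun a b c => by rw [invR_swap_right, mul_right_comm ‖f a‖])
    (fun a b c => by rw [hper, hfper])]
  congr 1
  refine lintegral_congr_ae ?_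
  filter_upwards [ae_baseOffsetMeasure_mem_domainD] with z hz
  rw [speed_mul_invR_eq hf hderiv p z.1 hz.1.2.ne hz.2.1.1.ne']

lemma toReal_menger (hper : Function.Periodic γ 1) (hf : Continuous f)
    (hderiv : ∀ u, HasDerivAt γ (f u) u) (p : ℝ) :
    (menger p 2 γ f).toReal =
      6 * ∫ z, mengerKernel p z.2 * density p f z.1 z.2.1 z.2.2 ∂baseOffsetMeasure := by
  have hk := measurable_mengerKernel p
  have hd := measurable_density p hf
  rw [menger_eq_lintegral_density hper hf hderiv, ENNReal.toReal_mul, ENNReal.toReal_ofNat,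
    integral_eq_lintegral_of_nonneg_ae (.of_forall fun z =>
      mul_nonneg (mengerKernel_nonneg _ _) (density_nonneg _ _ _ _ _))
      (Measurable.aestronglyMeasurable (by fun_prop))]

lemma Qform_eq_integral {h g : ℝ → EuclideanSpace ℝ (Fin n)} (hf : Continuous f)
    (hg : Continuous g) (hderiv : ∀ u, HasDerivAt γ (f u) u) (hh : ∀ u, HasDerivAt h (g u) u)
    {p : ℝ} (hi : Integrable (fun z : ℝ × ℝ × ℝ => mengerKernel p z.2 *
      inner ℝ (segAvgDiff f z.1 z.2.1 z.2.2) (segAvgDiff g z.1 z.2.1 z.2.2)) baseOffsetMeasure) :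
    Qform p γ h = ∫ z, mengerKernel p z.2 *
      inner ℝ (segAvgDiff f z.1 z.2.1 z.2.2) (segAvgDiff g z.1 z.2.1 z.2.2) ∂baseOffsetMeasure := by
  rw [Qform, baseOffsetMeasure, integral_prod _ hi]
  refine integral_congr_ae (.of_forall fun u => ?_)
  refine setIntegral_congr_fun measurableSet_domainD fun x hx => ?_
  simp only [sub_eq_smul_segAvg_zero hf hderiv, sub_eq_smul_segAvg_zero hg hh,
    inv_smul_smul₀ hx.1.2.ne, inv_smul_smul₀ hx.2.1.1.ne', segAvgDiff, mengerKernel, div_eq_inv_mul]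

end Menger

end

section

/-! ### The first variation in the direction of a curve with integrable derivative -/

section FirstVariation

variable {n : ℕ} {γ γ' f h h' g : ℝ → EuclideanSpace ℝ (Fin n)} {p s t m : ℝ} {G H : ℤ → ℝ}

namespace CurvePair

lemma intervalIntegrable_of_norm_eq_one (hγ : CurvePair γ γ') (harc : ∀ᵐ u : ℝ, ‖γ' u‖ = 1) :
    IntervalIntegrable γ' volume 0 1 := by
  rw [intervalIntegrable_iff_integrableOn_Icc_of_le zero_le_one]
  exact Integrable.of_bound hγ.meas'.aestronglyMeasurable 1
    (ae_restrict_of_ae (harc.mono fun u hu => hu.le))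

lemma exists_hasDerivAt (hγ : CurvePair γ γ') (hi : IntervalIntegrable γ' volume 0 1)
    (hs : Summable (derivCoeff γ)) :
    ∃ f, HasCoeffBound (derivCoeff γ) f ∧ (∀ u, HasDerivAt γ (f u) u) ∧ γ' =ᵐ[volume] f := by
  obtain ⟨f, hf, hderiv⟩ := exists_hasCoeffBound_hasDerivAt (hγ.continuous hi) hγ.periodic hs
  exact ⟨f, hf, hderiv, hγ.ae_eq_of_hasDerivAt hi hderiv⟩

lemma exists_regularTangent (hγ : CurvePair γ γ') (harc : ∀ᵐ u : ℝ, ‖γ' u‖ = 1)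
    (hinj : InjCircle γ) (hs : 1 / 2 < s) (hreg : SobolevSeq s (derivCoeff γ)) :
    ∃ m f, RegularTangent s m (derivCoeff γ) f ∧ (∀ u, HasDerivAt γ (f u) u) ∧
      γ' =ᵐ[volume] f := by
  have hsum := hreg.summable hs
  obtain ⟨f, hf, hderiv, hae⟩ :=
    hγ.exists_hasDerivAt (hγ.intervalIntegrable_of_norm_eq_one harc) hsum
  have hfc := hf.continuous hsum
  have hone : ∀ u, ‖f u‖ = 1 := by
    refine congrFun ((Continuous.ae_eq_iff_eq volume hfc.norm continuous_const).1 ?_)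
    filter_upwards [harc, hae] with u hu hu'
    rw [← hu', hu]
  obtain ⟨m, hm, hchord⟩ := hinj.exists_chordArcGe hγ.periodic hfc hderiv fun u =>
    norm_ne_zero_iff.1 ((hone u).trans_ne one_ne_zero)
  exact ⟨m, f, ⟨hreg, hf, hone, hm, hchord⟩, hderiv, hae⟩

end CurvePair

lemma toReal_menger_add_smul (hγ : Function.Periodic γ 1) (hh : Function.Periodic h 1)
    (hf : Continuous f) (hg : Continuous g) (hγf : ∀ u, HasDerivAt γ (f u) u)
    (hhg : ∀ u, HasDerivAt h (g u) u) (p τ : ℝ) :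
    (menger p 2 (fun u => γ u + τ • h u) (fun u => f u + τ • g u)).toReal =
      6 * ∫ z, mengerKernel p z.2 * density p (fun t => f t + τ • g t) z.1 z.2.1 z.2.2
        ∂baseOffsetMeasure := by
  have hper : Function.Periodic (fun u => γ u + τ • h u) 1 := fun u => by simp only [hγ u, hh u]
  exact toReal_menger hper (by fun_prop) (fun u => (hγf u).add ((hhg u).const_smul τ)) p

lemma RegularTangent.hasDerivAt_toReal_menger (hp : p ∈ Ioo (7 / 3 : ℝ) (8 / 3))
    (hf : RegularTangent (3 * p / 2 - 3) m G f) (hH : SobolevSeq (3 * p / 2 - 3) H)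
    (hg : HasCoeffBound H g) (hγ : Function.Periodic γ 1) (hh : Function.Periodic h 1)
    (hγf : ∀ u, HasDerivAt γ (f u) u) (hhg : ∀ u, HasDerivAt h (g u) u) :
    HasDerivAt
      (fun τ : ℝ => (menger p 2 (fun u => γ u + τ • h u) (fun u => f u + τ • g u)).toReal)
      (6 * ∫ z, mengerKernel p z.2 * densityDeriv p f g z.1 z.2.1 z.2.2 ∂baseOffsetMeasure)
      0 := by
  have hs : 1 / 2 < 3 * p / 2 - 3 := by linarith [hp.1]
  simp only [toReal_menger_add_smul hγ hh (hf.coeff.continuous (hf.sobolev.summable hs))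
    (hg.continuous (hH.summable hs)) hγf hhg]
  exact (hf.hasDerivAt_integral_density hp hH hg).2.const_mul 6

lemma eq_of_tendsto_menger_div {L D : ℝ} (hγf : γ' =ᵐ[volume] f) (hhg : h' =ᵐ[volume] g)
    (hD : HasDerivAt
      (fun τ : ℝ => (menger p 2 (fun u => γ u + τ • h u) (fun u => f u + τ • g u)).toReal) D 0)
    (hL : Tendsto (fun τ : ℝ =>
      ((menger p 2 (fun u => γ u + τ • h u) (fun u => γ' u + τ • h' u)).toReal
        - (menger p 2 γ γ').toReal) / τ) (𝓝[≠] 0) (𝓝 L)) : L = D := by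
  have hline : ∀ τ : ℝ, (fun u => γ' u + τ • h' u) =ᵐ[volume] fun u => f u + τ • g u := fun τ =>
    hγf.add (hhg.const_smul τ)
  refine tendsto_nhds_unique hL (hD.tendsto_slope_zero.congr fun τ => ?_)
  rw [menger_congr p 2 hγf, menger_congr p 2 (hline τ), smul_eq_mul, div_eq_inv_mul]
  simp only [zero_add, zero_smul, add_zero]

theorem RegularTangent.exists_remainder_le_fourierSobNorm {σ ε : ℝ}
    (hp : p ∈ Ioo (7 / 3 : ℝ) (8 / 3)) (hσ : 0 ≤ σ) (hε : 0 < ε)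
    (hf : RegularTangent (σ + (3 * p / 2 - 3)) m G f) (hγf : ∀ u, HasDerivAt γ (f u) u) :
    ∃ C, 0 ≤ C ∧ ∀ h g : ℝ → EuclideanSpace ℝ (Fin n), MemFourierSob (3 * p / 2 - 2) h →
      MemFourierSob (3 / 2 - σ + ε) h → HasCoeffBound (derivCoeff h) g →
      (∀ u, HasDerivAt h (g u) u) →
      |1 / 2 * ∫ z, mengerKernel p z.2 * densityDeriv p f g z.1 z.2.1 z.2.2 ∂baseOffsetMeasure
        - Qform p γ h| ≤ C * fourierSobNorm (3 / 2 - σ + ε) h := by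
  have hs : 1 / 2 < 3 * p / 2 - 3 := by linarith [hp.1]
  have hf0 : RegularTangent (3 * p / 2 - 3) m G f := hf.mono (by linarith)
  obtain ⟨C, hC, hrem⟩ := hf.exists_remainder_le hp hσ
  obtain ⟨B, hB, hdual⟩ := exists_tsum_derivCoeff_mul_weight_le n
    (show -σ + 3 / 2 < 3 / 2 - σ + ε by linarith)
  refine ⟨C * B, mul_nonneg hC hB, fun h g hh hhn hg hhg => ?_⟩
  have hH : SobolevSeq (3 * p / 2 - 3) (derivCoeff h) := hh.sobolevSeq_derivCoeff (by linarith)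
  rw [Qform_eq_integral (hf.coeff.continuous (hf0.sobolev.summable hs))
    (hg.continuous (hH.summable hs)) hγf hhg
    (integrable_mengerKernel_mul_inner_segAvgDiff hp hf0.sobolev hf.coeff hH hg), mul_assoc]
  exact (hrem _ g hH hg).trans (mul_le_mul_of_nonneg_left (hdual h hhn) hC)

end FirstVariation

/-! ### Directions whose derivative is not integrable -/

section NonCollinear

variable {E : Type*} [NormedAddCommGroup E] [InnerProductSpace ℝ E]

lemma exists_inner_add_half_sub_eq_zero {γ : ℝ → E} (hc : Continuous γ)
    (hper : Function.Periodic γ 1) (e : E) : ∃ u, inner ℝ (γ (u + 1 / 2) - γ u) e = 0 := by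
  set ψ : ℝ → ℝ := fun u => inner ℝ (γ (u + 1 / 2) - γ u) e
  have hψ : Continuous ψ := by fun_prop
  have hanti : ψ (0 + 1 / 2) = -ψ 0 := by
    simp only [ψ, add_assoc, add_halves, hper 0, ← inner_neg_left, neg_sub]
  rcases le_total (ψ 0) 0 with h0 | h0
  · exact mem_range_of_exists_le_of_exists_ge hψ ⟨0, h0⟩
      ⟨0 + 1 / 2, (neg_nonneg.2 h0).trans_eq hanti.symm⟩
  · exact mem_range_of_exists_le_of_exists_ge hψ ⟨0 + 1 / 2, hanti.trans_le (neg_nonpos.2 h0)⟩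
      ⟨0, h0⟩

variable {n : ℕ}

lemma norm_sq_smul_eq_of_wedgeNorm_eq_zero {a e : EuclideanSpace ℝ (Fin n)}
    (h : wedgeNorm a e = 0) : ‖e‖ ^ 2 • a = (inner ℝ a e : ℝ) • e := by
  have h0 : wedgeSq a e = 0 := le_antisymm (Real.sqrt_eq_zero'.1 h) (wedgeSq_nonneg a e)
  rw [wedgeSq] at h0
  rw [← sub_eq_zero, ← norm_eq_zero, ← sq_eq_zero_iff, norm_sub_sq_real, norm_smul, norm_smul,
    real_inner_smul_left, real_inner_smul_right]
  simp only [Real.norm_eq_abs, mul_pow, sq_abs]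
  linear_combination ‖e‖ ^ 2 * h0

lemma eq_of_wedgeNorm_eq_zero {a b e : EuclideanSpace ℝ (Fin n)} (he : e ≠ 0)
    (ha : wedgeNorm a e = 0) (hb : wedgeNorm b e = 0) (hab : inner ℝ (a - b) e = 0) : a = b := by
  rw [inner_sub_left, sub_eq_zero] at hab
  refine smul_right_injective _ (pow_ne_zero 2 (norm_ne_zero_iff.2 he)) ?_
  simp only [norm_sq_smul_eq_of_wedgeNorm_eq_zero ha, norm_sq_smul_eq_of_wedgeNorm_eq_zero hb, hab]

lemma norm_mul_pos_of_wedgeNorm_pos {x y z : EuclideanSpace ℝ (Fin n)}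
    (h : 0 < wedgeNorm (y - x) (z - x)) : 0 < ‖y - z‖ * ‖y - x‖ * ‖z - x‖ := by
  rw [wedgeNorm_eq_sqrt, Real.sqrt_pos] at h
  have hyz : y - z ≠ 0 := fun h0 => by
    rw [← wedgeSq_sub_left, sub_sub_sub_cancel_right, h0] at h
    simp [wedgeSq] at h
  have hyx : y - x ≠ 0 := fun h0 => by simp [h0, wedgeSq] at h
  have hzx : z - x ≠ 0 := fun h0 => by simp [h0, wedgeSq] at h
  positivity

variable {γ : ℝ → EuclideanSpace ℝ (Fin n)}

lemma InjCircle.add_half_ne (hinj : InjCircle γ) (u : ℝ) : γ (u + 1 / 2) ≠ γ u := fun hu => by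
  obtain ⟨k, hk⟩ := hinj _ _ hu
  have hodd : (2 * k + 1 : ℝ) = 0 := by linarith
  have : 2 * k + 1 = 0 := by exact_mod_cast hodd
  omega

lemma InjCircle.exists_wedgeNorm_pos (hinj : InjCircle γ) (hc : Continuous γ)
    (hper : Function.Periodic γ 1) (u₀ : ℝ) :
    ∃ u ∈ Ico (0 : ℝ) 1, ∃ v ∈ Ico (0 : ℝ) 1, 0 < wedgeNorm (γ u - γ u₀) (γ v - γ u₀) := by
  by_contra! hcon
  have hcollinear : ∀ u v, wedgeNorm (γ u - γ u₀) (γ v - γ u₀) = 0 := fun u v => by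
    obtain ⟨u', hu', hu⟩ := hper.exists_mem_Ico₀ one_pos u
    obtain ⟨v', hv', hv⟩ := hper.exists_mem_Ico₀ one_pos v
    rw [hu, hv]
    exact le_antisymm (hcon u' hu' v' hv') (Real.sqrt_nonneg _)
  obtain ⟨u, hu⟩ := exists_inner_add_half_sub_eq_zero hc hper (γ (u₀ + 1 / 2) - γ u₀)
  exact hinj.add_half_ne u (sub_left_injective (eq_of_wedgeNorm_eq_zero
    (sub_ne_zero.2 (hinj.add_half_ne u₀)) (hcollinear _ _) (hcollinear _ _)
    (by rwa [sub_sub_sub_cancel_right])))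

end NonCollinear

section LowerBound

lemma exists_isOpen_le_of_continuousAt {X Y Z : Type*} [TopologicalSpace X] [TopologicalSpace Y]
    [TopologicalSpace Z] {F : X × Y × Z → ℝ} {a : X} {b : Y} {c : Z}
    (hF : ContinuousAt F (a, b, c)) {δ : ℝ} (hδ : δ < F (a, b, c)) :
    ∃ A B C, (IsOpen A ∧ a ∈ A) ∧ (IsOpen B ∧ b ∈ B) ∧ (IsOpen C ∧ c ∈ C) ∧
      ∀ x ∈ A, ∀ y ∈ B, ∀ z ∈ C, δ ≤ F (x, y, z) := by
  obtain ⟨A, S, hA, haA, hS, hbcS, hAS⟩ := mem_nhds_prod_iff'.1 (hF.eventually_const_le hδ)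
  obtain ⟨B, C, hB, hbB, hC, hcC, hBC⟩ := mem_nhds_prod_iff'.1 (hS.mem_nhds hbcS)
  exact ⟨A, B, C, ⟨hA, haA⟩, ⟨hB, hbB⟩, ⟨hC, hcC⟩, fun x hx y hy z hz =>
    hAS ⟨hx, hBC ⟨hy, hz⟩⟩⟩

variable {n : ℕ} {γ F : ℝ → EuclideanSpace ℝ (Fin n)} {A B C : Set ℝ} {δ : ℝ}

lemma exists_isOpen_le_invR (p q : ℝ) (hc : Continuous γ) {a b c : ℝ}
    (h : 0 < wedgeNorm (γ b - γ a) (γ c - γ a)) :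
    ∃ δ > 0, ∃ A B C, (IsOpen A ∧ a ∈ A) ∧ (IsOpen B ∧ b ∈ B) ∧ (IsOpen C ∧ c ∈ C) ∧
      ∀ x ∈ A, ∀ y ∈ B, ∀ z ∈ C, δ ≤ invR p q (γ x) (γ y) (γ z) := by
  have hd := norm_mul_pos_of_wedgeNorm_pos h
  have hpos : 0 < invR p q (γ a) (γ b) (γ c) :=
    div_pos (Real.rpow_pos_of_pos h _) (Real.rpow_pos_of_pos hd _)
  have hwedge : Continuous fun t : ℝ × ℝ × ℝ =>
      wedgeNorm (γ t.2.1 - γ t.1) (γ t.2.2 - γ t.1) := by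
    unfold wedgeNorm
    fun_prop
  have hnorm : Continuous fun t : ℝ × ℝ × ℝ =>
      ‖γ t.2.1 - γ t.2.2‖ * ‖γ t.2.1 - γ t.1‖ * ‖γ t.2.2 - γ t.1‖ := by fun_prop
  have hcont : ContinuousAt (fun t : ℝ × ℝ × ℝ => invR p q (γ t.1) (γ t.2.1) (γ t.2.2))
      (a, b, c) := by
    have hnum := hwedge.continuousAt.rpow_const (x := (a, b, c)) (p := q) (.inl h.ne')
    have hden := hnorm.continuousAt.rpow_const (x := (a, b, c)) (p := p) (.inl hd.ne')
    exact hnum.div hden (Real.rpow_pos_of_pos hd _).ne'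
  exact ⟨_, half_pos hpos, exists_isOpen_le_of_continuousAt hcont (half_lt_self hpos)⟩

lemma mul_setLIntegral_le_menger {p q : ℝ} (hF : Measurable F) (hA : MeasurableSet A)
    (hB : MeasurableSet B) (hC : MeasurableSet C) (hA₁ : A ⊆ Ico 0 1) (hB₁ : B ⊆ Ico 0 1)
    (hC₁ : C ⊆ Ico 0 1)
    (hle : ∀ x ∈ A, ∀ y ∈ B, ∀ z ∈ C, δ ≤ invR p q (γ x) (γ y) (γ z)) :
    (∫⁻ u in A, ‖F u‖ₑ) * ((∫⁻ u in B, ‖F u‖ₑ) * ((∫⁻ u in C, ‖F u‖ₑ) * ENNReal.ofReal δ)) ≤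
      menger p q γ F := by
  have hm : Measurable fun u => ‖F u‖ₑ := by fun_prop
  rw [← lintegral_mul_const _ hm]
  refine le_trans (setLIntegral_mono' hA fun x hx => ?_) (lintegral_mono_set hA₁)
  rw [← lintegral_mul_const _ hm, ← lintegral_const_mul _ (by fun_prop)]
  refine le_trans (setLIntegral_mono' hB fun y hy => ?_) (lintegral_mono_set hB₁)
  rw [← lintegral_mul_const _ hm, ← lintegral_const_mul _ (by fun_prop),
    ← lintegral_const_mul _ (by fun_prop)]
  refine le_trans (setLIntegral_mono' hC fun z hz => ?_) (lintegral_mono_set hC₁)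
  rw [ENNReal.ofReal_mul (by positivity), ENNReal.ofReal_mul (by positivity),
    ENNReal.ofReal_mul (by positivity), ofReal_norm, ofReal_norm, ofReal_norm, mul_assoc, mul_assoc]
  gcongr
  exact hle x hx y hy z hz

end LowerBound

section InfiniteEnergy

section Pencil

variable {α E : Type*} [MeasurableSpace α] {μ : Measure α} [NormedAddCommGroup E]
  [NormedSpace ℝ E] {f g : α → E}

lemma eventually_lintegral_enorm_add_smul_ne_zero [NeZero μ] (hf : AEStronglyMeasurable f μ)
    (hg : AEStronglyMeasurable g μ) (hf0 : ∀ᵐ u ∂μ, f u ≠ 0) :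
    ∀ᶠ τ : ℝ in 𝓝[≠] 0, ∫⁻ u, ‖f u + τ • g u‖ₑ ∂μ ≠ 0 := by
  have hzero : {τ : ℝ | ∫⁻ u, ‖f u + τ • g u‖ₑ ∂μ = 0}.Subsingleton := fun τ hτ τ' hτ' => by
    rw [mem_ofPred_eq, lintegral_eq_zero_iff' (by fun_prop)] at hτ hτ'
    obtain ⟨u, hu, hu', hu0⟩ := (hτ.and (hτ'.and hf0)).exists
    simp only [Pi.zero_apply, enorm_eq_zero] at hu hu'
    have hsub : (τ - τ') • g u = 0 := by
      rw [sub_smul, sub_eq_zero]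
      exact add_left_cancel (hu.trans hu'.symm)
    refine sub_eq_zero.1 ((smul_eq_zero.1 hsub).resolve_right fun hgu => hu0 ?_)
    simpa [hgu] using hu
  exact nhdsNE_le_cofinite 0 hzero.finite.eventually_cofinite_notMem

lemma lintegral_enorm_add_smul_eq_top (hf : Integrable f μ) (hg : AEStronglyMeasurable g μ)
    (hgi : ¬ Integrable g μ) {τ : ℝ} (hτ : τ ≠ 0) : ∫⁻ u, ‖f u + τ • g u‖ₑ ∂μ = ∞ := by
  by_contra hfin
  have hsum : Integrable (fun u => f u + τ • g u) μ :=
    ⟨hf.1.add (hg.const_smul τ), lt_top_iff_ne_top.2 hfin⟩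
  refine hgi (((hsum.sub hf).smul τ⁻¹).congr (.of_forall fun u => ?_))
  simp [inv_smul_smul₀ hτ]

end Pencil

lemma exists_not_integrableOn_inter_Ico {E : Type*} [NormedAddCommGroup E] {φ : ℝ → E}
    (hi : ¬ IntervalIntegrable φ volume 0 1) :
    ∃ a, ∀ A ∈ 𝓝 a, ¬ IntegrableOn φ (A ∩ Ico 0 1) := by
  by_contra! hcon
  refine hi ((intervalIntegrable_iff_integrableOn_Icc_of_le zero_le_one).2
    (LocallyIntegrableOn.integrableOn_isCompact (fun a _ => ?_) isCompact_Icc))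
  obtain ⟨A, hA, hint⟩ := hcon a
  exact ⟨A ∩ Icc 0 1, inter_mem (mem_nhdsWithin_of_mem_nhds hA) self_mem_nhdsWithin,
    hint.congr_set_ae ((ae_eq_refl A).inter Ico_ae_eq_Icc.symm)⟩

lemma volume_restrict_inter_Ico_ne_zero {b : ℝ} (hb : b ∈ Ico (0 : ℝ) 1) {B : Set ℝ}
    (hB : B ∈ 𝓝 b) : volume.restrict (B ∩ Ico 0 1) ≠ 0 := by
  obtain ⟨c, hc, hs⟩ := mem_nhdsGE_iff_exists_Ico_subset.1
    (inter_mem (mem_nhdsWithin_of_mem_nhds hB) (Ico_mem_nhdsGE hb.2))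
  rw [Ne, Measure.restrict_eq_zero]
  refine ((by simpa using hc : 0 < volume (Ico b c)).trans_le (measure_mono ?_)).ne'
  exact fun x hx => ⟨(hs hx).1, hb.1.trans hx.1, (hs hx).2.2⟩

variable {n : ℕ} {γ γ' h h' : ℝ → EuclideanSpace ℝ (Fin n)} {p q : ℝ}

lemma CurvePair.eventually_menger_eq_top (hγ : CurvePair γ γ')
    (hγi : IntervalIntegrable γ' volume 0 1) (hγ0 : ∀ᵐ u, γ' u ≠ 0) (hinj : InjCircle γ)
    (hh : Measurable h') (hi : ¬ IntervalIntegrable h' volume 0 1) (p q : ℝ) :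
    ∀ᶠ τ : ℝ in 𝓝[≠] 0, menger p q γ (fun u => γ' u + τ • h' u) = ∞ := by
  have hγc := hγ.continuous hγi
  have hγm := hγ.meas'
  obtain ⟨a, ha⟩ := exists_not_integrableOn_inter_Ico hi
  obtain ⟨b, hb, c, hc, hwedge⟩ := hinj.exists_wedgeNorm_pos hγc hγ.periodic a
  obtain ⟨δ, hδ, A, B, C, ⟨hA, haA⟩, ⟨hB, hbB⟩, ⟨hC, hcC⟩, hle⟩ :=
    exists_isOpen_le_invR p q hγc hwedge
  have hpos : ∀ {b' : ℝ} {S : Set ℝ}, b' ∈ Ico (0 : ℝ) 1 → S ∈ 𝓝 b' →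
      ∀ᶠ τ : ℝ in 𝓝[≠] 0, ∫⁻ u in S ∩ Ico 0 1, ‖γ' u + τ • h' u‖ₑ ≠ 0 := fun hb' hS => by
    have : NeZero _ := ⟨volume_restrict_inter_Ico_ne_zero hb' hS⟩
    exact eventually_lintegral_enorm_add_smul_ne_zero hγm.aestronglyMeasurable
      hh.aestronglyMeasurable (ae_restrict_of_ae hγ0)
  filter_upwards [self_mem_nhdsWithin, hpos hb (hB.mem_nhds hbB), hpos hc (hC.mem_nhds hcC)]
    with τ hτ hBpos hCpos
  have hAtop : ∫⁻ u in A ∩ Ico 0 1, ‖γ' u + τ • h' u‖ₑ = ∞ :=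
    lintegral_enorm_add_smul_eq_top
      (((intervalIntegrable_iff_integrableOn_Ico_of_le zero_le_one).1 hγi).mono_set
        inter_subset_right) hh.aestronglyMeasurable (ha A (hA.mem_nhds haA)) hτ
  have hmenger := mul_setLIntegral_le_menger
    (F := fun u => γ' u + τ • h' u) (by fun_prop)
    (hA.measurableSet.inter measurableSet_Ico) (hB.measurableSet.inter measurableSet_Ico)
    (hC.measurableSet.inter measurableSet_Ico) inter_subset_right inter_subset_right
    inter_subset_right fun x hx y hy z hz => hle x hx.1 y hy.1 z hz.1
  simp only [hAtop] at hmenger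
  rwa [ENNReal.top_mul (mul_ne_zero hBpos (mul_ne_zero hCpos (by simpa using hδ))),
    top_le_iff] at hmenger

lemma CurvePair.eq_const_of_not_intervalIntegrable (hh : CurvePair h h')
    (hi : ¬ IntervalIntegrable h' volume 0 1) (u : ℝ) : h u = h 0 := by
  obtain ⟨k, hk⟩ := exists_nat_ge (1 - u)
  have hk' : 1 ≤ u + k := by linarith
  have hshift : h (u + k) = h u := by simpa using hh.periodic.nat_mul k u
  rw [← hshift, hh.primitive, intervalIntegral.integral_undef, add_zero]
  intro hint
  refine hi (hint.mono_set ?_)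
  rw [uIcc_of_le zero_le_one, uIcc_of_le (by linarith)]
  exact Icc_subset_Icc_right hk'

lemma Qform_eq_zero_of_const (p : ℝ) (γ : ℝ → EuclideanSpace ℝ (Fin n))
    (hh : ∀ u, h u = h 0) : Qform p γ h = 0 := by
  have hsub : ∀ a b, h a - h b = 0 := fun a b => by rw [hh a, hh b, sub_self]
  simp [Qform, hsub]

lemma menger_add_const (p q : ℝ) (γ F : ℝ → EuclideanSpace ℝ (Fin n))
    (c : EuclideanSpace ℝ (Fin n)) : menger p q (fun u => γ u + c) F = menger p q γ F := by
  simp only [menger, invR, add_sub_add_right_eq_sub]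

lemma eq_zero_of_tendsto_const_div {E L : ℝ}
    (h : Tendsto (fun τ : ℝ => E / τ) (𝓝[≠] 0) (𝓝 L)) : L = 0 := by
  have hid : Tendsto (fun τ : ℝ => τ) (𝓝[≠] 0) (𝓝 0) :=
    tendsto_nhdsWithin_of_tendsto_nhds tendsto_id
  have hmul : Tendsto (fun τ : ℝ => E / τ * τ) (𝓝[≠] 0) (𝓝 E) :=
    tendsto_const_nhds.congr' (eventually_mem_nhdsWithin.mono fun τ hτ =>
      (div_mul_cancel₀ E hτ).symm)
  have hE : E = 0 := by simpa using tendsto_nhds_unique hmul (h.mul hid)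
  simpa [hE, eq_comm] using h

/-- The perturbed curves have infinite energy, whose `toReal` is `0`. -/
lemma CurvePair.eq_zero_of_tendsto_menger_div (hγ : CurvePair γ γ')
    (hγi : IntervalIntegrable γ' volume 0 1) (hγ0 : ∀ᵐ u, γ' u ≠ 0) (hinj : InjCircle γ)
    (hh : CurvePair h h') (hi : ¬ IntervalIntegrable h' volume 0 1) {L : ℝ}
    (hL : Tendsto (fun τ : ℝ =>
      ((menger p q (fun u => γ u + τ • h u) (fun u => γ' u + τ • h' u)).toReal
        - (menger p q γ γ').toReal) / τ) (𝓝[≠] 0) (𝓝 L)) : L = 0 := by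
  refine eq_zero_of_tendsto_const_div (E := -(menger p q γ γ').toReal) (hL.congr' ?_)
  filter_upwards [hγ.eventually_menger_eq_top hγi hγ0 hinj hh.meas' hi p q] with τ hτ
  simp only [hh.eq_const_of_not_intervalIntegrable hi, menger_add_const, hτ, ENNReal.toReal_top,
    zero_sub]

end InfiniteEnergy

end

/-- **Regularity of the remainder term.** For `p ∈ (7/3,8/3)`, `σ ≥ 0`,
`ε > 0` and an injective arc-length parametrized curve
`γ ∈ W^{(3p-4)/2+σ,2}(ℝ/ℤ,ℝⁿ)`, the remainder
`R^p(γ;h) = (1/12) δE_{p,2}(γ;h) - Q^{(p)}(γ,h)` satisfies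
`|R^p(γ;h)| ≤ C ‖h‖_{W^{3/2-σ+ε,2}}` with `C` independent of `h`; i.e. it
extends to a bounded linear functional on `W^{3/2-σ+ε,2}(ℝ/ℤ,ℝⁿ)`. -/
theorem remainder_is_lower_order (n : ℕ) (p σ ε : ℝ)
    (hp : p ∈ Ioo (7/3 : ℝ) (8/3)) (hσ : 0 ≤ σ) (hε : 0 < ε)
    (γ γ' : ℝ → EuclideanSpace ℝ (Fin n))
    (hγ : CurvePair γ γ') (harc : ∀ᵐ u : ℝ, ‖γ' u‖ = 1) (hinj : InjCircle γ)
    (hreg : Summable (fun k : ℤ =>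
      (1 + (k:ℝ)^2) ^ ((3*p - 4)/2 + σ) * ‖fourierCoef γ k‖^2)) :
    ∃ C : ℝ, ∀ h h' : ℝ → EuclideanSpace ℝ (Fin n),
      CurvePair h h' →
      Summable (fun k : ℤ =>
        (1 + (k:ℝ)^2) ^ (3*p/2 - 2) * ‖fourierCoef h k‖^2) →
      Summable (fun k : ℤ =>
        (1 + (k:ℝ)^2) ^ (3/2 - σ + ε) * ‖fourierCoef h k‖^2) →
      ∀ L : ℝ,
        Tendsto (fun τ : ℝ =>
            ((menger p 2 (fun u => γ u + τ • h u) (fun u => γ' u + τ • h' u)).toReal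
              - (menger p 2 γ γ').toReal) / τ)
          (𝓝[≠] (0:ℝ)) (𝓝 L) →
        |(1/12) * L - Qform p γ h| ≤ C * fourierSobNorm (3/2 - σ + ε) h := by
  have hs : 1 / 2 < σ + (3 * p / 2 - 3) := by linarith [hp.1]
  have hs₀ : 1 / 2 < 3 * p / 2 - 3 := by linarith [hp.1]
  have hmem : MemFourierSob ((3 * p - 4) / 2 + σ) γ := hreg
  obtain ⟨m, f, hf, hγf, hae⟩ :=
    hγ.exists_regularTangent harc hinj hs (hmem.sobolevSeq_derivCoeff (by linarith))
  obtain ⟨C, hC, hbound⟩ := hf.exists_remainder_le_fourierSobNorm hp hσ hε hγf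
  refine ⟨C, fun h h' hh hsob hnorm L hL => ?_⟩
  by_cases hi : IntervalIntegrable h' volume 0 1
  · have hH : SobolevSeq (3 * p / 2 - 3) (derivCoeff h) :=
      MemFourierSob.sobolevSeq_derivCoeff hsob (by linarith)
    obtain ⟨g, hg, hhg, hae'⟩ := hh.exists_hasDerivAt hi (hH.summable hs₀)
    have hf₀ : RegularTangent (3 * p / 2 - 3) m (derivCoeff γ) f := hf.mono (by linarith)
    rw [eq_of_tendsto_menger_div hae hae' (hf₀.hasDerivAt_toReal_menger hp hH hg hγ.periodic
      hh.periodic hγf hhg) hL, ← mul_assoc, show (1 / 12 * 6 : ℝ) = 1 / 2 by norm_num]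
    exact hbound h g hsob hnorm hg hhg
  · have hγ0 : ∀ᵐ u, γ' u ≠ 0 := harc.mono fun u hu h0 => by simp [h0] at hu
    rw [hγ.eq_zero_of_tendsto_menger_div (hγ.intervalIntegrable_of_norm_eq_one harc) hγ0 hinj hh
      hi hL, Qform_eq_zero_of_const p γ (hh.eq_const_of_not_intervalIntegrable hi), mul_zero,
      sub_zero, abs_zero]
    exact mul_nonneg hC (Real.sqrt_nonneg _)
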